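/- arXiv:1210.7708 — 3 statements merged into one kernel-verified Lean document; each statement's English description precedes it below -/
import Mathlib

section
/- Let n ≥ 3, k ∈ {1,2}, and σ > σ_n = 2^{n-1}·n!. Then for every x ∈ [-1,1], m_k(x,σ) ≤ m_k(1,σ); that is, Karlin's conjecture sup_{x∈[-1,1]} m_k(x,σ) = m_k(1,σ) holds for the first and second derivatives in the spline range σ > σ_n. -/
open Polynomial Set

/-- `k`-th derivative of the Chebyshev polynomial `T_m`, evaluated at `x`. -/
noncomputable def chebDeriv (m : ℤ) (k : ℕ) (x : ℝ) : ℝ :=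
  (derivative^[k] (Polynomial.Chebyshev.T ℝ m)).eval x

/-- `σ_n = 2^(n-1) n! = T_n^{(n)}(1)`. -/
noncomputable def sigmaN (n : ℕ) : ℝ := 2 ^ (n - 1) * (n.factorial : ℝ)

/-- `f` is `n` times differentiable on the set `s`. -/
def NTimesDiffOn (n : ℕ) (f : ℝ → ℝ) (s : Set ℝ) : Prop :=
  ∀ i < n, DifferentiableOn ℝ (iteratedDerivWithin i f s) s

/-- The class `W^n_∞(σ)` on `[-1,1]`. -/
def memW (n : ℕ) (σ : ℝ) (f : ℝ → ℝ) : Prop :=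
  NTimesDiffOn n f (Icc (-1:ℝ) 1) ∧
  (∀ x ∈ Icc (-1:ℝ) 1, |f x| ≤ 1) ∧
  (∀ x ∈ Icc (-1:ℝ) 1, |iteratedDerivWithin n f (Icc (-1:ℝ) 1) x| ≤ σ)

/-- `m_k(x,σ) = sup { |f^{(k)}(x)| : f ∈ W^n_∞(σ) }`. -/
noncomputable def mval (n k : ℕ) (x σ : ℝ) : ℝ :=
  sSup {y | ∃ f : ℝ → ℝ, memW n σ f ∧
    y = |iteratedDerivWithin k f (Icc (-1:ℝ) 1) x|}

/-- `m_k^*(x,σ) = sup { |f^{(k)}(x)| : f ∈ W^n_∞(σ), f^{(k+1)}(x) = 0 }`. -/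
noncomputable def mstar (n k : ℕ) (x σ : ℝ) : ℝ :=
  sSup {y | ∃ f : ℝ → ℝ, memW n σ f ∧
    iteratedDerivWithin (k+1) f (Icc (-1:ℝ) 1) x = 0 ∧
    y = |iteratedDerivWithin k f (Icc (-1:ℝ) 1) x|}

/-- `μ_k(x₀)`: best constant in the pointwise Markov inequality. -/
noncomputable def muk (n k : ℕ) (x : ℝ) : ℝ :=
  sSup {y | ∃ p : Polynomial ℝ, p.natDegree ≤ n ∧
    (∀ t ∈ Icc (-1:ℝ) 1, |p.eval t| ≤ 1) ∧
    y = |(derivative^[k] p).eval x|}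

/-- `μ_k^*(x₀)`: best constant in the pointwise Schur-type inequality. -/
noncomputable def mukStar (n k : ℕ) (x : ℝ) : ℝ :=
  sSup {y | ∃ p : Polynomial ℝ, p.natDegree ≤ n ∧
    (∀ t ∈ Icc (-1:ℝ) 1, |p.eval t| ≤ 1) ∧
    (derivative^[k+1] p).eval x = 0 ∧
    y = |(derivative^[k] p).eval x|}

open scoped Nat

/- If `|f^{(k)}|` is maximal over `[-1, 1]` at an interior point `x₀`, then `f^{(k+1)}` vanishes
there. An affine map of `[-1, 1]` onto an interval with right end `x₀` turns this into the
extremal problem `mstar` at `1`. There, counting zeros with Rolle's theorem bounds `|f^{(k)} 1|`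
by the `k`-th derivative of an explicit Schur-type polynomial, a perturbation of `T_n`. From
below, `mval n k 1 σ` is bounded by the `k`-th derivative at `1` of `T_N` composed with affine
maps that fix `1`; estimating the limit `N → ∞` by Stirling's formula gives more than the upper
bound. When `σ` is close to `σ_n`, the upper bound is already below `T_n^{(k)} 1`, except for
`k = 2` and `x₀` near `0`, where a finite-difference formula for `f''` replaces it. For `n = 3`,
`k = 2`, where the composed `T_N` do not suffice, the extremal function is the perfect spline on
the half-line, and the upper bound comes from Taylor expansions at the extrema of `T₃`. -/

/-- The functions `F 0, F 1, …, F n` are successive derivatives of one another on `s`. Carrying the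
derivatives as data makes restriction and affine substitution immediate; on an interval `F i` is
`iteratedDerivWithin i (F 0) s`. -/
def IsDerivChain (n : ℕ) (F : ℕ → ℝ → ℝ) (s : Set ℝ) : Prop :=
  ∀ i < n, ∀ x ∈ s, HasDerivWithinAt (F i) (F (i + 1) x) s x

namespace IsDerivChain

variable {m n i : ℕ} {F G : ℕ → ℝ → ℝ} {s t : Set ℝ} {x y x₀ B : ℝ}

lemma of_le (h : IsDerivChain n F s) (hmn : m ≤ n) : IsDerivChain m F s :=
  fun i hi => h i (hi.trans_le hmn)

lemma mono (h : IsDerivChain n F s) (hts : t ⊆ s) : IsDerivChain n F t :=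
  fun i hi x hx => (h i hi x (hts hx)).mono hts

lemma neg (h : IsDerivChain n F s) : IsDerivChain n (fun i x => -F i x) s :=
  fun i hi x hx => (h i hi x hx).neg

lemma sub (hF : IsDerivChain n F s) (hG : IsDerivChain n G s) :
    IsDerivChain n (fun i x => F i x - G i x) s :=
  fun i hi x hx => (hF i hi x hx).sub (hG i hi x hx)

lemma const_mul (h : IsDerivChain n F s) (c : ℝ) : IsDerivChain n (fun i x => c * F i x) s :=
  fun i hi x hx => (h i hi x hx).const_mul c

lemma comp_affine (h : IsDerivChain n F s) (c d : ℝ) (hst : MapsTo (fun x => c * x + d) t s) :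
    IsDerivChain n (fun i x => c ^ i * F i (c * x + d)) t := by
  intro i hi x hx
  have haff : HasDerivWithinAt (fun x : ℝ => c * x + d) c t x := by
    simpa using (((hasDerivAt_id x).const_mul c).add_const d).hasDerivWithinAt
  refine (((h i hi _ (hst hx)).comp x haff hst).const_mul (c ^ i)).congr_deriv ?_
  ring

lemma continuousOn (h : IsDerivChain n F s) (hi : i < n) : ContinuousOn (F i) s :=
  fun x hx => (h i hi x hx).continuousWithinAt

lemma differentiableOn (h : IsDerivChain n F s) (hi : i < n) : DifferentiableOn ℝ (F i) s :=
  fun x hx => (h i hi x hx).differentiableWithinAt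

lemma iteratedDerivWithin_eqOn (h : IsDerivChain n F s) (hs : UniqueDiffOn ℝ s) (hi : i ≤ n) :
    EqOn (iteratedDerivWithin i (F 0) s) (F i) s := by
  induction i with
  | zero => intro x _; simp
  | succ i ih =>
    intro x hx
    have ih := ih (by omega)
    rw [iteratedDerivWithin_succ, derivWithin_congr ih (ih hx)]
    exact (h i hi x hx).derivWithin (hs x hx)

lemma exists_slope_eq (h : IsDerivChain n F s) (hi : i < n) (hxy : x < y) (hs : Icc x y ⊆ s) :
    ∃ z ∈ Ioo x y, F (i + 1) z * (y - x) = F i y - F i x := by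
  have h := h.mono hs
  obtain ⟨z, hz, hslope⟩ := exists_hasDerivAt_eq_slope (F i) (F (i + 1)) hxy (h.continuousOn hi)
    fun z hz => (h i hi z (Ioo_subset_Icc_self hz)).hasDerivAt (Icc_mem_nhds hz.1 hz.2)
  exact ⟨z, hz, (eq_div_iff (sub_ne_zero.2 hxy.ne')).1 hslope⟩

lemma abs_sub_taylor_le (h : IsDerivChain m F s) (hs : uIcc x₀ x ⊆ s)
    (hB : ∀ t ∈ uIcc x₀ x, |F m t| ≤ B) :
    |F 0 x - ∑ i ∈ Finset.range m, F i x₀ * (x - x₀) ^ i / i !| ≤ B * |x - x₀| ^ m / m ! := by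
  have h := h.mono hs
  rcases m with _ | m
  · simpa using hB x right_mem_uIcc
  rcases eq_or_ne x₀ x with rfl | hne
  · simp [Finset.sum_range_succ']
  have hud : UniqueDiffOn ℝ (uIcc x₀ x) := uniqueDiffOn_Icc (inf_lt_sup.2 hne)
  have hIter {i : ℕ} (hi : i ≤ m + 1) := h.iteratedDerivWithin_eqOn hud hi
  have hdiff {i : ℕ} (hi : i < m + 1) :
      DifferentiableOn ℝ (iteratedDerivWithin i (F 0) (uIcc x₀ x)) (uIcc x₀ x) :=
    (h.differentiableOn hi).congr (hIter hi.le)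
  obtain ⟨ξ, hξ, heq⟩ := taylor_mean_remainder_lagrange (n := m) hne
    (contDiffOn_of_differentiableOn_deriv fun i hi =>
      hdiff (Nat.lt_succ_of_le (by exact_mod_cast hi)))
    ((hdiff m.lt_succ_self).mono uIoo_subset_uIcc_self)
  have hsum : taylorWithinEval (F 0) m (uIcc x₀ x) x₀ x
      = ∑ i ∈ Finset.range (m + 1), F i x₀ * (x - x₀) ^ i / i ! := by
    rw [taylor_within_apply]
    refine Finset.sum_congr rfl fun i hi => ?_
    rw [hIter (Finset.mem_range.1 hi).le left_mem_uIcc, smul_eq_mul]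
    ring
  have hξ := uIoo_subset_uIcc_self hξ
  rw [hsum, hIter le_rfl hξ] at heq
  rw [heq, abs_div, abs_mul, abs_pow, Nat.abs_cast]
  gcongr
  exact hB ξ hξ

end IsDerivChain

lemma isDerivChain_iterate_derivative_eval (P : ℝ[X]) (n : ℕ) (s : Set ℝ) :
    IsDerivChain n (fun i x => (derivative^[i] P).eval x) s := by
  intro i _ x _
  simpa only [Function.iterate_succ_apply'] using (derivative^[i] P).hasDerivWithinAt x s

lemma isDerivChain_chebDeriv (N : ℤ) (n : ℕ) (s : Set ℝ) : IsDerivChain n (chebDeriv N) s :=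
  isDerivChain_iterate_derivative_eval _ n s

/-- `g` alternates in sign along `N` points of `s` listed in decreasing order, starting with a
positive value at the rightmost one. -/
def Alternates (g : ℝ → ℝ) (N : ℕ) (s : Set ℝ) : Prop :=
  ∃ y : ℕ → ℝ, (∀ j < N, y j ∈ s) ∧ (∀ j, j + 1 < N → y (j + 1) < y j) ∧
    ∀ j < N, 0 < (-1) ^ j * g (y j)

namespace Alternates

variable {i j k n N : ℕ} {F : ℕ → ℝ → ℝ} {f g : ℝ → ℝ} {s : Set ℝ} {y : ℕ → ℝ} {c q : ℝ}

lemma sub_const_mul (hy : ∀ j < N, y j ∈ s) (hlt : ∀ j, j + 1 < N → y (j + 1) < y j)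
    (hg : ∀ j < N, 1 ≤ (-1) ^ j * g (y j)) (hf : ∀ x ∈ s, |f x| ≤ 1) (hc : |c| < 1) :
    Alternates (fun x => g x - c * f x) N s := by
  refine ⟨y, hy, hlt, fun j hj => ?_⟩
  have hcf : (-1) ^ j * (c * f (y j)) < 1 := by
    calc (-1) ^ j * (c * f (y j)) ≤ |(-1) ^ j * (c * f (y j))| := le_abs_self _
      _ = |c| * |f (y j)| := by simp [abs_mul]
      _ ≤ |c| * 1 := by gcongr; exact hf _ (hy j hj)
      _ < 1 := by simpa using hc
  linarith [hg j hj, mul_sub ((-1 : ℝ) ^ j) (g (y j)) (c * f (y j))]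

lemma deriv_of_zigzag [s.OrdConnected] (h : IsDerivChain n F s) (hi : i < n)
    (hy : ∀ j ≤ N, y j ∈ s) (hlt : ∀ j < N, y (j + 1) < y j)
    (hzig : ∀ j < N, 0 < (-1) ^ j * (F i (y j) - F i (y (j + 1)))) :
    Alternates (F (i + 1)) N s := by
  have hslope (j : ℕ) : ∃ z, j < N → z ∈ Ioo (y (j + 1)) (y j) ∧
      F (i + 1) z * (y j - y (j + 1)) = F i (y j) - F i (y (j + 1)) := by
    by_cases hj : j < N
    · obtain ⟨z, hz⟩ := h.exists_slope_eq hi (hlt j hj) (s.Icc_subset (hy _ hj) (hy _ hj.le))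
      exact ⟨z, fun _ => hz⟩
    · exact ⟨0, fun hj' => absurd hj' hj⟩
  choose z hz using hslope
  refine ⟨z, fun j hj => ?_, fun j hj => ?_, fun j hj => ?_⟩
  · exact s.Icc_subset (hy _ hj) (hy _ hj.le) (Ioo_subset_Icc_self (hz j hj).1)
  · exact (hz (j + 1) hj).1.2.trans (hz j (by omega)).1.1
  · have hpos := hzig j hj
    rw [← (hz j hj).2, ← mul_assoc] at hpos
    exact pos_of_mul_pos_left hpos (sub_pos.2 (hlt j hj)).le

lemma deriv [s.OrdConnected] (h : IsDerivChain n F s) (hi : i < n) (hA : Alternates (F i) N s) :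
    Alternates (F (i + 1)) (N - 1) s := by
  obtain ⟨y, hy, hlt, hpos⟩ := hA
  rcases N with _ | N
  · exact ⟨y, by simp, by simp, by simp⟩
  refine deriv_of_zigzag h hi (fun j hj => hy j (by omega)) (fun j hj => hlt j (by omega))
    fun j hj => ?_
  have h0 := hpos j (by omega)
  have h1 := hpos (j + 1) (by omega)
  rw [pow_succ] at h1
  linarith

lemma iterate_deriv [s.OrdConnected] (h : IsDerivChain n F s) (hA : Alternates (F i) N s)
    (hij : i ≤ j) (hj : j ≤ n) : Alternates (F j) (N - (j - i)) s := by
  induction j, hij using Nat.le_induction with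
  | base => simpa using hA
  | succ j hij ih =>
    have := deriv h hj (ih (by omega))
    rwa [Nat.sub_sub, ← Nat.sub_add_comm hij] at this

lemma cons_of_neg (hA : Alternates g N s) (hq : IsGreatest s q) (hgq : g q < 0) :
    Alternates (fun x => -g x) (N + 1) s := by
  obtain ⟨y, hy, hlt, hpos⟩ := hA
  refine ⟨fun | 0 => q | j + 1 => y j, ?_, ?_, ?_⟩
  · rintro (_ | j) hj
    exacts [hq.1, hy j (by omega)]
  · rintro (_ | j) hj
    · refine lt_of_le_of_ne (hq.2 (hy 0 (by omega))) fun heq => ?_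
      have := hpos 0 (by omega)
      simp only [pow_zero, one_mul] at this heq
      exact (heq ▸ this).not_gt hgq
    · exact hlt j (by omega)
  · rintro (_ | j) hj
    · simpa using hgq
    · simpa [pow_succ] using hpos j (by omega)

lemma deriv_of_eq_zero [s.OrdConnected] (h : IsDerivChain n F s) (hi : i < n)
    (hA : Alternates (F i) N s) (hq : IsGreatest s q) (hFq : F i q = 0) :
    Alternates (fun x => -F (i + 1) x) N s := by
  obtain ⟨y, hy, hlt, hpos⟩ := hA
  refine deriv_of_zigzag (y := fun | 0 => q | j + 1 => y j) h.neg hi ?_ ?_ ?_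
  · rintro (_ | j) hj
    exacts [hq.1, hy j (by omega)]
  · rintro (_ | j) hj
    · refine lt_of_le_of_ne (hq.2 (hy 0 hj)) fun heq => ?_
      have := hpos 0 hj
      simp only at heq
      simp [heq, hFq] at this
    · exact hlt j (by omega)
  · rintro (_ | j) hj
    · simpa [hFq] using hpos 0 hj
    · have h0 := hpos j (by omega)
      have h1 := hpos (j + 1) (by omega)
      simp only [pow_succ] at h1 ⊢
      linarith

/- If `F n` were nonnegative, Rolle's theorem would leave `F n` one sign change too many: the
negative value at the right end survives as an extra alternation from level `j` on. -/
lemma exists_neg_of_neg [s.OrdConnected] (h : IsDerivChain n F s) (hA : Alternates (F 0) n s)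
    (hq : IsGreatest s q) (hj : j ≤ n) (hFq : F j q < 0) : ∃ x ∈ s, F n x < 0 := by
  have hAj := (iterate_deriv h hA (Nat.zero_le j) hj).cons_of_neg hq hFq
  obtain ⟨y, hy, -, hpos⟩ := iterate_deriv (F := fun i x => -F i x) h.neg hAj hj le_rfl
  have h0 : 0 < n - (j - 0) + 1 - (n - j) := by omega
  exact ⟨y 0, hy 0 h0, by simpa using hpos 0 h0⟩

/- As above with one alternation less; the zero of `F (k + 1)` at the right end makes up for it. -/
lemma exists_pos_of_neg_of_eq_zero [s.OrdConnected] (h : IsDerivChain n F s)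
    (hA : Alternates (F 0) (n - 1) s) (hq : IsGreatest s q) (hk : k + 2 ≤ n) (hFk : F k q < 0)
    (hFk' : F (k + 1) q = 0) : ∃ x ∈ s, 0 < F n x := by
  have hAk := (iterate_deriv h hA (Nat.zero_le k) (by omega)).cons_of_neg hq hFk
  have hAk' := deriv (F := fun i x => -F i x) h.neg (by omega) hAk
  have hAk'' := deriv_of_eq_zero (F := fun i x => -F i x) h.neg (by omega) hAk' hq (by simpa)
  simp only [neg_neg] at hAk''
  obtain ⟨y, hy, -, hpos⟩ := iterate_deriv h hAk'' hk le_rfl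
  have h0 : 0 < n - 1 - (k - 0) + 1 - 1 - (n - (k + 1 + 1)) := by omega
  exact ⟨y 0, hy 0 h0, by simpa using hpos 0 h0⟩

end Alternates

/-- The chain `F` consists of a function of the class `W^n_∞(σ)` and its derivatives, see
`IsAdmissible.memW` and `isAdmissible_of_memW`. -/
structure IsAdmissible (n : ℕ) (σ : ℝ) (F : ℕ → ℝ → ℝ) : Prop where
  isDerivChain : IsDerivChain n F (Icc (-1) 1)
  abs_le_one : ∀ x ∈ Icc (-1 : ℝ) 1, |F 0 x| ≤ 1
  abs_le : ∀ x ∈ Icc (-1 : ℝ) 1, |F n x| ≤ σ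

lemma isAdmissible_of_memW {n : ℕ} {σ : ℝ} {f : ℝ → ℝ} (hf : memW n σ f) :
    IsAdmissible n σ (fun i => iteratedDerivWithin i f (Icc (-1) 1)) where
  isDerivChain i hi x hx := by
    simpa [iteratedDerivWithin_succ] using (hf.1 i hi x hx).hasDerivWithinAt
  abs_le_one x hx := by simpa using hf.2.1 x hx
  abs_le := hf.2.2

lemma isAdmissible_zero {σ : ℝ} (hσ : 0 ≤ σ) (n : ℕ) : IsAdmissible n σ 0 where
  isDerivChain _ _ x _ := hasDerivWithinAt_const x _ _
  abs_le_one := by simp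
  abs_le _ _ := by simpa

namespace IsAdmissible

variable {n i : ℕ} {σ τ c d x₀ β : ℝ} {F : ℕ → ℝ → ℝ}

lemma iteratedDerivWithin_eqOn (h : IsAdmissible n σ F) (hi : i ≤ n) :
    EqOn (iteratedDerivWithin i (F 0) (Icc (-1) 1)) (F i) (Icc (-1) 1) :=
  h.isDerivChain.iteratedDerivWithin_eqOn (uniqueDiffOn_Icc (by norm_num)) hi

lemma memW (h : IsAdmissible n σ F) : memW n σ (F 0) := by
  refine ⟨fun i hi => ?_, h.abs_le_one, fun x hx => ?_⟩
  · exact (h.isDerivChain.differentiableOn hi).congr (h.iteratedDerivWithin_eqOn hi.le)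
  · rw [h.iteratedDerivWithin_eqOn le_rfl hx]
    exact h.abs_le x hx

lemma nonneg (h : IsAdmissible n σ F) : 0 ≤ σ :=
  (abs_nonneg _).trans (h.abs_le 1 (by simp))

lemma mono (h : IsAdmissible n σ F) (hστ : σ ≤ τ) : IsAdmissible n τ F :=
  { h with abs_le := fun x hx => (h.abs_le x hx).trans hστ }

lemma neg (h : IsAdmissible n σ F) : IsAdmissible n σ (fun i x => -F i x) where
  isDerivChain := h.isDerivChain.neg
  abs_le_one := by simpa using h.abs_le_one
  abs_le := by simpa using h.abs_le

lemma comp_affine (h : IsAdmissible n σ F)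
    (hcd : MapsTo (fun x => c * x + d) (Icc (-1) 1) (Icc (-1) 1)) :
    IsAdmissible n (|c| ^ n * σ) (fun i x => c ^ i * F i (c * x + d)) where
  isDerivChain := h.isDerivChain.comp_affine c d hcd
  abs_le_one x hx := by simpa using h.abs_le_one _ (hcd hx)
  abs_le x hx := by
    rw [abs_mul, abs_pow]
    gcongr
    exact h.abs_le _ (hcd hx)

lemma comp_neg (h : IsAdmissible n σ F) : IsAdmissible n σ (fun i x => (-1) ^ i * F i (-x)) := by
  have hmaps : MapsTo (fun x : ℝ => -1 * x + 0) (Icc (-1) 1) (Icc (-1) 1) :=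
    fun x hx => ⟨by linarith [hx.2], by linarith [hx.1]⟩
  simpa using h.comp_affine hmaps

/- The substitution maps `[-1, 1]` onto `[x₀ - 2 * β, x₀]`. -/
lemma comp_affine_right_eq (h : IsAdmissible n σ F) (hx₀ : x₀ ≤ 1) (hβ₀ : 0 ≤ β)
    (hβ : β ≤ (1 + x₀) / 2) :
    IsAdmissible n (β ^ n * σ) (fun i t => β ^ i * F i (β * t + (x₀ - β))) := by
  have hmaps : MapsTo (fun t : ℝ => β * t + (x₀ - β)) (Icc (-1) 1) (Icc (-1) 1) := by
    rintro t ⟨ht₁, ht₂⟩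
    constructor <;> nlinarith
  simpa only [abs_of_nonneg hβ₀] using h.comp_affine hmaps

end IsAdmissible

lemma chebDeriv_zero (N : ℤ) (x : ℝ) : chebDeriv N 0 x = (Chebyshev.T ℝ N).eval x := rfl

lemma chebDeriv_self (n : ℕ) (x : ℝ) : chebDeriv n n x = sigmaN n := by
  have hdeg : (Chebyshev.T ℝ (n : ℤ)).natDegree = n := by simp
  have hlead : (Chebyshev.T ℝ (n : ℤ)).coeff n = 2 ^ (n - 1) := by
    simpa [leadingCoeff, hdeg] using Chebyshev.leadingCoeff_T ℝ (n : ℤ)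
  have hconst : (derivative^[n] (Chebyshev.T ℝ (n : ℤ))).natDegree ≤ 0 := by
    simpa [hdeg] using natDegree_iterate_derivative (Chebyshev.T ℝ (n : ℤ)) n
  rw [chebDeriv, sigmaN, eq_C_of_natDegree_le_zero hconst, eval_C, coeff_iterate_derivative,
    zero_add, hlead, Nat.descFactorial_self, nsmul_eq_mul, mul_comm]

lemma chebDeriv_eq_zero_of_lt {m n : ℕ} (hmn : m < n) (x : ℝ) : chebDeriv m n x = 0 := by
  rw [chebDeriv, iterate_derivative_eq_zero (by simpa), eval_zero]

lemma chebDeriv_succ_one (N : ℤ) (k : ℕ) :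
    (2 * k + 1) * chebDeriv N (k + 1) 1 = (N ^ 2 - k ^ 2) * chebDeriv N k 1 :=
  Chebyshev.iterate_derivative_T_eval_one_recurrence N k

lemma doubleFactorial_mul_chebDeriv_one (N : ℤ) (k : ℕ) :
    (2 * k - 1)‼ * chebDeriv N k 1 = ∏ l ∈ Finset.range k, ((N : ℝ) ^ 2 - l ^ 2) := by
  induction k with
  | zero => simp [chebDeriv_zero]
  | succ k ih =>
    rw [Finset.prod_range_succ, ← ih, mul_right_comm, mul_assoc, ← chebDeriv_succ_one,
      show 2 * (k + 1) - 1 = 2 * k + 1 by omega, Nat.doubleFactorial_add_one]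
    push_cast
    ring

lemma abs_chebDeriv_le (N : ℤ) (k : ℕ) {x : ℝ} (hx : x ∈ Icc (-1) 1) :
    |chebDeriv N k x| ≤ chebDeriv N k 1 :=
  Chebyshev.abs_iterate_derivative_T_real_le N k (abs_le.2 hx)

lemma chebDeriv_one_nonneg (N : ℤ) (k : ℕ) : 0 ≤ chebDeriv N k 1 :=
  (abs_nonneg _).trans (abs_chebDeriv_le N k (x := 1) (by simp))

lemma chebDeriv_one_pos {n k : ℕ} (hk : k ≤ n) : 0 < chebDeriv n k 1 := by
  have hprod : 0 < ∏ l ∈ Finset.range k, (((n : ℤ) : ℝ) ^ 2 - l ^ 2) := by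
    refine Finset.prod_pos fun l hl => sub_pos.2 ?_
    have : l < n := (Finset.mem_range.1 hl).trans_le hk
    push_cast
    gcongr
  rw [← doubleFactorial_mul_chebDeriv_one] at hprod
  exact pos_of_mul_pos_right hprod (by positivity)

lemma sigmaN_pos (n : ℕ) : 0 < sigmaN n := by
  unfold sigmaN
  positivity

lemma isAdmissible_chebDeriv (N : ℤ) (n : ℕ) :
    IsAdmissible n (chebDeriv N n 1) (chebDeriv N) where
  isDerivChain := isDerivChain_chebDeriv N n _
  abs_le_one x hx := by simpa [chebDeriv_zero] using abs_chebDeriv_le N 0 hx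
  abs_le _ hx := abs_chebDeriv_le N n hx

lemma exists_mem_Ioo_zero_one_lt_mul {u v : ℝ} (h : v < u) : ∃ c ∈ Ioo (0 : ℝ) 1, v < c * u := by
  have hlim : Filter.Tendsto (fun c : ℝ => c * u) (nhdsWithin 1 (Iio 1)) (nhds u) := by
    simpa using ((continuous_id.mul_const u).continuousWithinAt (x := 1) (s := Iio 1)).tendsto
  exact ((hlim.eventually (lt_mem_nhds h)).and (Ioo_mem_nhdsLT one_pos)).exists.imp
    fun _ hc => ⟨hc.2, hc.1⟩

lemma isGreatest_Icc_neg_one_one : IsGreatest (Icc (-1 : ℝ) 1) 1 := isGreatest_Icc (by norm_num)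

namespace IsAdmissible

variable {n j k : ℕ} {σ β x₀ : ℝ} {F G : ℕ → ℝ → ℝ} {y : ℕ → ℝ}

/- If this failed, `T_n - c F` with a suitable `c < 1` would alternate along the extremal points of
`T_n` and have a negative `j`-th derivative at `1`, hence a negative `n`-th derivative somewhere. -/
lemma le_chebDeriv_one (h : IsAdmissible n (sigmaN n) F) (hj : j ≤ n) :
    F j 1 ≤ chebDeriv n j 1 := by
  by_contra! hlt
  obtain ⟨c, ⟨hc₀, hc₁⟩, hc⟩ := exists_mem_Ioo_zero_one_lt_mul hlt
  have hnode {i : ℕ} (hi : i < n) : 1 ≤ (-1) ^ i * chebDeriv n 0 (Chebyshev.node n i) := by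
    rw [chebDeriv_zero, Chebyshev.eval_T_real_node (Finset.mem_Iic.2 hi.le), ← mul_pow]
    simp
  have hA : Alternates (fun x => chebDeriv n 0 x - c * F 0 x) n (Icc (-1) 1) :=
    .sub_const_mul (fun _ _ => Chebyshev.node_mem_Icc)
      (fun i hi => Chebyshev.node_lt hi.le i.lt_succ_self) (fun _ hi => hnode hi) h.abs_le_one
      (by rwa [abs_of_pos hc₀])
  obtain ⟨x, hx, hneg⟩ := Alternates.exists_neg_of_neg
    ((isDerivChain_chebDeriv n n _).sub (h.isDerivChain.const_mul c)) hA
    isGreatest_Icc_neg_one_one hj (sub_neg.2 hc)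
  rw [chebDeriv_self] at hneg
  nlinarith [le_of_abs_le (h.abs_le x hx), sigmaN_pos n]

lemma abs_le_chebDeriv_one (h : IsAdmissible n (sigmaN n) F) (hj : j ≤ n) :
    |F j 1| ≤ chebDeriv n j 1 :=
  abs_le'.2 ⟨h.le_chebDeriv_one hj, h.neg.le_chebDeriv_one hj⟩

/- The argument of `le_chebDeriv_one`, with `G` in place of `T_n`. -/
lemma le_of_witness (h : IsAdmissible n σ F) (hk : k + 2 ≤ n) (hF : F (k + 1) 1 = 0)
    (hG : IsDerivChain n G (Icc (-1) 1)) (hy : ∀ j < n - 1, y j ∈ Icc (-1) 1)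
    (hlt : ∀ j, j + 1 < n - 1 → y (j + 1) < y j) (hGy : ∀ j < n - 1, 1 ≤ (-1) ^ j * G 0 (y j))
    (hG₁ : G (k + 1) 1 = 0) (hGn : ∀ x ∈ Icc (-1) 1, G n x ≤ -σ) : F k 1 ≤ G k 1 := by
  by_contra! hlt_FG
  obtain ⟨c, ⟨hc₀, hc₁⟩, hc⟩ := exists_mem_Ioo_zero_one_lt_mul hlt_FG
  have hA : Alternates (fun x => G 0 x - c * F 0 x) (n - 1) (Icc (-1) 1) :=
    .sub_const_mul hy hlt hGy h.abs_le_one (by rwa [abs_of_pos hc₀])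
  obtain ⟨x, hx, hpos⟩ := Alternates.exists_pos_of_neg_of_eq_zero
    (hG.sub (h.isDerivChain.const_mul c)) hA isGreatest_Icc_neg_one_one hk (sub_neg.2 hc)
    (by simp [hF, hG₁])
  nlinarith [hGn x hx, neg_le_of_abs_le (h.abs_le x hx), h.nonneg]

lemma pow_mul_abs_le_chebDeriv_one (h : IsAdmissible n σ F) (hj : j ≤ n) (hx₀ : x₀ ≤ 1)
    (hβ₀ : 0 ≤ β) (hβ : β ≤ (1 + x₀) / 2) (hσ : β ^ n * σ ≤ sigmaN n) :
    β ^ j * |F j x₀| ≤ chebDeriv n j 1 := by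
  simpa [abs_mul, abs_of_nonneg hβ₀] using
    ((h.comp_affine_right_eq hx₀ hβ₀ hβ).mono hσ).abs_le_chebDeriv_one hj

lemma exists_forall_abs_le (hn : n ≠ 0) (hk : k ≤ n) (σ : ℝ) :
    ∃ B, ∀ F, IsAdmissible n σ F → |F k 1| ≤ B := by
  have hlim : Filter.Tendsto (fun β : ℝ => β ^ n * σ) (nhdsWithin 0 (Ioi 0)) (nhds 0) := by
    have hcont : Continuous fun β : ℝ => β ^ n * σ := by fun_prop
    simpa [hn] using (hcont.continuousWithinAt (x := 0) (s := Ioi 0)).tendsto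
  obtain ⟨β, hβ, hβ₀, hβ₁⟩ :=
    ((hlim.eventually (gt_mem_nhds (sigmaN_pos n))).and (Ioo_mem_nhdsGT one_pos)).exists
  refine ⟨chebDeriv n k 1 / β ^ k, fun F h => ?_⟩
  rw [le_div_iff₀' (by positivity)]
  exact h.pow_mul_abs_le_chebDeriv_one hk le_rfl hβ₀.le (by linarith) hβ.le

lemma abs_le_mval (h : IsAdmissible n σ F) (hn : n ≠ 0) (hk : k ≤ n) :
    |F k 1| ≤ mval n k 1 σ := by
  obtain ⟨B, hB⟩ := exists_forall_abs_le hn hk σ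
  refine le_csSup ⟨B, ?_⟩ ⟨F 0, h.memW, by rw [h.iteratedDerivWithin_eqOn hk (by simp)]⟩
  rintro _ ⟨f, hf, rfl⟩
  exact hB _ (isAdmissible_of_memW hf)

lemma abs_le_mstar (h : IsAdmissible n σ F) (hk : k + 1 ≤ n) (hF : F (k + 1) 1 = 0) :
    |F k 1| ≤ mstar n k 1 σ := by
  obtain ⟨B, hB⟩ := exists_forall_abs_le (by omega) (Nat.le_of_succ_le hk) σ
  refine le_csSup ⟨B, ?_⟩ ⟨F 0, h.memW, ?_, ?_⟩
  · rintro _ ⟨f, hf, -, rfl⟩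
    exact hB _ (isAdmissible_of_memW hf)
  · rw [h.iteratedDerivWithin_eqOn hk (by simp), hF]
  · rw [h.iteratedDerivWithin_eqOn (Nat.le_of_succ_le hk) (by simp)]

lemma pow_mul_abs_le_mstar (h : IsAdmissible n σ F) (hk : k + 1 ≤ n) (hF : F (k + 1) x₀ = 0)
    (hx₀ : x₀ ≤ 1) (hβ₀ : 0 ≤ β) (hβ : β ≤ (1 + x₀) / 2) :
    β ^ k * |F k x₀| ≤ mstar n k 1 (β ^ n * σ) := by
  simpa [abs_mul, abs_of_nonneg hβ₀] using
    (h.comp_affine_right_eq hx₀ hβ₀ hβ).abs_le_mstar hk (by simp [hF])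

end IsAdmissible

lemma mstar_one_le_of_witness {n k : ℕ} {s : ℝ} {G : ℕ → ℝ → ℝ} {y : ℕ → ℝ} (hs : 0 ≤ s)
    (hk : k + 2 ≤ n) (hG : IsDerivChain n G (Icc (-1) 1)) (hy : ∀ j < n - 1, y j ∈ Icc (-1) 1)
    (hlt : ∀ j, j + 1 < n - 1 → y (j + 1) < y j) (hGy : ∀ j < n - 1, 1 ≤ (-1) ^ j * G 0 (y j))
    (hG₁ : G (k + 1) 1 = 0) (hGn : ∀ x ∈ Icc (-1) 1, G n x ≤ -s) : mstar n k 1 s ≤ G k 1 := by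
  have hzero := isAdmissible_zero hs n
  refine csSup_le ⟨_, 0, hzero.memW, hzero.iteratedDerivWithin_eqOn (by omega) (by simp), rfl⟩ ?_
  rintro _ ⟨f, hf, hf₁, rfl⟩
  have h := isAdmissible_of_memW hf
  exact abs_le'.2 ⟨h.le_of_witness hk hf₁ hG hy hlt hGy hG₁ hGn,
    h.neg.le_of_witness hk (by simpa using hf₁) hG hy hlt hGy hG₁ hGn⟩

/-- The comparison polynomial `α T_n - γ (X - 1) T_n' + (1 - α) T_m` for the extremal problem
`mstar n k 1`: the middle term leaves the extremal points of `T_n` unmoved and makes the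
`(k + 1)`-st derivative vanish at `1`, the last one lowers the `k`-th derivative. -/
noncomputable def schurWitness (n m : ℕ) (α γ : ℝ) : ℝ[X] :=
  C α * Chebyshev.T ℝ n
    - C γ * (derivative (Chebyshev.T ℝ n) * X - derivative (Chebyshev.T ℝ n))
    + C (1 - α) * Chebyshev.T ℝ m

section SchurWitness

variable {n m k : ℕ} {α γ s : ℝ} {δ : ℕ → ℝ}

lemma iterate_derivative_schurWitness_eval (n m : ℕ) (α γ : ℝ) (j : ℕ) (x : ℝ) :
    (derivative^[j] (schurWitness n m α γ)).eval x = α * chebDeriv n j x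
      - γ * ((x - 1) * chebDeriv n (j + 1) x + j * chebDeriv n j x)
      + (1 - α) * chebDeriv m j x := by
  simp only [schurWitness, chebDeriv, iterate_map_add, iterate_derivative_sub,
    iterate_derivative_C_mul, iterate_derivative_derivative_mul_X, Function.iterate_succ_apply,
    eval_add, eval_sub, eval_mul, eval_C, eval_X, nsmul_eq_mul, eval_natCast]
  ring

lemma cos_sub_one_mul_chebDeriv_one {θ : ℝ} (hθ : Real.cos (θ / 2) ≠ 0) (n : ℕ) :
    (Real.cos θ - 1) * chebDeriv n 1 (Real.cos θ)
      = -(n * Real.tan (θ / 2) * Real.sin (n * θ)) := by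
  have hU := Chebyshev.U_real_cos θ ((n : ℤ) - 1)
  have hderiv : chebDeriv n 1 (Real.cos θ)
      = n * (Chebyshev.U ℝ ((n : ℤ) - 1)).eval (Real.cos θ) := by
    simp [chebDeriv, Chebyshev.T_derivative_eq_U]
  have hcos : Real.cos θ = 1 - 2 * Real.sin (θ / 2) ^ 2 := by
    rw [Real.sin_sq_eq_half_sub]
    ring_nf
  have hsin : Real.sin θ = 2 * Real.sin (θ / 2) * Real.cos (θ / 2) := by
    rw [← Real.sin_two_mul]
    ring_nf
  push_cast at hU
  rw [sub_add_cancel, hsin] at hU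
  rw [hderiv, ← hU, Real.tan_eq_sin_div_cos]
  generalize (Chebyshev.U ℝ ((n : ℤ) - 1)).eval (Real.cos θ) = u
  rw [hcos]
  field_simp
  ring

lemma neg_one_pow_mul_schurWitness_eval_cos (m : ℕ) (α γ : ℝ) {j : ℕ} {δ θ : ℝ}
    (hθ : n * θ = δ + j * Real.pi) (hcos : Real.cos (θ / 2) ≠ 0) :
    (-1) ^ j * (schurWitness n m α γ).eval (Real.cos θ)
      = α * Real.cos δ + γ * (n * Real.tan (θ / 2) * Real.sin δ)
        + (1 - α) * ((-1) ^ j * Real.cos (m * θ)) := by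
  have hsq : (-1 : ℝ) ^ j * (-1) ^ j = 1 := by simp [← mul_pow]
  have heval := iterate_derivative_schurWitness_eval n m α γ 0 (Real.cos θ)
  simp only [Function.iterate_zero, id, zero_add, cos_sub_one_mul_chebDeriv_one hcos,
    chebDeriv_zero, Chebyshev.T_real_cos, Int.cast_natCast, hθ, Real.cos_add_nat_mul_pi,
    Real.sin_add_nat_mul_pi] at heval
  rw [heval]
  push_cast
  linear_combination (α * Real.cos δ + γ * (n * Real.tan (θ / 2) * Real.sin δ)) * hsq

lemma mstar_one_le_of_schurWitness (hk : k + 2 ≤ n) (hm : m < n) (hs₀ : 0 ≤ s)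
    (hδ₀ : ∀ j, 0 ≤ δ j) (hδ₁ : ∀ j, δ j ≤ 1)
    (hval : ∀ j < n - 1, 1 ≤ α * Real.cos (δ j)
      + γ * (n * Real.tan ((j * Real.pi + δ j) / n / 2) * Real.sin (δ j))
      + (1 - α) * ((-1) ^ j * Real.cos (m * ((j * Real.pi + δ j) / n))))
    (hγ : γ * ((k + 1) * chebDeriv n (k + 1) 1)
      = α * chebDeriv n (k + 1) 1 + (1 - α) * chebDeriv m (k + 1) 1)
    (hs : s ≤ (γ * n - α) * sigmaN n) :
    mstar n k 1 s ≤ (α - γ * k) * chebDeriv n k 1 + (1 - α) * chebDeriv m k 1 := by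
  have hn : (0 : ℝ) < n := by exact_mod_cast (by omega : 0 < n)
  have hπ := Real.pi_gt_three
  have hangle_nonneg (j : ℕ) : 0 ≤ (j * Real.pi + δ j) / n := by
    have := hδ₀ j
    positivity
  have hangle_lt {j : ℕ} (hj : j < n - 1) : (j * Real.pi + δ j) / n < Real.pi := by
    have : (j : ℝ) + 1 ≤ n := by exact_mod_cast (by omega : j + 1 ≤ n)
    rw [div_lt_iff₀ hn]
    nlinarith [hδ₁ j]
  have hW := iterate_derivative_schurWitness_eval n m α γ
  refine (mstar_one_le_of_witness (y := fun j => Real.cos ((j * Real.pi + δ j) / n)) hs₀ hk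
    (isDerivChain_iterate_derivative_eval (schurWitness n m α γ) n _)
    (fun j _ => Real.cos_mem_Icc _) (fun j hj => ?_) (fun j hj => ?_) ?_ fun x _ => ?_).trans_eq ?_
  · refine Real.cos_lt_cos_of_nonneg_of_le_pi (hangle_nonneg j) (hangle_lt hj).le
      (div_lt_div_of_pos_right ?_ hn)
    push_cast
    linarith [hδ₀ (j + 1), hδ₁ j]
  · have hcos : Real.cos ((j * Real.pi + δ j) / n / 2) ≠ 0 :=
      (Real.cos_pos_of_mem_Ioo ⟨by linarith [hangle_nonneg j], by linarith [hangle_lt hj]⟩).ne'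
    refine (hval j hj).trans_eq (neg_one_pow_mul_schurWitness_eval_cos m α γ ?_ hcos).symm
    field_simp
    ring
  · rw [hW]
    push_cast
    linear_combination -hγ
  · rw [hW, chebDeriv_self, chebDeriv_eq_zero_of_lt n.lt_succ_self, chebDeriv_eq_zero_of_lt hm]
    linarith
  · rw [hW]
    ring

lemma mstar_one_le_chebDeriv_div (hk : k + 2 ≤ n) (hs₀ : 0 ≤ s)
    (hs : s ≤ (n / (k + 1) - 1) * sigmaN n) : mstar n k 1 s ≤ chebDeriv n k 1 / (k + 1) := by
  have hk₁ : (k : ℝ) + 1 ≠ 0 := by positivity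
  refine (mstar_one_le_of_schurWitness (m := 0) (α := 1) (γ := 1 / (k + 1)) (δ := fun _ => 0) hk
    (by omega) hs₀ (by simp) (by simp) (by simp) (by field_simp; ring) ?_).trans_eq ?_
  · rwa [one_div_mul_eq_div]
  · field_simp
    ring

end SchurWitness

/-- The angular shifts of the nodes at which `schurWitness n m (7 / 10) γ` is compared with `±1`
when `m ≈ 2 n / 3`; the values are chosen numerically so that `one_le_of_schurShift` holds. -/
noncomputable def schurShift : ℕ → ℝ
  | 0 => 0
  | 1 => 13 / 20
  | _ + 2 => 1

section SchurShift

variable {c ρ : ℝ}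

lemma schurShift_nonneg : ∀ j, 0 ≤ schurShift j
  | 0 | 1 | _ + 2 => by norm_num [schurShift]

lemma schurShift_le_one : ∀ j, schurShift j ≤ 1
  | 0 | 1 | _ + 2 => by norm_num [schurShift]

lemma cos_le_neg_of_near_pi {ψ : ℝ} (hψ : |Real.pi - ψ| ≤ 62 / 100) :
    Real.cos ψ ≤ (62 / 100) ^ 2 / 2 - 1 := by
  have hcos := Real.one_sub_sq_div_two_le_cos (x := Real.pi - ψ)
  rw [Real.cos_pi_sub] at hcos
  linarith [sq_le_sq' (abs_le.1 hψ).1 (abs_le.1 hψ).2]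

lemma one_le_of_schurShift_one (hρ : ρ ∈ Icc (2 / 3) (6852 / 10000))
    (hc : 241 / 2000 * (Real.pi + 13 / 20) ≤ c) :
    1 ≤ 7 / 10 * Real.cos (13 / 20) + c * Real.sin (13 / 20)
      - 3 / 10 * Real.cos (ρ * (Real.pi + 13 / 20)) := by
  obtain ⟨hρ₀, hρ₁⟩ := hρ
  have hπ₀ := Real.pi_gt_d4
  have hπ₁ := Real.pi_lt_d4
  have hcos := Real.one_sub_sq_div_two_le_cos (x := 13 / 20)
  have hsin := Real.sin_gt_sub_cube (x := 13 / 20) (by norm_num)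
  have hcosρ := cos_le_neg_of_near_pi (ψ := ρ * (Real.pi + 13 / 20))
    (abs_le.2 ⟨by nlinarith, by nlinarith⟩)
  nlinarith

lemma one_le_of_schurShift_two (hρ : ρ ∈ Icc (2 / 3) (6852 / 10000))
    (hc : 241 / 2000 * (2 * Real.pi + 1) ≤ c) :
    1 ≤ 7 / 10 * Real.cos 1 + c * Real.sin 1 + 3 / 10 * Real.cos (ρ * (2 * Real.pi + 1)) := by
  obtain ⟨hρ₀, hρ₁⟩ := hρ
  have hπ₀ := Real.pi_gt_d4
  have hπ₁ := Real.pi_lt_d4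
  have hcos := Real.one_sub_sq_div_two_le_cos (x := 1)
  have hsin := Real.sin_gt_sub_cube (x := 1) (by norm_num)
  have hcosρ : 0 ≤ Real.cos (ρ * (2 * Real.pi + 1)) := by
    rw [← Real.cos_sub_two_pi]
    exact Real.cos_nonneg_of_mem_Icc ⟨by nlinarith, by nlinarith⟩
  nlinarith

lemma one_le_of_schurShift_of_three_le {j : ℕ} (hj : 3 ≤ j) (ψ : ℝ)
    (hc : 241 / 2000 * (j * Real.pi + 1) ≤ c) :
    1 ≤ 7 / 10 * Real.cos 1 + c * Real.sin 1 + 3 / 10 * ((-1) ^ j * Real.cos ψ) := by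
  have hj' : (3 : ℝ) ≤ j := by exact_mod_cast hj
  have hcos := Real.one_sub_sq_div_two_le_cos (x := 1)
  have hsin := Real.sin_gt_sub_cube (x := 1) (by norm_num)
  have hcosψ : -1 ≤ (-1) ^ j * Real.cos ψ :=
    neg_le_of_abs_le (by simpa [abs_mul] using Real.abs_cos_le_one ψ)
  have hc' : 12 / 10 ≤ c := by nlinarith [Real.pi_gt_d4]
  nlinarith

lemma one_le_of_schurShift (hρ : ρ ∈ Icc (2 / 3) (6852 / 10000)) (j : ℕ)
    (hc : 241 / 2000 * (j * Real.pi + schurShift j) ≤ c) :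
    1 ≤ 7 / 10 * Real.cos (schurShift j) + c * Real.sin (schurShift j)
      + 3 / 10 * ((-1) ^ j * Real.cos (ρ * (j * Real.pi + schurShift j))) := by
  match j with
  | 0 => norm_num [schurShift]
  | 1 => simpa [schurShift, sub_eq_add_neg] using
      one_le_of_schurShift_one hρ (by simpa [schurShift] using hc)
  | 2 => simpa [schurShift] using one_le_of_schurShift_two hρ (by simpa [schurShift] using hc)
  | j + 3 => exact one_le_of_schurShift_of_three_le (by omega) _ hc

lemma one_le_of_schurShift_node {m n j : ℕ} {γ : ℝ} (hγ : 241 / 1000 ≤ γ)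
    (hρ : (m / n : ℝ) ∈ Icc (2 / 3) (6852 / 10000)) (hj : j < n - 1) :
    1 ≤ 7 / 10 * Real.cos (schurShift j)
      + γ * (n * Real.tan ((j * Real.pi + schurShift j) / n / 2) * Real.sin (schurShift j))
      + (1 - 7 / 10) * ((-1) ^ j * Real.cos (m * ((j * Real.pi + schurShift j) / n))) := by
  have hj' : (j : ℝ) + 1 ≤ n := by exact_mod_cast (by omega : j + 1 ≤ n)
  have hn : (0 : ℝ) < n := by linarith
  have hδ₀ := schurShift_nonneg j
  have hcos : m * ((j * Real.pi + schurShift j) / n) = m / n * (j * Real.pi + schurShift j) := by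
    ring
  have hbound := one_le_of_schurShift hρ j (c := γ * (n * Real.tan
    ((j * Real.pi + schurShift j) / n / 2)))
  have hψ : 0 ≤ j * Real.pi + schurShift j := by positivity
  have hlt : (j * Real.pi + schurShift j) / n < Real.pi := by
    rw [div_lt_iff₀ hn]
    nlinarith [schurShift_le_one j, Real.pi_gt_three]
  generalize j * Real.pi + schurShift j = ψ at hψ hlt hcos hbound ⊢
  have htan : ψ / 2 ≤ n * Real.tan (ψ / n / 2) := by
    calc ψ / 2 = n * (ψ / n / 2) := by field_simp
      _ ≤ _ := by gcongr; exact Real.le_tan (by positivity) (by linarith)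
  rw [hcos]
  linarith [hbound (by nlinarith)]

end SchurShift

lemma chebDeriv_one_one (N : ℤ) : chebDeriv N 1 1 = (N : ℝ) ^ 2 := by
  simpa [chebDeriv_zero] using chebDeriv_succ_one N 0

lemma chebDeriv_two_one (N : ℤ) : chebDeriv N 2 1 = (N : ℝ) ^ 2 * (N ^ 2 - 1) / 3 := by
  have h := chebDeriv_succ_one N 1
  rw [chebDeriv_one_one] at h
  push_cast at h
  linarith

lemma chebDeriv_three_one (N : ℤ) :
    chebDeriv N 3 1 = (N : ℝ) ^ 2 * (N ^ 2 - 1) * (N ^ 2 - 4) / 15 := by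
  have h := chebDeriv_succ_one N 2
  rw [chebDeriv_two_one] at h
  push_cast at h
  linarith

section Ratio

variable {m n : ℕ}

lemma mul_chebDeriv_three_one_le (hn : 36 ≤ n) (hm : 2 * n ≤ 3 * m) :
    8 / 100 * chebDeriv n 3 1 ≤ chebDeriv m 3 1 := by
  have hn' : (36 : ℝ) ≤ n := by exact_mod_cast hn
  have hm' : 2 * (n : ℝ) ≤ 3 * m := by exact_mod_cast hm
  have hu : (1296 : ℝ) ≤ (n : ℝ) ^ 2 := by nlinarith
  have hv : 4 / 9 * (n : ℝ) ^ 2 ≤ (m : ℝ) ^ 2 := by nlinarith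
  rw [chebDeriv_three_one, chebDeriv_three_one, Int.cast_natCast, Int.cast_natCast]
  generalize (n : ℝ) ^ 2 = u at hu hv ⊢
  generalize (m : ℝ) ^ 2 = v at hv ⊢
  have hprod : 44 / 100 * u * (44 / 100 * (u - 1)) * (44 / 100 * (u - 4))
      ≤ v * (v - 1) * (v - 4) := by
    refine mul_le_mul (mul_le_mul ?_ ?_ ?_ ?_) ?_ ?_ (mul_nonneg ?_ ?_) <;> linarith
  have hpos : 0 ≤ u * (u - 1) * (u - 4) :=
    mul_nonneg (mul_nonneg (by linarith) (by linarith)) (by linarith)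
  linarith

lemma chebDeriv_two_one_le_mul (hn : 36 ≤ n) (hm₀ : 2 * n ≤ 3 * m) (hm₁ : 3 * m ≤ 2 * n + 2) :
    chebDeriv m 2 1 ≤ 2206 / 10000 * chebDeriv n 2 1 := by
  have hn' : (36 : ℝ) ≤ n := by exact_mod_cast hn
  have hm₀' : 2 * (n : ℝ) ≤ 3 * m := by exact_mod_cast hm₀
  have hm₁' : 3 * (m : ℝ) ≤ 2 * n + 2 := by exact_mod_cast hm₁
  have hu : (1296 : ℝ) ≤ (n : ℝ) ^ 2 := by nlinarith
  have hv₀ : 4 / 9 * (n : ℝ) ^ 2 ≤ (m : ℝ) ^ 2 := by nlinarith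
  have hv₁ : (m : ℝ) ^ 2 ≤ 4696 / 10000 * (n : ℝ) ^ 2 := by nlinarith
  rw [chebDeriv_two_one, chebDeriv_two_one, Int.cast_natCast, Int.cast_natCast]
  generalize (n : ℝ) ^ 2 = u at hu hv₀ hv₁ ⊢
  generalize (m : ℝ) ^ 2 = v at hv₀ hv₁ ⊢
  have hprod : v * (v - 1) ≤ 4696 / 10000 * u * (4696 / 10000 * (u - 1)) := by
    refine mul_le_mul ?_ ?_ ?_ ?_ <;> linarith
  have hpos : 0 ≤ u * (u - 1) := mul_nonneg (by linarith) (by linarith)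
  linarith

end Ratio

lemma mstar_two_one_le_of_large {n : ℕ} (hn : 36 ≤ n) :
    mstar n 2 1 (sigmaN n) ≤ 29 / 100 * chebDeriv n 2 1 := by
  obtain ⟨m, hm₀, hm₁⟩ : ∃ m, 2 * n ≤ 3 * m ∧ 3 * m ≤ 2 * n + 2 := ⟨(2 * n + 2) / 3, by omega⟩
  have hn' : (36 : ℝ) ≤ n := by exact_mod_cast hn
  have hm₀' : 2 * (n : ℝ) ≤ 3 * m := by exact_mod_cast hm₀
  have hm₁' : 3 * (m : ℝ) ≤ 2 * n + 2 := by exact_mod_cast hm₁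
  have hT₃ : 0 < chebDeriv n 3 1 := chebDeriv_one_pos (by omega)
  set w := chebDeriv m 3 1 / chebDeriv n 3 1
  have hw : 8 / 100 ≤ w := (le_div_iff₀ hT₃).2 (mul_chebDeriv_three_one_le hn hm₀)
  have hwT : w * chebDeriv n 3 1 = chebDeriv m 3 1 := div_mul_cancel₀ _ hT₃.ne'
  have hρ : (m / n : ℝ) ∈ Icc (2 / 3) (6852 / 10000) :=
    ⟨by rw [le_div_iff₀] <;> linarith, by rw [div_le_iff₀] <;> linarith⟩
  refine (mstar_one_le_of_schurWitness (m := m) (α := 7 / 10) (γ := (7 / 10 + 3 / 10 * w) / 3)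
    (by omega) (by omega) (sigmaN_pos n).le schurShift_nonneg schurShift_le_one
    (fun j => one_le_of_schurShift_node (by linarith) hρ) ?_ ?_).trans ?_
  · push_cast
    linear_combination (3 / 10) * hwT
  · exact le_mul_of_one_le_left (sigmaN_pos n).le (by nlinarith)
  · have := chebDeriv_two_one_le_mul hn hm₀ hm₁
    have hT₂ : 0 < chebDeriv n 2 1 := chebDeriv_one_pos (by omega)
    push_cast
    nlinarith

section ProdPow

variable {n k : ℕ}

lemma prod_range_pow_le_of_antitone {d : ℕ → ℝ} (hd : Antitone d) (h₀ : ∀ l < n, 0 ≤ d l)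
    (hk : k ≤ n) : (∏ l ∈ Finset.range n, d l) ^ k ≤ (∏ l ∈ Finset.range k, d l) ^ n := by
  induction n, hk using Nat.le_induction with
  | base => rfl
  | succ n hkn ih =>
    have hpos {j : ℕ} (hj : j ≤ n) : 0 ≤ ∏ l ∈ Finset.range j, d l :=
      Finset.prod_nonneg fun l hl => h₀ l (by grind)
    rw [Finset.prod_range_succ, mul_pow, pow_succ (∏ l ∈ Finset.range k, d l)]
    gcongr
    · exact pow_nonneg (h₀ n n.lt_succ_self) k
    · exact pow_nonneg (hpos hkn) n
    · exact ih fun l hl => h₀ l (by omega)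
    · calc d n ^ k = ∏ _l ∈ Finset.range k, d n := by simp
        _ ≤ _ := Finset.prod_le_prod (fun _ _ => h₀ n n.lt_succ_self)
          fun l hl => hd (by grind)

lemma exists_le_prod_sq_sub_sq (hn : n ≠ 0) (M : ℝ) :
    ∃ N : ℕ, n ≤ N ∧ M ≤ ∏ l ∈ Finset.range n, ((N : ℝ) ^ 2 - l ^ 2) := by
  obtain ⟨N, hN⟩ := exists_nat_ge (max M n)
  have hnN : n ≤ N := by exact_mod_cast (le_max_right _ _).trans hN
  have hN₁ : (1 : ℝ) ≤ N := by exact_mod_cast (Nat.one_le_iff_ne_zero.2 hn).trans hnN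
  refine ⟨N, hnN, ?_⟩
  calc M ≤ N := (le_max_left _ _).trans hN
    _ ≤ N ^ n := le_self_pow₀ hN₁ hn
    _ = ∏ _l ∈ Finset.range n, (N : ℝ) := by simp
    _ ≤ _ := Finset.prod_le_prod (fun _ _ => N.cast_nonneg) fun l hl => by
      have hl : (l : ℝ) + 1 ≤ N := by exact_mod_cast (Finset.mem_range.1 hl).trans_le hnN
      nlinarith [(l.cast_nonneg : (0 : ℝ) ≤ l)]

end ProdPow

section LowerBound

variable {n k : ℕ} {σ a c y : ℝ}

lemma pow_mul_chebDeriv_one_le_mval {ρ : ℝ} (hn : n ≠ 0) (hk : k ≤ n) (hρ₀ : 0 ≤ ρ) (hρ₁ : ρ ≤ 1)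
    (N : ℤ) : ρ ^ k * chebDeriv N k 1 ≤ mval n k 1 (ρ ^ n * chebDeriv N n 1) := by
  have h := (isAdmissible_chebDeriv N n).comp_affine_right_eq le_rfl hρ₀ (by linarith)
  simpa using (le_abs_self _).trans (h.abs_le_mval hn hk)

lemma exists_pow_mul_chebDeriv_one_eq (hn : n ≠ 0) (hσ : 0 ≤ σ) :
    ∃ N : ℕ, n ≤ N ∧ ∃ ρ ∈ Icc (0 : ℝ) 1, ρ ^ n * chebDeriv N n 1 = σ := by
  obtain ⟨N, hnN, hN⟩ := exists_le_prod_sq_sub_sq hn ((2 * n - 1)‼ * σ)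
  have hprod := doubleFactorial_mul_chebDeriv_one N n
  rw [Int.cast_natCast] at hprod
  have hσN : σ ≤ chebDeriv N n 1 :=
    le_of_mul_le_mul_left (hN.trans_eq hprod.symm) (by positivity)
  have hT : 0 < chebDeriv N n 1 := chebDeriv_one_pos hnN
  refine ⟨N, hnN, (σ / chebDeriv N n 1) ^ (n : ℝ)⁻¹, ⟨by positivity, ?_⟩, ?_⟩
  · exact Real.rpow_le_one (by positivity) ((div_le_one hT).2 hσN) (by positivity)
  · rw [Real.rpow_inv_natCast_pow (by positivity) hn, div_mul_cancel₀ _ hT.ne']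

/- The extremal functions are `T_N` composed with the affine maps that fix `1`, for `N` large. -/
lemma le_doubleFactorial_mul_mval (hn : n ≠ 0) (hk : k ≤ n) (hσ : 0 ≤ σ)
    (hy : y ^ n ≤ (σ * (2 * n - 1)‼) ^ k) : y ≤ (2 * k - 1)‼ * mval n k 1 σ := by
  obtain ⟨N, hnN, ρ, ⟨hρ₀, hρ₁⟩, rfl⟩ := exists_pow_mul_chebDeriv_one_eq hn hσ
  have hanti : Antitone fun l : ℕ => ((N : ℤ) : ℝ) ^ 2 - l ^ 2 := fun i j hij => by
    dsimp only
    gcongr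
  have hfactor : ∀ l < n, 0 ≤ ((N : ℤ) : ℝ) ^ 2 - l ^ 2 := fun l hl => by
    have : l ≤ N := by omega
    simp only [Int.cast_natCast, sub_nonneg]
    gcongr
  have hpow := prod_range_pow_le_of_antitone hanti hfactor hk
  rw [← doubleFactorial_mul_chebDeriv_one, ← doubleFactorial_mul_chebDeriv_one] at hpow
  have hTk := chebDeriv_one_nonneg N k
  have hyρ : y ^ n ≤ (ρ ^ k * ((2 * k - 1)‼ * chebDeriv N k 1)) ^ n :=
    calc y ^ n ≤ (ρ ^ n * chebDeriv N n 1 * (2 * n - 1)‼) ^ k := hy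
      _ = ρ ^ (k * n) * ((2 * n - 1)‼ * chebDeriv N n 1) ^ k := by ring
      _ ≤ ρ ^ (k * n) * ((2 * k - 1)‼ * chebDeriv N k 1) ^ n := by gcongr
      _ = (ρ ^ k * ((2 * k - 1)‼ * chebDeriv N k 1)) ^ n := by ring
  calc y ≤ ρ ^ k * ((2 * k - 1)‼ * chebDeriv N k 1) :=
        le_of_pow_le_pow_left₀ hn (by positivity) hyρ
    _ = (2 * k - 1)‼ * (ρ ^ k * chebDeriv N k 1) := by ring
    _ ≤ (2 * k - 1)‼ * mval n k 1 (ρ ^ n * chebDeriv N n 1) := by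
      gcongr
      exact pow_mul_chebDeriv_one_le_mval hn hk hρ₀ hρ₁ N

lemma sigmaN_mul_doubleFactorial (hn : n ≠ 0) :
    sigmaN n * (2 * n - 1)‼ = (2 * n)! / 2 := by
  obtain ⟨m, rfl⟩ := Nat.exists_eq_succ_of_ne_zero hn
  have h := Nat.factorial_eq_mul_doubleFactorial (2 * m + 1)
  rw [show 2 * m + 1 + 1 = 2 * (m + 1) by ring, Nat.doubleFactorial_two_mul] at h
  rw [h, sigmaN, show 2 * (m + 1) - 1 = 2 * m + 1 by omega]
  push_cast [Nat.add_sub_cancel]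
  ring

lemma mul_pow_mul_chebDeriv_one_le_mval (hn : n ≠ 0) (hk : k ≤ n) (ha : 0 ≤ a)
    (hc : (c * ((2 * k - 1)‼ * chebDeriv n k 1)) ^ n ≤ ((2 * n)! / 2) ^ k) :
    c * a ^ k * chebDeriv n k 1 ≤ mval n k 1 (a ^ n * sigmaN n) := by
  have hσ : 0 ≤ a ^ n * sigmaN n := mul_nonneg (pow_nonneg ha n) (sigmaN_pos n).le
  have hy : (a ^ k * (c * ((2 * k - 1)‼ * chebDeriv n k 1))) ^ n
      ≤ (a ^ n * sigmaN n * (2 * n - 1)‼) ^ k := by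
    rw [mul_assoc, sigmaN_mul_doubleFactorial hn, mul_pow, mul_pow (a ^ n), ← pow_mul, ← pow_mul,
      mul_comm n k]
    gcongr
  have h := le_doubleFactorial_mul_mval hn hk hσ hy
  refine le_of_mul_le_mul_left (h.trans_eq' ?_) (by positivity : (0 : ℝ) < (2 * k - 1)‼)
  ring

lemma chebDeriv_one_le_mval (hn : n ≠ 0) (hk : k ≤ n) (hσ : sigmaN n ≤ σ) :
    chebDeriv n k 1 ≤ mval n k 1 σ := by
  have h := isAdmissible_chebDeriv n n
  rw [chebDeriv_self] at h
  exact (le_abs_self _).trans ((h.mono hσ).abs_le_mval hn hk)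

lemma mul_sq_pow_le_factorial_two_mul (hn : n ≠ 0) :
    (541 / 1000 * (n : ℝ) ^ 2) ^ n ≤ (2 * n)! / 2 := by
  have hn₁ : (1 : ℝ) ≤ n := by exact_mod_cast Nat.one_le_iff_ne_zero.2 hn
  have hsqrt : 2 ≤ √(2 * Real.pi * (2 * n : ℕ)) := by
    apply Real.le_sqrt_of_sq_le
    push_cast
    nlinarith [Real.pi_gt_three]
  have hexp : Real.exp 1 ^ 2 ≤ 7.3891 := by nlinarith [Real.exp_one_lt_d9, Real.exp_pos 1]
  have hbase : (541 / 1000 * (n : ℝ) ^ 2) ^ n ≤ ((2 * n : ℕ) / Real.exp 1) ^ (2 * n) := by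
    rw [pow_mul]
    gcongr
    rw [div_pow, le_div_iff₀ (by positivity)]
    push_cast
    nlinarith [sq_nonneg (n : ℝ)]
  rw [le_div_iff₀' two_pos]
  calc 2 * (541 / 1000 * (n : ℝ) ^ 2) ^ n
      ≤ √(2 * Real.pi * (2 * n : ℕ)) * ((2 * n : ℕ) / Real.exp 1) ^ (2 * n) := by gcongr
    _ ≤ (2 * n)! := Stirling.le_factorial_stirling (2 * n)

end LowerBound

lemma hasDerivAt_eq_zero_of_isLocalMax_abs {f : ℝ → ℝ} {f' x : ℝ} (hf : HasDerivAt f f' x)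
    (hmax : IsLocalMax (fun y => |f y|) x) : f' = 0 := by
  rcases le_total 0 (f x) with hfx | hfx
  · have : IsLocalMax f x := hmax.mono fun y hy =>
      (le_abs_self _).trans (hy.trans_eq (abs_of_nonneg hfx))
    exact this.hasDerivAt_eq_zero hf
  · have : IsLocalMin f x := hmax.mono fun y hy => by
      dsimp only at hy
      rw [abs_of_nonpos hfx] at hy
      linarith [neg_abs_le (f y)]
    exact this.hasDerivAt_eq_zero hf

lemma mval_nonneg (n k : ℕ) (x σ : ℝ) : 0 ≤ mval n k x σ := by
  apply Real.sSup_nonneg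
  rintro _ ⟨f, -, rfl⟩
  exact abs_nonneg _

lemma abs_le_mval_of_forall_nonneg_critical {n k : ℕ} {σ : ℝ} {F : ℕ → ℝ → ℝ} {x₀ : ℝ}
    (hk : k + 1 ≤ n) (hcrit : ∀ F, IsAdmissible n σ F → ∀ x ∈ Ico (0 : ℝ) 1, F (k + 1) x = 0 →
      |F k x| ≤ mval n k 1 σ) (h : IsAdmissible n σ F) (hx₀ : x₀ ∈ Icc (-1) 1)
    (hF : x₀ ∈ Ioo (-1) 1 → F (k + 1) x₀ = 0) : |F k x₀| ≤ mval n k 1 σ := by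
  wlog hpos : 0 ≤ x₀ generalizing F x₀
  · simpa [abs_mul] using this (x₀ := -x₀) h.comp_neg (neg_mem_Icc_iff.2 (by simpa using hx₀))
      (fun hx => by simpa using hF (by simpa [and_comm, neg_lt] using hx)) (by linarith)
  rcases hx₀.2.lt_or_eq with hlt | rfl
  · exact hcrit F h x₀ ⟨hpos, hlt⟩ (hF ⟨by linarith, hlt⟩)
  · exact h.abs_le_mval (by omega) (by omega)

lemma mval_le_mval_one_of_forall_critical {n k : ℕ} {σ x : ℝ} (hk : k + 1 ≤ n)
    (hcrit : ∀ F, IsAdmissible n σ F → ∀ x₀ ∈ Ico (0 : ℝ) 1, F (k + 1) x₀ = 0 →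
      |F k x₀| ≤ mval n k 1 σ) (hx : x ∈ Icc (-1) 1) : mval n k x σ ≤ mval n k 1 σ := by
  refine Real.sSup_le ?_ (mval_nonneg n k 1 σ)
  rintro _ ⟨f, hf, rfl⟩
  have h := isAdmissible_of_memW hf
  obtain ⟨x₀, hx₀, hmax⟩ := isCompact_Icc.exists_isMaxOn (nonempty_of_mem hx)
    (h.isDerivChain.continuousOn (Nat.lt_of_succ_le hk)).abs
  refine (hmax hx).trans (abs_le_mval_of_forall_nonneg_critical hk hcrit h hx₀ fun hx₀' => ?_)
  have hnhds := Icc_mem_nhds hx₀'.1 hx₀'.2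
  exact hasDerivAt_eq_zero_of_isLocalMax_abs ((h.isDerivChain k hk x₀ hx₀).hasDerivAt hnhds)
    (hmax.isLocalMax hnhds)

namespace IsAdmissible

variable {n k : ℕ} {a c x₀ τ : ℝ} {F : ℕ → ℝ → ℝ}

/- The admissible functions are compared on `[x₀ - 2 * β, x₀]`, where `β = τ / a`. -/
lemma abs_le_mval_of_far (h : IsAdmissible n (a ^ n * sigmaN n) F) (hk : k + 1 ≤ n)
    (hF : F (k + 1) x₀ = 0) (hx₀ : x₀ ≤ 1) (ha : 0 < a) (hτ : 0 < τ)
    (hfar : τ ≤ (1 + x₀) / 2 * a)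
    (hstar : mstar n k 1 (τ ^ n * sigmaN n) ≤ τ ^ k * (c * chebDeriv n k 1))
    (hc : (c * ((2 * k - 1)‼ * chebDeriv n k 1)) ^ n ≤ ((2 * n)! / 2) ^ k) :
    |F k x₀| ≤ mval n k 1 (a ^ n * sigmaN n) := by
  have hscale := h.pow_mul_abs_le_mstar hk hF hx₀ (β := τ / a) (by positivity)
    ((div_le_iff₀ ha).2 hfar)
  rw [← mul_assoc, ← mul_pow, div_mul_cancel₀ _ ha.ne', div_pow, div_mul_eq_mul_div] at hscale
  have hle := (div_le_iff₀ (by positivity)).1 (hscale.trans hstar)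
  refine le_trans ?_ (mul_pow_mul_chebDeriv_one_le_mval (by omega) (Nat.le_of_succ_le hk) ha.le hc)
  exact le_of_mul_le_mul_left (hle.trans_eq (by ring)) (pow_pos hτ k)

lemma abs_le_chebDeriv_one_of_near (h : IsAdmissible n (a ^ n * sigmaN n) F) (hk : k + 2 ≤ n)
    (hF : F (k + 1) x₀ = 0) (hx₀ : x₀ ∈ Icc (-1) 1) (ha : 0 ≤ a) (hnear : (1 + x₀) / 2 * a ≤ τ)
    (hτ : τ ^ n ≤ n / (k + 1) - 1) (hβ : 1 / (k + 1) ≤ ((1 + x₀) / 2) ^ k) :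
    |F k x₀| ≤ chebDeriv n k 1 := by
  have hβ₀ : 0 ≤ (1 + x₀) / 2 := by linarith [hx₀.1]
  have hscale := h.pow_mul_abs_le_mstar (by omega) hF hx₀.2 hβ₀ le_rfl
  rw [← mul_assoc, ← mul_pow] at hscale
  have hσ := (sigmaN_pos n).le
  have hstar := mstar_one_le_chebDeriv_div hk (s := ((1 + x₀) / 2 * a) ^ n * sigmaN n)
    (by positivity) (by
      gcongr
      exact (pow_le_pow_left₀ (by positivity) hnear n).trans hτ)
  refine le_of_mul_le_mul_left (a := (1 / (k + 1) : ℝ)) ?_ (by positivity)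
  calc 1 / (k + 1) * |F k x₀| ≤ ((1 + x₀) / 2) ^ k * |F k x₀| := by gcongr
    _ ≤ chebDeriv n k 1 / (k + 1) := hscale.trans hstar
    _ = 1 / (k + 1) * chebDeriv n k 1 := by ring

lemma abs_one_le_mval_of_le (h : IsAdmissible n (a ^ n * sigmaN n) F) (hn : 3 ≤ n) (ha : 1 ≤ a)
    (hx₀ : x₀ ∈ Ico (0 : ℝ) 1) (hF : F 2 x₀ = 0) (hτ₀ : 0 < τ) (hτ : τ ^ n ≤ n / 2 - 1)
    (hτc : 1 / 2 ≤ τ * c) (hc : (c * n ^ 2) ^ n ≤ (2 * n)! / 2) :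
    |F 1 x₀| ≤ mval n 1 1 (a ^ n * sigmaN n) := by
  have hσ := sigmaN_pos n
  obtain ⟨hx₀_nonneg, hx₀_lt⟩ := hx₀
  have hτ' : τ ^ n ≤ n / ((1 : ℕ) + 1) - 1 := by
    rwa [Nat.cast_one, one_add_one_eq_two]
  rcases le_total τ ((1 + x₀) / 2 * a) with hfar | hnear
  · refine h.abs_le_mval_of_far (by omega) hF hx₀_lt.le (by linarith) hτ₀ hfar (c := c) ?_
      (by simpa [chebDeriv_one_one] using hc)
    refine (mstar_one_le_chebDeriv_div hn (by positivity) (by gcongr)).trans ?_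
    rw [pow_one, ← mul_assoc, div_eq_inv_mul]
    gcongr
    · exact chebDeriv_one_nonneg n 1
    · norm_num at hτc ⊢
      exact hτc
  · refine (h.abs_le_chebDeriv_one_of_near hn hF ⟨by linarith, hx₀_lt.le⟩ (by linarith) hnear hτ'
      (by norm_num; linarith)).trans ?_
    exact chebDeriv_one_le_mval (by omega) (by omega) (le_mul_of_one_le_left hσ.le (one_le_pow₀ ha))

lemma abs_one_le_mval (h : IsAdmissible n (a ^ n * sigmaN n) F) (hn : 3 ≤ n) (ha : 1 ≤ a)
    (hx₀ : x₀ ∈ Ico (0 : ℝ) 1) (hF : F 2 x₀ = 0) : |F 1 x₀| ≤ mval n 1 1 (a ^ n * sigmaN n) := by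
  rcases hn.eq_or_lt with rfl | hn
  · exact h.abs_one_le_mval_of_le (τ := 79 / 100) (c := 64 / 100) le_rfl ha hx₀ hF (by norm_num)
      (by norm_num) (by norm_num) (by norm_num [Nat.factorial])
  · have hn' : (4 : ℝ) ≤ n := by exact_mod_cast hn
    refine h.abs_one_le_mval_of_le (τ := 1) (c := 1 / 2) hn.le ha hx₀ hF one_pos
      (by rw [one_pow]; linarith) (by norm_num) (le_trans ?_ (mul_sq_pow_le_factorial_two_mul ?_))
    · exact pow_le_pow_left₀ (by positivity) (by linarith [sq_nonneg (n : ℝ)]) n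
    · omega

end IsAdmissible

section SecondDerivative

variable {n m : ℕ} {a c t x₀ τ B : ℝ} {F : ℕ → ℝ → ℝ}

lemma chebDeriv_six_one_le (hn : 6 ≤ n) : chebDeriv n 6 1 ≤ (n : ℝ) ^ 12 / 10395 := by
  have hprod := doubleFactorial_mul_chebDeriv_one n 6
  have hle : ∏ l ∈ Finset.range 6, (((n : ℤ) : ℝ) ^ 2 - (l : ℝ) ^ 2) ≤
      ∏ l ∈ Finset.range 6, (n : ℝ) ^ 2 := by
    refine Finset.prod_le_prod (fun l hl => ?_) fun l _ => by simp
    have : (l : ℝ) ≤ n := by exact_mod_cast (Finset.mem_range.1 hl).le.trans hn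
    simpa using pow_le_pow_left₀ l.cast_nonneg this 2
  rw [← hprod, Finset.prod_const, Finset.card_range, ← pow_mul] at hle
  norm_num [Nat.doubleFactorial] at hle
  linarith

lemma exists_mstar_two_one_le_mul (hn : 6 ≤ n) :
    ∃ c, mstar n 2 1 (sigmaN n) ≤ c * chebDeriv n 2 1 ∧
      (c * ((n : ℝ) ^ 2 * (n ^ 2 - 1))) ^ n ≤ ((2 * n)! / 2) ^ 2 := by
  have hn' : (6 : ℝ) ≤ n := by exact_mod_cast hn
  have hσ := sigmaN_pos n
  rcases lt_or_ge n 36 with hn₃₆ | hn₃₆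
  · refine ⟨1 / 3, ?_, by interval_cases n <;> norm_num [Nat.factorial]⟩
    convert mstar_one_le_chebDeriv_div (k := 2) (by omega) hσ.le
      (le_mul_of_one_le_left hσ.le ?_) using 1
    · push_cast
      ring
    · push_cast
      linarith
  · refine ⟨29 / 100, mstar_two_one_le_of_large hn₃₆, le_trans ?_ (pow_le_pow_left₀ (by positivity)
      (mul_sq_pow_le_factorial_two_mul (by omega)) 2)⟩
    rw [← pow_mul, mul_comm n 2, pow_mul]
    refine pow_le_pow_left₀ (mul_nonneg (by norm_num) (mul_nonneg (by positivity) ?_)) ?_ n <;>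
      nlinarith

namespace IsAdmissible

/- The combination `16 (F (x₀ + t) + F (x₀ - t)) - (F (x₀ + 2 t) + F (x₀ - 2 t)) - 30 F x₀` is
`12 t ^ 2 F'' x₀` up to terms of order six. -/
lemma sq_mul_abs_two_le (h : IsAdmissible m B F) (hm₄ : 4 ≤ m) (hm₆ : m ≤ 6) (ht : 0 ≤ t)
    (hx₁ : -1 ≤ x₀ - 2 * t) (hx₂ : x₀ + 2 * t ≤ 1) :
    12 * t ^ 2 * |F 2 x₀| ≤ 64 + 2 * B * t ^ m * (16 + 2 ^ m) / m ! := by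
  have taylor : ∀ d : ℝ, |d| ≤ 2 * t → |F 0 (x₀ + d)| ≤ 1 ∧
      |F 0 (x₀ + d) - ∑ i ∈ Finset.range m, F i x₀ * d ^ i / i !| ≤ B * |d| ^ m / m ! := by
    intro d hd
    obtain ⟨hd₁, hd₂⟩ := _root_.abs_le.1 hd
    have hmem : x₀ + d ∈ Icc (-1 : ℝ) 1 := ⟨by linarith, by linarith⟩
    have hsub : uIcc x₀ (x₀ + d) ⊆ Icc (-1) 1 :=
      uIcc_subset_Icc ⟨by linarith, by linarith⟩ hmem
    refine ⟨h.abs_le_one _ hmem, ?_⟩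
    simpa using h.isDerivChain.abs_sub_taylor_le hsub fun y hy => h.abs_le y (hsub hy)
  obtain ⟨b₁, t₁⟩ := taylor t (by rw [abs_of_nonneg ht]; linarith)
  obtain ⟨b₂, t₂⟩ := taylor (-t) (by rw [abs_neg, abs_of_nonneg ht]; linarith)
  obtain ⟨b₃, t₃⟩ := taylor (2 * t) (by rw [abs_of_nonneg (by positivity)])
  obtain ⟨b₄, t₄⟩ := taylor (-(2 * t)) (by rw [abs_neg, abs_of_nonneg (by positivity)])
  have b₀ := h.abs_le_one x₀ ⟨by linarith, by linarith⟩
  simp only [abs_neg, abs_mul, Nat.abs_ofNat, abs_of_nonneg ht] at t₁ t₂ t₃ t₄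
  rw [← abs_of_nonneg (show 0 ≤ 12 * t ^ 2 by positivity), ← abs_mul, _root_.abs_le]
  rw [_root_.abs_le] at b₀ b₁ b₂ b₃ b₄ t₁ t₂ t₃ t₄
  interval_cases m <;>
  · simp only [Finset.sum_range_succ, Finset.sum_range_zero, Nat.factorial] at t₁ t₂ t₃ t₄ ⊢
    push_cast at t₁ t₂ t₃ t₄ ⊢
    ring_nf at t₁ t₂ t₃ t₄ b₁ b₂ b₃ b₄ ⊢
    constructor <;> linarith

lemma abs_two_le_mval_of_le (h : IsAdmissible n (a ^ n * sigmaN n) F) (hn : 4 ≤ n) (ha : 1 ≤ a)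
    (hx₀ : x₀ ∈ Ico (0 : ℝ) 1) (hF : F 3 x₀ = 0) (hτ₀ : 0 < τ) (hτ : τ ^ n ≤ n / 3 - 1)
    (hstar : mstar n 2 1 (τ ^ n * sigmaN n) ≤ τ ^ 2 * (c * chebDeriv n 2 1))
    (hc : (c * ((n : ℝ) ^ 2 * (n ^ 2 - 1))) ^ n ≤ ((2 * n)! / 2) ^ 2)
    (hcentral : x₀ ≤ 16 / 100 → a ≤ 2 * τ → |F 2 x₀| ≤ chebDeriv n 2 1) :
    |F 2 x₀| ≤ mval n 2 1 (a ^ n * sigmaN n) := by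
  obtain ⟨hx₀_nonneg, hx₀_lt⟩ := hx₀
  rcases le_total τ ((1 + x₀) / 2 * a) with hfar | hnear
  · refine h.abs_le_mval_of_far (by omega) hF hx₀_lt.le (by linarith) hτ₀ hfar hstar ?_
    have : ((2 * 2 - 1)‼ : ℝ) * chebDeriv n 2 1 = (n : ℝ) ^ 2 * (n ^ 2 - 1) := by
      norm_num [chebDeriv_two_one, Nat.doubleFactorial]
      ring
    rwa [this]
  · refine le_trans ?_ (chebDeriv_one_le_mval (by omega) (by omega)
      (le_mul_of_one_le_left (sigmaN_pos n).le (one_le_pow₀ ha)))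
    rcases le_or_gt (4 / 3) ((1 + x₀) ^ 2) with hx | hx
    · exact h.abs_le_chebDeriv_one_of_near hn hF ⟨by linarith, hx₀_lt.le⟩ (by linarith) hnear
        (by push_cast; linarith) (by push_cast; linarith)
    · exact hcentral (by nlinarith) (by nlinarith)

lemma abs_two_le_chebDeriv_one_of_four (h : IsAdmissible 4 (a ^ 4 * sigmaN 4) F)
    (hx₀ : x₀ ∈ Icc (0 : ℝ) (16 / 100)) (ha₀ : 0 ≤ a) (ha : a ≤ 1518 / 1000) :
    |F 2 x₀| ≤ chebDeriv 4 2 1 := by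
  have hrule := h.sq_mul_abs_two_le (x₀ := x₀) le_rfl (by norm_num) (t := 2 / 5) (by norm_num)
    (by linarith [hx₀.1]) (by linarith [hx₀.2])
  have hpow := pow_le_pow_left₀ ha₀ ha 4
  norm_num [Nat.factorial, sigmaN, chebDeriv_two_one] at hrule hpow ⊢
  linarith

lemma abs_two_le_chebDeriv_one_of_five (h : IsAdmissible 5 (a ^ 5 * sigmaN 5) F)
    (hx₀ : x₀ ∈ Icc (0 : ℝ) (16 / 100)) (ha₀ : 0 ≤ a) (ha : a ≤ 184 / 100) :
    |F 2 x₀| ≤ chebDeriv 5 2 1 := by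
  have hrule := h.sq_mul_abs_two_le (x₀ := x₀) (by norm_num) (by norm_num) (t := 1 / 4)
    (by norm_num) (by linarith [hx₀.1]) (by linarith [hx₀.2])
  have hpow := pow_le_pow_left₀ ha₀ ha 5
  norm_num [Nat.factorial, sigmaN, chebDeriv_two_one] at hrule hpow ⊢
  linarith

/- Half of the interval always lies on one side of `x₀`. -/
lemma abs_le_two_pow_mul_chebDeriv_one {j : ℕ} (h : IsAdmissible n (a ^ n * sigmaN n) F)
    (hj : j ≤ n) (hx₀ : x₀ ∈ Icc (-1) 1) (ha₀ : 0 ≤ a) (ha : a ≤ 2) :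
    |F j x₀| ≤ 2 ^ j * chebDeriv n j 1 := by
  wlog hpos : 0 ≤ x₀ generalizing F x₀
  · simpa [abs_mul] using this (x₀ := -x₀) h.comp_neg (neg_mem_Icc_iff.2 (by simpa using hx₀))
      (by linarith)
  have hmarkov := h.pow_mul_abs_le_chebDeriv_one hj hx₀.2 (β := 1 / 2) (by norm_num)
    (by linarith) (by
      rw [← mul_assoc, ← mul_pow]
      exact mul_le_of_le_one_left (sigmaN_pos n).le (pow_le_one₀ (by positivity) (by linarith)))
  rw [one_div, inv_pow, inv_mul_le_iff₀ (by positivity)] at hmarkov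
  exact hmarkov

lemma abs_two_le_chebDeriv_one_of_six_le (h : IsAdmissible n (a ^ n * sigmaN n) F) (hn : 6 ≤ n)
    (hx₀ : x₀ ∈ Icc (0 : ℝ) (16 / 100)) (ha₀ : 0 ≤ a) (ha : a ≤ 2) :
    |F 2 x₀| ≤ chebDeriv n 2 1 := by
  have hn' : (36 : ℝ) ≤ (n : ℝ) ^ 2 := by
    have : (6 : ℝ) ≤ n := by exact_mod_cast hn
    nlinarith
  have h₆ : IsAdmissible 6 (2 ^ 6 * chebDeriv n 6 1) F :=
    ⟨h.isDerivChain.of_le hn, h.abs_le_one,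
      fun x hx => h.abs_le_two_pow_mul_chebDeriv_one hn hx ha₀ ha⟩
  obtain ⟨t, ht⟩ : ∃ t : ℝ, t * n ^ 2 = 5 := ⟨5 / n ^ 2, div_mul_cancel₀ _ (by positivity)⟩
  have ht₀ : 0 ≤ t := by nlinarith
  have hrule := h₆.sq_mul_abs_two_le (x₀ := x₀) (by norm_num) le_rfl ht₀ (by nlinarith [hx₀.1])
    (by nlinarith [hx₀.2])
  have hsix : t ^ 6 * chebDeriv n 6 1 ≤ 5 ^ 6 / 10395 := by
    calc t ^ 6 * chebDeriv n 6 1 ≤ t ^ 6 * ((n : ℝ) ^ 12 / 10395) := by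
          gcongr
          exact chebDeriv_six_one_le hn
      _ = (t * n ^ 2) ^ 6 / 10395 := by ring
      _ = 5 ^ 6 / 10395 := by rw [ht]
  have hsq : 12 * t ^ 2 * |F 2 x₀| ≤ 854 / 10 := by
    norm_num [Nat.factorial] at hrule hsix
    linarith
  rw [chebDeriv_two_one, Int.cast_natCast]
  calc |F 2 x₀| = (n ^ 2) ^ 2 / (12 * (t * n ^ 2) ^ 2) * (12 * t ^ 2 * |F 2 x₀|) := by
        rw [ht]; linear_combination (-|F 2 x₀| / 25) * (t * n ^ 2 + 5) * ht
    _ ≤ (n ^ 2) ^ 2 / (12 * 5 ^ 2) * (854 / 10) := by rw [ht]; gcongr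
    _ ≤ (n : ℝ) ^ 2 * (n ^ 2 - 1) / 3 := by nlinarith

lemma abs_two_le_mval (h : IsAdmissible n (a ^ n * sigmaN n) F) (hn : 4 ≤ n) (ha : 1 ≤ a)
    (hx₀ : x₀ ∈ Ico (0 : ℝ) 1) (hF : F 3 x₀ = 0) : |F 2 x₀| ≤ mval n 2 1 (a ^ n * sigmaN n) := by
  have ha₀ : 0 ≤ a := by linarith
  have hσ₄ := sigmaN_pos 4
  have hσ₅ := sigmaN_pos 5
  rcases hn.eq_or_lt with rfl | hn₅
  · refine h.abs_two_le_mval_of_le (τ := 759 / 1000) (c := 59 / 100) hn ha hx₀ hF (by norm_num)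
      (by norm_num) ?_ (by norm_num [Nat.factorial])
      fun hx ha => h.abs_two_le_chebDeriv_one_of_four ⟨hx₀.1, hx⟩ ha₀ (by linarith)
    refine (mstar_one_le_chebDeriv_div hn (by positivity) (by gcongr; norm_num)).trans ?_
    norm_num [chebDeriv_two_one]
  rcases (Nat.succ_le_of_lt hn₅).eq_or_lt with rfl | hn₆
  · refine h.abs_two_le_mval_of_le (τ := 92 / 100) (c := 394 / 1000) hn ha hx₀ hF (by norm_num)
      (by norm_num) ?_ (by norm_num [Nat.factorial])
      fun hx ha => h.abs_two_le_chebDeriv_one_of_five ⟨hx₀.1, hx⟩ ha₀ (by linarith)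
    refine (mstar_one_le_chebDeriv_div hn (by positivity) (by gcongr; norm_num)).trans ?_
    norm_num [chebDeriv_two_one]
  have hn₆' : (6 : ℝ) ≤ n := by exact_mod_cast hn₆
  obtain ⟨c, hstar, hc⟩ := exists_mstar_two_one_le_mul hn₆
  exact h.abs_two_le_mval_of_le (τ := 1) hn ha hx₀ hF one_pos (by rw [one_pow]; linarith)
    (by simpa using hstar) hc
    fun hx ha => h.abs_two_le_chebDeriv_one_of_six_le hn₆ ⟨hx₀.1, hx⟩ ha₀ (by linarith)

end IsAdmissible

end SecondDerivative

section ThirdOrder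

namespace IsAdmissible

variable {a x₀ B : ℝ} {F : ℕ → ℝ → ℝ}

lemma convexOn_sub_cubic (h : IsAdmissible 3 B F) (hx₀ : x₀ ≤ 1) :
    ConvexOn ℝ (Icc (-1) x₀) fun x => F 0 x -
      (F 0 x₀ + F 1 x₀ * (x - x₀) + F 2 x₀ / 2 * (x - x₀) ^ 2 + B / 6 * (x - x₀) ^ 3) := by
  have hsub : Icc (-1) x₀ ⊆ Icc (-1 : ℝ) 1 := Icc_subset_Icc_right hx₀
  have hcont := (h.isDerivChain.continuousOn (i := 0) (by norm_num)).mono hsub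
  have hderiv {i : ℕ} (hi : i < 3) {x : ℝ} (hx : x ∈ interior (Icc (-1) x₀)) :
      HasDerivWithinAt (F i) (F (i + 1) x) (interior (Icc (-1) x₀)) x :=
    (h.isDerivChain i hi x (hsub (interior_subset hx))).mono (interior_subset.trans hsub)
  have hlin (x : ℝ) : HasDerivAt (fun x => x - x₀) 1 x := (hasDerivAt_id x).sub_const x₀
  refine convexOn_of_hasDerivWithinAt2_nonneg (convex_Icc _ _) (by fun_prop)
    (f' := fun x => F 1 x - (F 1 x₀ + F 2 x₀ * (x - x₀) + B / 2 * (x - x₀) ^ 2))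
    (f'' := fun x => F 2 x - (F 2 x₀ + B * (x - x₀))) (fun x hx => ?_) (fun x hx => ?_)
    fun x hx => ?_
  · refine ((hderiv (i := 0) (by norm_num) hx).sub (((((hlin x).const_mul (F 1 x₀)).const_add
      (F 0 x₀)).add (((hlin x).pow 2).const_mul (F 2 x₀ / 2))).add
      (((hlin x).pow 3).const_mul (B / 6))).hasDerivWithinAt).congr_deriv ?_
    push_cast
    ring
  · refine ((hderiv (i := 1) (by norm_num) hx).sub ((((hlin x).const_mul (F 2 x₀)).const_add
      (F 1 x₀)).add (((hlin x).pow 2).const_mul (B / 2))).hasDerivWithinAt).congr_deriv ?_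
    push_cast
    ring
  · rw [interior_Icc] at hx
    obtain ⟨ξ, hξ, hslope⟩ := h.isDerivChain.exists_slope_eq (i := 2) (by norm_num) hx.2
      (Icc_subset_Icc hx.1.le hx₀)
    have hB := le_of_abs_le (h.abs_le ξ ⟨hx.1.le.trans hξ.1.le, hξ.2.le.trans hx₀⟩)
    nlinarith [hx.2]

/- At `x₀ = 1` equality holds for `T₃`, whose extrema are `1`, `1 / 2`, `-1 / 2` and `-1`. -/
lemma two_le_of_half_lt (h : IsAdmissible 3 24 F) (hx₀ : x₀ ∈ Ioc (1 / 2 : ℝ) 1) : F 2 x₀ ≤ 24 := by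
  obtain ⟨hx₀_half, hx₀_le⟩ := hx₀
  have taylor {x : ℝ} (hx : x ∈ Icc (-1 : ℝ) 1) :=
    h.isDerivChain.abs_sub_taylor_le (uIcc_subset_Icc ⟨by linarith, hx₀_le⟩ hx)
      fun y hy => h.abs_le y (uIcc_subset_Icc ⟨by linarith, hx₀_le⟩ hx hy)
  obtain ⟨R, hR⟩ : ∃ R : ℝ → ℝ, R = fun x => F 0 x -
    (F 0 x₀ + F 1 x₀ * (x - x₀) + F 2 x₀ / 2 * (x - x₀) ^ 2 + 24 / 6 * (x - x₀) ^ 3) := ⟨_, rfl⟩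
  have hconv : ConvexOn ℝ (Icc (-1) x₀) R := hR ▸ h.convexOn_sub_cubic hx₀_le
  have hR_self : R x₀ = 0 := by simp [hR]
  have hR_nonneg : 0 ≤ R (-1 / 2) := by
    have hneg := (_root_.abs_le.1 (taylor (x := -1 / 2) (by norm_num))).1
    rw [abs_of_nonpos (by linarith)] at hneg
    norm_num [Finset.sum_range_succ, Nat.factorial] at hneg
    norm_num [hR]
    linarith
  have hR_third : 3 * R (1 / 2) ≤ R (-1 / 2) := by
    have hslope := hconv.slope_mono_adjacent (x := -1 / 2) (y := 1 / 2)
      ⟨by norm_num, by linarith⟩ ⟨by linarith, le_rfl⟩ (by norm_num) hx₀_half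
    rw [div_le_div_iff₀ (by norm_num) (by linarith), hR_self] at hslope
    nlinarith
  have hone := (_root_.abs_le.1 (taylor (x := 1) (by simp))).1
  rw [abs_of_nonneg (by linarith)] at hone
  norm_num [Finset.sum_range_succ, Nat.factorial] at hone
  have b₁ := (_root_.abs_le.1 (h.abs_le_one 1 (by simp))).2
  have b₂ := (_root_.abs_le.1 (h.abs_le_one (1 / 2) (by norm_num))).1
  have b₃ := (_root_.abs_le.1 (h.abs_le_one (-1 / 2) (by norm_num))).2
  have hcubic : F 2 x₀ ≤ 24 - 24 * (1 - x₀) + 64 / 3 * (1 - x₀) ^ 3 := by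
    simp only [hR] at hR_third
    linarith
  nlinarith [sq_nonneg (1 - x₀), mul_nonneg (sub_nonneg.2 hx₀_le) (sub_nonneg.2 hx₀_half.le)]

lemma abs_two_le_of_nonneg_le_half (h : IsAdmissible 3 24 F) (hx₀ : x₀ ∈ Icc (0 : ℝ) (1 / 2)) :
    |F 2 x₀| ≤ 24 := by
  obtain ⟨hx₀_nonneg, hx₀_half⟩ := hx₀
  have taylor {x : ℝ} (hx : x ∈ Icc (-1 : ℝ) 1) := _root_.abs_le.1
    (h.isDerivChain.abs_sub_taylor_le (uIcc_subset_Icc ⟨by linarith, by linarith⟩ hx)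
      fun y hy => h.abs_le y (uIcc_subset_Icc ⟨by linarith, by linarith⟩ hx hy))
  have t₁ := taylor (x := x₀ + 1 / 2) ⟨by linarith, by linarith⟩
  have t₂ := taylor (x := x₀ - 1 / 2) ⟨by linarith, by linarith⟩
  have b₀ := _root_.abs_le.1 (h.abs_le_one x₀ ⟨by linarith, by linarith⟩)
  have b₁ := _root_.abs_le.1 (h.abs_le_one (x₀ + 1 / 2) ⟨by linarith, by linarith⟩)
  have b₂ := _root_.abs_le.1 (h.abs_le_one (x₀ - 1 / 2) ⟨by linarith, by linarith⟩)
  norm_num [Finset.sum_range_succ, Nat.factorial] at t₁ t₂ b₁ b₂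
  exact _root_.abs_le.2 ⟨by linarith, by linarith⟩

lemma abs_two_le_of_three (h : IsAdmissible 3 24 F) (hx₀ : x₀ ∈ Icc (-1 : ℝ) 1) :
    |F 2 x₀| ≤ 24 := by
  wlog hpos : 0 ≤ x₀ generalizing F x₀
  · simpa using this (x₀ := -x₀) h.comp_neg (neg_mem_Icc_iff.2 (by simpa using hx₀)) (by linarith)
  rcases le_or_gt x₀ (1 / 2) with hhalf | hhalf
  · exact h.abs_two_le_of_nonneg_le_half ⟨hpos, hhalf⟩
  · exact _root_.abs_le.2 ⟨neg_le.1 (h.neg.two_le_of_half_lt ⟨hhalf, hx₀.2⟩),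
      h.two_le_of_half_lt ⟨hhalf, hx₀.2⟩⟩

/- The substitution maps `[-1, 1]` onto the subinterval of length `2 / a` in which `x₀` has the same
relative position. -/
lemma abs_two_le_mul_sq_of_three (h : IsAdmissible 3 (a ^ 3 * sigmaN 3) F) (ha : 1 ≤ a)
    (hx₀ : x₀ ∈ Icc (-1 : ℝ) 1) : |F 2 x₀| ≤ a ^ 2 * 24 := by
  have ha₀ : 0 < a := by linarith
  have hmaps : MapsTo (fun x => a⁻¹ * x + (1 - a⁻¹) * x₀) (Icc (-1) 1) (Icc (-1) 1) :=
    fun x hx => (convex_Icc (-1) 1) hx hx₀ (inv_nonneg.2 ha₀.le)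
      (sub_nonneg.2 (inv_le_one_of_one_le₀ ha)) (by ring)
  have hscale := h.comp_affine hmaps
  rw [abs_of_pos (by positivity), inv_pow, inv_mul_cancel_left₀ (by positivity)] at hscale
  have hbound := (hscale.mono (by norm_num [sigmaN, Nat.factorial])).abs_two_le_of_three hx₀
  rw [abs_mul, inv_pow, abs_of_nonneg (by positivity), inv_mul_le_iff₀ (by positivity),
    ← add_mul, add_sub_cancel, one_mul] at hbound
  exact hbound

end IsAdmissible

end ThirdOrder

section Smoothing

variable {n j : ℕ} {F G : ℕ → ℝ → ℝ} {c δ ε σ x : ℝ}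

lemma IsDerivChain.ite_le (hF : IsDerivChain n F univ) (hG : IsDerivChain n G univ)
    (hFG : ∀ i ≤ n, F i c = G i c) :
    IsDerivChain n (fun i x => if c ≤ x then F i x else G i x) univ := by
  intro i hi x _
  have hF := (hF i hi x (mem_univ x)).hasDerivAt Filter.univ_mem
  have hG := (hG i hi x (mem_univ x)).hasDerivAt Filter.univ_mem
  refine HasDerivAt.hasDerivWithinAt ?_
  dsimp only
  rcases lt_trichotomy x c with hx | rfl | hx
  · rw [if_neg hx.not_ge]
    refine hG.congr_of_eventuallyEq ?_
    filter_upwards [Iio_mem_nhds hx] with z hz using if_neg (not_le.2 hz)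
  · rw [if_pos le_rfl, ← hasDerivWithinAt_univ, ← Ici_union_Iic (a := x)]
    refine (hF.hasDerivWithinAt.congr (fun z hz => if_pos hz) (if_pos le_rfl)).union ?_
    rw [hFG (i + 1) hi]
    have hx : (if x ≤ x then F i x else G i x) = G i x := (if_pos le_rfl).trans (hFG i hi.le)
    refine hG.hasDerivWithinAt.congr (fun z hz => ?_) hx
    rcases (mem_Iic.1 hz).eq_or_lt with rfl | hlt
    · exact hx
    · exact if_neg hlt.not_ge
  · rw [if_pos hx.le]
    refine hF.congr_of_eventuallyEq ?_
    filter_upwards [Ioi_mem_nhds hx] with z hz using if_pos (mem_Ioi.1 hz).le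

/-- The Steklov means `x ↦ ε⁻¹ * ∫ t in (x - ε)..x, G 0 t` and their derivatives, expressed through
the derivatives `G 1, G 2, …` of `G 0`. Averaging turns a Lipschitz `G n` into a differentiable
function, so that this chain is longer than `G` by one. -/
noncomputable def steklovChain (G : ℕ → ℝ → ℝ) (ε : ℝ) : ℕ → ℝ → ℝ
  | 0, x => (∫ t in (x - ε)..x, G 0 t) / ε
  | i + 1, x => (G i x - G i (x - ε)) / ε

lemma isDerivChain_steklovChain (hG : IsDerivChain n G univ) (hG₀ : Continuous (G 0)) (ε : ℝ) :
    IsDerivChain (n + 1) (steklovChain G ε) univ := by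
  have hdiff {f f' : ℝ → ℝ} (hf : ∀ x, HasDerivAt f (f' x) x) (x : ℝ) :
      HasDerivWithinAt (fun x => (f x - f (x - ε)) / ε) ((f' x - f' (x - ε)) / ε) univ x :=
    (((hf x).sub ((hf (x - ε)).comp_sub_const x ε)).div_const ε).hasDerivWithinAt
  rintro (_ | i) hi x _
  · have hprim : steklovChain G ε 0 =
        fun x => ((∫ t in (0 : ℝ)..x, G 0 t) - ∫ t in (0 : ℝ)..(x - ε), G 0 t) / ε := by
      funext x
      rw [steklovChain, intervalIntegral.integral_interval_sub_left
        (hG₀.intervalIntegrable _ _) (hG₀.intervalIntegrable _ _)]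
    rw [hprim]
    exact hdiff (fun x => (hG₀.integral_hasStrictDerivAt 0 x).hasDerivAt) x
  · exact hdiff (fun x => (hG i (by omega) x (mem_univ x)).hasDerivAt Filter.univ_mem) x

lemma abs_steklovChain_zero_le (hε : 0 < ε) (hG : ∀ t ∈ Icc (x - ε) x, |G 0 t| ≤ 1) :
    |steklovChain G ε 0 x| ≤ 1 := by
  rw [steklovChain, abs_div, abs_of_pos hε, div_le_one hε]
  have hbound : ∀ t ∈ uIoc (x - ε) x, ‖G 0 t‖ ≤ 1 := fun t ht =>
    hG t (Ioc_subset_Icc_self (by rwa [uIoc_of_le (by linarith)] at ht))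
  simpa [abs_of_pos hε] using intervalIntegral.norm_integral_le_of_norm_le_const hbound

lemma isAdmissible_steklovChain (hG : IsDerivChain n G univ) (hn : n ≠ 0) (hε : 0 < ε) (hεδ : ε ≤ δ)
    (hG₀ : ∀ x ∈ Icc (-1 - δ) 1, |G 0 x| ≤ 1)
    (hGn : ∀ x y, x ≤ y → |G n y - G n x| ≤ σ * (y - x)) :
    IsAdmissible (n + 1) σ (steklovChain G ε) where
  isDerivChain := (isDerivChain_steklovChain hG
    (continuousOn_univ.1 (hG.continuousOn (Nat.pos_of_ne_zero hn))) ε).mono (subset_univ _)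
  abs_le_one x hx := abs_steklovChain_zero_le hε fun t ht =>
    hG₀ t ⟨by linarith [hx.1, ht.1], ht.2.trans hx.2⟩
  abs_le x _ := by
    rw [steklovChain, abs_div, abs_of_pos hε, div_le_iff₀ hε]
    simpa using hGn (x - ε) x (by linarith)

/- As `ε` tends to `0`, the derivatives of the Steklov means tend to those of `G 0`. -/
lemma IsDerivChain.abs_succ_le_mval_of_lipschitz (hG : IsDerivChain n G univ) (hj : j < n)
    (hδ : 0 < δ) (hG₀ : ∀ x ∈ Icc (-1 - δ) 1, |G 0 x| ≤ 1)
    (hGn : ∀ x y, x ≤ y → |G n y - G n x| ≤ σ * (y - x)) :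
    |G (j + 1) 1| ≤ mval (n + 1) (j + 1) 1 σ := by
  have hslope := ((hG j hj 1 (mem_univ 1)).hasDerivAt Filter.univ_mem).tendsto_slope.mono_left
    (nhdsWithin_mono (1 : ℝ) fun t (ht : t ∈ Iio 1) => ne_of_lt ht)
  refine le_of_tendsto hslope.abs ?_
  filter_upwards [Ioo_mem_nhdsLT (sub_lt_self (1 : ℝ) hδ)] with t ht
  have h := isAdmissible_steklovChain (ε := 1 - t) hG (by omega) (by linarith [ht.2])
    (by linarith [ht.1]) hG₀ hGn
  have hle := h.abs_le_mval (k := j + 1) n.succ_ne_zero (by omega)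
  rwa [steklovChain, sub_sub_cancel, ← slope_def_field, slope_comm] at hle

end Smoothing

section HalfLine

variable {a x y : ℝ} {N i : ℕ}

/-- The perfect spline of degree `3` equal to `T₃` on `[-1/2, ∞)` and antiperiodic with period `1`
on `[-N - 1/2, 1/2]`, with its derivatives. It is the truncation of the extremal function for the
half-line `(-∞, 1]`. -/
noncomputable def halfLineSpline : ℕ → ℕ → ℝ → ℝ
  | 0, i, x => chebDeriv 3 i x
  | N + 1, i, x => if -1 / 2 ≤ x then chebDeriv 3 i x else -halfLineSpline N i (x + 1)

lemma chebyshev_T_three : Chebyshev.T ℝ 3 = 4 * X ^ 3 - 3 * X := by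
  rw [show (3 : ℤ) = 1 + 2 by norm_num, Chebyshev.T_add_two, Chebyshev.T_one,
    show (1 + 1 : ℤ) = 2 by norm_num, Chebyshev.T_two]
  ring

lemma chebDeriv_degree_three_zero (x : ℝ) : chebDeriv 3 0 x = 4 * x ^ 3 - 3 * x := by
  simp [chebDeriv, chebyshev_T_three]

lemma chebDeriv_degree_three_one (x : ℝ) : chebDeriv 3 1 x = 12 * x ^ 2 - 3 := by
  calc chebDeriv 3 1 x = 4 * ((2 + 1) * x ^ 2) - 3 := by simp [chebDeriv, chebyshev_T_three]
    _ = 12 * x ^ 2 - 3 := by ring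

lemma chebDeriv_degree_three_two (x : ℝ) : chebDeriv 3 2 x = 24 * x := by
  calc chebDeriv 3 2 x = 4 * ((2 + 1) * ((1 + 1) * x)) := by simp [chebDeriv, chebyshev_T_three]
    _ = 24 * x := by ring

lemma halfLineSpline_of_le (hx : -1 / 2 ≤ x) : halfLineSpline N i x = chebDeriv 3 i x := by
  cases N with
  | zero => rfl
  | succ N => exact if_pos hx

lemma isDerivChain_halfLineSpline (N : ℕ) : IsDerivChain 2 (halfLineSpline N) univ := by
  induction N with
  | zero => exact isDerivChain_chebDeriv 3 2 univ
  | succ N ih =>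
    have hshift := (ih.comp_affine 1 1 (mapsTo_univ _ univ)).neg
    simp only [one_pow, one_mul] at hshift
    refine (isDerivChain_chebDeriv 3 2 univ).ite_le hshift fun i hi => ?_
    rw [halfLineSpline_of_le (by norm_num)]
    interval_cases i <;>
      norm_num [chebDeriv_degree_three_zero, chebDeriv_degree_three_one, chebDeriv_degree_three_two]

lemma abs_halfLineSpline_zero_le (hx : x ∈ Icc (-N - 1 / 2 : ℝ) 1) :
    |halfLineSpline N 0 x| ≤ 1 := by
  have hT {x : ℝ} (hx₁ : -1 / 2 ≤ x) (hx₂ : x ≤ 1) : |chebDeriv 3 0 x| ≤ 1 := by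
    simpa [chebDeriv_zero] using abs_chebDeriv_le 3 0 ⟨by linarith, hx₂⟩
  induction N generalizing x with
  | zero => exact hT (by linarith [hx.1, CharP.cast_eq_zero ℝ 0]) hx.2
  | succ N ih =>
    obtain ⟨hx₁, hx₂⟩ := hx
    push_cast at hx₁
    unfold halfLineSpline
    split_ifs with hx
    · exact hT hx hx₂
    · rw [abs_neg]
      exact ih ⟨by linarith, by linarith⟩

lemma abs_halfLineSpline_two_sub_le (N : ℕ) (hxy : x ≤ y) :
    |halfLineSpline N 2 y - halfLineSpline N 2 x| ≤ 24 * (y - x) := by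
  have hT {x y : ℝ} (hxy : x ≤ y) : |chebDeriv 3 2 y - chebDeriv 3 2 x| ≤ 24 * (y - x) := by
    rw [chebDeriv_degree_three_two, chebDeriv_degree_three_two, ← mul_sub,
      abs_of_nonneg (by linarith)]
  induction N generalizing x y with
  | zero => exact hT hxy
  | succ N ih =>
    unfold halfLineSpline
    split_ifs with hy hx hx
    · exact hT hxy
    · have hleft := abs_le.1 (ih (x := x + 1) (y := 1 / 2) (by linarith))
      rw [halfLineSpline_of_le (by norm_num), chebDeriv_degree_three_two] at hleft
      rw [chebDeriv_degree_three_two]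
      exact abs_le.2 ⟨by linarith, by linarith⟩
    · linarith
    · rw [neg_sub_neg, abs_sub_comm]
      simpa using ih (x := x + 1) (y := y + 1) (by linarith)

/- The extremal function for the half-line, rescaled by the factor `a`. -/
lemma sq_mul_le_mval_three_two (ha : 1 ≤ a) : a ^ 2 * 24 ≤ mval 3 2 1 (a ^ 3 * sigmaN 3) := by
  obtain ⟨N, hN⟩ := exists_nat_ge (3 * a)
  have hG := (isDerivChain_halfLineSpline N).comp_affine a (1 - a) (mapsTo_univ _ univ)
  have hle := hG.abs_succ_le_mval_of_lipschitz (j := 1) (δ := 1) (σ := a ^ 3 * sigmaN 3)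
    one_lt_two one_pos (fun x hx => ?_) fun x y hxy => ?_
  · rw [mul_one, add_sub_cancel, halfLineSpline_of_le (by norm_num), chebDeriv_degree_three_two,
      mul_one] at hle
    exact (le_abs_self _).trans hle
  · rw [pow_zero, one_mul]
    exact abs_halfLineSpline_zero_le ⟨by nlinarith [hx.1], by nlinarith [hx.2]⟩
  · have hlip := abs_halfLineSpline_two_sub_le N
      (show a * x + (1 - a) ≤ a * y + (1 - a) by gcongr)
    rw [← mul_sub, abs_mul, abs_of_nonneg (sq_nonneg a)]
    refine (mul_le_mul_of_nonneg_left hlip (sq_nonneg a)).trans_eq ?_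
    norm_num [sigmaN, Nat.factorial]
    ring

end HalfLine

lemma exists_one_le_pow_mul_sigmaN_eq {n : ℕ} {σ : ℝ} (hn : n ≠ 0) (hσ : sigmaN n ≤ σ) :
    ∃ a : ℝ, 1 ≤ a ∧ a ^ n * sigmaN n = σ := by
  have hσn := sigmaN_pos n
  have hquot : 1 ≤ σ / sigmaN n := (one_le_div hσn).2 hσ
  refine ⟨(σ / sigmaN n) ^ (n : ℝ)⁻¹, Real.one_le_rpow hquot (by positivity), ?_⟩
  rw [Real.rpow_inv_natCast_pow (by positivity) hn, div_mul_cancel₀ _ hσn.ne']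

lemma IsAdmissible.abs_le_mval_of_critical {n k : ℕ} {a x₀ : ℝ} {F : ℕ → ℝ → ℝ}
    (h : IsAdmissible n (a ^ n * sigmaN n) F) (hn : 3 ≤ n) (hk : k = 1 ∨ k = 2) (ha : 1 ≤ a)
    (hx₀ : x₀ ∈ Ico (0 : ℝ) 1) (hF : F (k + 1) x₀ = 0) :
    |F k x₀| ≤ mval n k 1 (a ^ n * sigmaN n) := by
  rcases hk with rfl | rfl
  · exact h.abs_one_le_mval hn ha hx₀ hF
  rcases hn.eq_or_lt with rfl | hn
  · exact (h.abs_two_le_mul_sq_of_three ha ⟨by linarith [hx₀.1], hx₀.2.le⟩).trans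
      (sq_mul_le_mval_three_two ha)
  · exact h.abs_two_le_mval hn ha hx₀ hF

/-- Karlin's conjecture in the spline range `σ > σ_n` for `k = 1, 2`. -/
theorem karlin_conjecture_spline_range_k_one_two (n k : ℕ) (σ : ℝ) (hn : 3 ≤ n)
    (hk : k = 1 ∨ k = 2) (hσ : sigmaN n < σ) :
    (∀ x ∈ Icc (-1:ℝ) 1, mval n k x σ ≤ mval n k 1 σ) ∧
    sSup {y | ∃ x ∈ Icc (-1:ℝ) 1, y = mval n k x σ} = mval n k 1 σ := by
  obtain ⟨a, ha, rfl⟩ := exists_one_le_pow_mul_sigmaN_eq (by omega) hσ.le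
  have hmax : ∀ x ∈ Icc (-1 : ℝ) 1,
      mval n k x (a ^ n * sigmaN n) ≤ mval n k 1 (a ^ n * sigmaN n) := fun x hx =>
    mval_le_mval_one_of_forall_critical (by omega)
      (fun _ hF _ hx₀ => hF.abs_le_mval_of_critical hn hk ha hx₀) hx
  refine ⟨hmax, IsGreatest.csSup_eq ⟨⟨1, by simp, rfl⟩, ?_⟩⟩
  rintro _ ⟨x, hx, rfl⟩
  exact hmax x hx
end

section
/- Let σ > σ_n = 2^{n-1}·n!, and suppose the pair (n,k) satisfies one of: n ∈ {5,6} and 1 ≤ k ≤ n-2; or n ∈ {7,8,9} and 1 ≤ k ≤ n-3; or n ∈ {10,11} and 1 ≤ k ≤ 6. Then for every x ∈ [-1,1], m_k(x,σ) ≤ m_k(1,σ); that is, Karlin's conjecture sup_{x∈[-1,1]} m_k(x,σ) = m_k(1,σ) holds for these parameters. -/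
open Polynomial Set

/-!
Write `σ = σ_n cⁿ` with `c ≥ 1`. At an interior maximum `x` of `|f⁽ᵏ⁾|`, where by symmetry `x ≥ 0`,
either `f⁽ᵏ⁾ x = 0` or `f⁽ᵏ⁺¹⁾ x = 0`. In the second case `g y = f (x + y / c)` satisfies `|g| ≤ 1`,
`|g⁽ⁿ⁾| ≤ σ_n` and `g⁽ᵏ⁺¹⁾ 0 = 0` on `[-1, 1 / 2]` or on `[-3 / 2, 0]`. Compare `g` with a
polynomial `P` of degree `n` such that `P⁽ᵏ⁺¹⁾ 0 = 0`, `|P⁽ⁿ⁾| ≥ σ_n` and `P` alternates between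
values beyond `±1` at `n - 1` points of the window. If `|P⁽ᵏ⁾ 0| < |g⁽ᵏ⁾ 0|`, choose `γ` so that
`P⁽ᵏ⁾ - γ g⁽ᵏ⁾` has a double zero at `0`; then `|γ| < 1`, so `P - γ g` alternates too. Each
differentiation costs one sign, except that the two across the double zero cost none, and the sign
left over for `P⁽ⁿ⁾ - γ g⁽ⁿ⁾` is not that of `P⁽ⁿ⁾`, a contradiction. Hence
`|f⁽ᵏ⁾ x| ≤ cᵏ |P⁽ᵏ⁾ 0|`.

In the other direction, a spline of degree `n + 1` on a half-line `(-∞, K]`, rescaled by `c`, is a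
member of the class with `k`-th derivative `B cᵏ` at `1`. As both bounds scale by `cᵏ`, only
`|P⁽ᵏ⁾ 0| ≤ |B|` remains, one inequality for each pair `(n, k)`. The constraints on the splines and
the polynomials are finitely many inequalities between integers, because the values of a spline lie
in the convex hull of its Bernstein ordinates.
-/

namespace KarlinSpline

variable {n k m : ℕ} {σ : ℝ} {F P : ℕ → ℝ → ℝ} {s t : Set ℝ}

/-! ### Chains of derivatives -/

/-- A function together with its first `n` derivatives within `s`, as a sequence `F 0, …, F n`. -/
def HasDerivChainOn (n : ℕ) (F : ℕ → ℝ → ℝ) (s : Set ℝ) : Prop :=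
  ∀ i < n, ∀ x ∈ s, HasDerivWithinAt (F i) (F (i + 1) x) s x

namespace HasDerivChainOn

theorem mono (hF : HasDerivChainOn n F s) (hts : t ⊆ s) : HasDerivChainOn n F t :=
  fun i hi x hx => (hF i hi x (hts hx)).mono hts

theorem sub_const_mul (hP : HasDerivChainOn n P s) (hF : HasDerivChainOn n F s) (c : ℝ) :
    HasDerivChainOn n (fun i x => P i x - c * F i x) s :=
  fun i hi x hx => (hP i hi x hx).fun_sub ((hF i hi x hx).const_mul c)

theorem comp_affine (hF : HasDerivChainOn n F s) (a b : ℝ) :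
    HasDerivChainOn n (fun i x => a ^ i * F i (a * x + b)) ((fun x => a * x + b) ⁻¹' s) := by
  intro i hi x hx
  have haff : HasDerivWithinAt (fun x : ℝ => a * x + b) a ((fun x => a * x + b) ⁻¹' s) x := by
    simpa using (((hasDerivAt_id x).const_mul a).add_const b).hasDerivWithinAt
  exact (((hF i hi _ hx).comp x haff (mapsTo_preimage _ s)).const_mul (a ^ i)).congr_deriv (by ring)

theorem eqOn_iteratedDerivWithin (hF : HasDerivChainOn n F s) (hs : UniqueDiffOn ℝ s)
    {i : ℕ} (hi : i ≤ n) : EqOn (iteratedDerivWithin i (F 0) s) (F i) s := by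
  induction i with
  | zero => exact fun x _ => by simp
  | succ i ih =>
    intro x hx
    rw [iteratedDerivWithin_succ, derivWithin_congr (ih (by lia)) (ih (by lia) hx)]
    exact (hF i hi x hx).derivWithin (hs x hx)

theorem nTimesDiffOn (hF : HasDerivChainOn n F s) (hs : UniqueDiffOn ℝ s) :
    NTimesDiffOn n (F 0) s := fun i hi =>
  (show DifferentiableOn ℝ (F i) s from fun x hx => (hF i hi x hx).differentiableWithinAt).congr
    (hF.eqOn_iteratedDerivWithin hs hi.le)

end HasDerivChainOn

theorem _root_.NTimesDiffOn.hasDerivChainOn {f : ℝ → ℝ} (hf : NTimesDiffOn n f s) :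
    HasDerivChainOn n (fun i => iteratedDerivWithin i f s) s := by
  intro i hi x hx
  simp only [iteratedDerivWithin_succ]
  exact (hf i hi x hx).hasDerivWithinAt

/-- Derivative chains of the members of `W^n_∞(σ)`, with an arbitrary set `s` in place of
`[-1, 1]`. -/
structure IsWChainOn (n : ℕ) (σ : ℝ) (F : ℕ → ℝ → ℝ) (s : Set ℝ) : Prop where
  chain : HasDerivChainOn n F s
  abs_zero_le : ∀ x ∈ s, |F 0 x| ≤ 1
  abs_top_le : ∀ x ∈ s, |F n x| ≤ σ

namespace IsWChainOn

theorem mono (hF : IsWChainOn n σ F s) (hts : t ⊆ s) : IsWChainOn n σ F t :=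
  ⟨hF.chain.mono hts, fun x hx => hF.abs_zero_le x (hts hx), fun x hx => hF.abs_top_le x (hts hx)⟩

theorem comp_affine (hF : IsWChainOn n σ F s) (a b : ℝ) :
    IsWChainOn n (|a| ^ n * σ) (fun i x => a ^ i * F i (a * x + b))
      ((fun x => a * x + b) ⁻¹' s) where
  chain := hF.chain.comp_affine a b
  abs_zero_le x hx := by simpa using hF.abs_zero_le _ hx
  abs_top_le x hx := by
    rw [abs_mul, abs_pow]
    exact mul_le_mul_of_nonneg_left (hF.abs_top_le _ hx) (by positivity)

theorem comp_neg (hF : IsWChainOn n σ F (Icc (-1) 1)) :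
    IsWChainOn n σ (fun i x => (-1) ^ i * F i (-x)) (Icc (-1) 1) := by
  have h := (hF.comp_affine (-1) 0).mono (t := Icc (-1) 1)
    (fun x hx => ⟨by linarith [hx.2], by linarith [hx.1]⟩)
  simpa using h

theorem memW (hF : IsWChainOn n σ F (Icc (-1) 1)) : memW n σ (F 0) := by
  have hI : UniqueDiffOn ℝ (Icc (-1 : ℝ) 1) := uniqueDiffOn_Icc (by norm_num)
  refine ⟨hF.chain.nTimesDiffOn hI, hF.abs_zero_le, fun x hx => ?_⟩
  rw [hF.chain.eqOn_iteratedDerivWithin hI le_rfl hx]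
  exact hF.abs_top_le x hx

end IsWChainOn

theorem _root_.memW.isWChainOn {f : ℝ → ℝ} (hf : memW n σ f) :
    IsWChainOn n σ (fun i => iteratedDerivWithin i f (Icc (-1) 1)) (Icc (-1) 1) :=
  ⟨hf.1.hasDerivChainOn, by simpa using hf.2.1, hf.2.2⟩

/-! ### Sign changes of derivatives -/

theorem exists_mem_Ioo_deriv_eq_slope {g g' : ℝ → ℝ} (hs : s.OrdConnected)
    (hg : ∀ x ∈ s, HasDerivWithinAt g (g' x) s x) {a b : ℝ} (ha : a ∈ s) (hb : b ∈ s)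
    (hab : a < b) : ∃ x ∈ Ioo a b, g' x = (g b - g a) / (b - a) := by
  have hsub : Icc a b ⊆ s := hs.out ha hb
  exact exists_hasDerivAt_eq_slope g g' hab
    (fun x hx => (hg x (hsub hx)).continuousWithinAt.mono hsub)
    (fun x hx => (hg x (hsub (Ioo_subset_Icc_self hx))).hasDerivAt
      (Filter.mem_of_superset (Icc_mem_nhds hx.1 hx.2) hsub))

theorem exists_mem_Ioo_pos_mul_deriv {g g' : ℝ → ℝ} (hs : s.OrdConnected)
    (hg : ∀ x ∈ s, HasDerivWithinAt g (g' x) s x) {a b c : ℝ} (ha : a ∈ s) (hb : b ∈ s)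
    (hab : a < b) (h : 0 < c * (g b - g a)) : ∃ x ∈ Ioo a b, 0 < c * g' x := by
  obtain ⟨x, hx, hslope⟩ := exists_mem_Ioo_deriv_eq_slope hs hg ha hb hab
  refine ⟨x, hx, ?_⟩
  rw [hslope, ← mul_div_assoc]
  exact div_pos h (sub_pos.2 hab)

theorem exists_strictMonoOn_pos_mul_deriv {g g' : ℝ → ℝ} (hs : s.OrdConnected)
    (hg : ∀ x ∈ s, HasDerivWithinAt g (g' x) s x) {p ε : ℕ → ℝ} (hp : StrictMonoOn p (Iio (m + 1)))
    (hps : ∀ i < m + 1, p i ∈ s) (hε : ∀ i < m, 0 < ε i * (g (p (i + 1)) - g (p i))) :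
    ∃ q : ℕ → ℝ, StrictMonoOn q (Iio m) ∧
      ∀ i < m, q i ∈ s ∧ q i ∈ Ioo (p i) (p (i + 1)) ∧ 0 < ε i * g' (q i) := by
  have hex : ∀ i < m, ∃ q ∈ Ioo (p i) (p (i + 1)), 0 < ε i * g' q := fun i hi =>
    exists_mem_Ioo_pos_mul_deriv hs hg (hps i (by lia)) (hps (i + 1) (by lia))
      (hp (mem_Iio.2 (by lia)) (mem_Iio.2 (by lia)) i.lt_succ_self) (hε i hi)
  choose! q hq using hex
  refine ⟨q, strictMonoOn_of_lt_add_one ordConnected_Iio fun i _ hi hi' =>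
    (hq i hi).1.2.trans (hq (i + 1) hi').1.1, fun i hi => ⟨?_, hq i hi⟩⟩
  exact hs.out (hps i (by lia)) (hps (i + 1) (by lia)) (Ioo_subset_Icc_self (hq i hi).1)

/-- `g` takes values of alternating signs at `m` increasing points of `s`; the first value has the
sign of `η`. -/
def AlternatesOn (m : ℕ) (η : ℝ) (g : ℝ → ℝ) (s : Set ℝ) : Prop :=
  ∃ p : ℕ → ℝ, StrictMonoOn p (Iio m) ∧ ∀ i < m, p i ∈ s ∧ 0 < (-1) ^ i * η * g (p i)

theorem AlternatesOn.deriv {g g' : ℝ → ℝ} {η : ℝ} (hs : s.OrdConnected)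
    (hg : ∀ x ∈ s, HasDerivWithinAt g (g' x) s x) (h : AlternatesOn (m + 1) η g s) :
    AlternatesOn m (-η) g' s := by
  obtain ⟨p, hp, hpos⟩ := h
  obtain ⟨q, hq, hqpos⟩ := exists_strictMonoOn_pos_mul_deriv (ε := fun i => (-1) ^ i * -η) hs hg hp
    (fun i hi => (hpos i hi).1) fun i hi => by
      have hi₁ := (hpos (i + 1) (by lia)).2
      rw [pow_succ] at hi₁
      linarith [(hpos i (by lia)).2]
  exact ⟨q, hq, fun i hi => ⟨(hqpos i hi).1, (hqpos i hi).2.2⟩⟩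

theorem AlternatesOn.iterate {η : ℝ} (hs : s.OrdConnected) (hF : HasDerivChainOn n F s) {i j : ℕ}
    (hij : i + j ≤ n) (h : AlternatesOn (m + j) η (F i) s) :
    AlternatesOn m ((-1) ^ j * η) (F (i + j)) s := by
  induction j generalizing m with
  | zero => simpa using h
  | succ j ih =>
    have hj : AlternatesOn (m + 1) ((-1) ^ j * η) (F (i + j)) s :=
      ih (by lia) (by rwa [add_assoc, add_comm 1])
    have hderiv := hj.deriv hs (hF (i + j) (by lia))
    rwa [← neg_one_mul, ← mul_assoc, ← pow_succ'] at hderiv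

/-- `g` takes values of signs `ε 0, …, ε (m - 1)` at `m` increasing points of `s`, of which the
first `j` lie to the left of `x` and the others to its right. -/
def SignsAround (m j : ℕ) (ε : ℕ → ℝ) (g : ℝ → ℝ) (s : Set ℝ) (x : ℝ) : Prop :=
  ∃ p : ℕ → ℝ, StrictMonoOn p (Iio m) ∧ (∀ i < m, p i ∈ s ∧ 0 < ε i * g (p i)) ∧
    (∀ i < j, p i < x) ∧ ∀ i < m, j ≤ i → x < p i

theorem AlternatesOn.exists_signsAround {g : ℝ → ℝ} {η x : ℝ} (hgx : g x = 0)
    (h : AlternatesOn m η g s) : ∃ j ≤ m, SignsAround m j (fun i => (-1) ^ i * η) g s x := by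
  classical
  obtain ⟨p, hp, hpos⟩ := h
  have hex : ∃ j, m ≤ j ∨ x < p j := ⟨m, Or.inl le_rfl⟩
  have hle : Nat.find hex ≤ m := Nat.find_min' hex (Or.inl le_rfl)
  refine ⟨Nat.find hex, hle, p, hp, hpos, fun i hij => ?_, fun i hi hij => ?_⟩
  · refine lt_of_le_of_ne (not_lt.1 fun hx => Nat.find_min hex hij (Or.inr hx)) ?_
    rintro rfl
    simpa [hgx] using (hpos i (by lia)).2
  · have hx := (Nat.find_spec hex).resolve_left (by lia)
    exact hx.trans_le (hp.monotoneOn (mem_Iio.2 (by lia)) hi hij)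

theorem strictMonoOn_insert {p : ℕ → ℝ} {x : ℝ} {j : ℕ} (hp : StrictMonoOn p (Iio m))
    (hjm : j ≤ m) (hleft : ∀ i < j, p i < x) (hright : ∀ i < m, j ≤ i → x < p i) :
    StrictMonoOn (fun i => if i < j then p i else if i = j then x else p (i - 1))
      (Iio (m + 1)) := by
  refine strictMonoOn_of_lt_add_one ordConnected_Iio fun i _ _ hi => ?_
  have him : i + 1 < m + 1 := hi
  rcases lt_trichotomy i j with hij | rfl | hij
  · rcases (show i + 1 < j ∨ i + 1 = j by lia) with hij' | hij'
    · simpa [hij, hij'] using hp (mem_Iio.2 (by lia)) (mem_Iio.2 (by lia)) i.lt_succ_self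
    · simpa [hij, hij'] using hleft i hij
  · simpa using hright i (by lia) le_rfl
  · have := hp (a := i - 1) (b := i) (mem_Iio.2 (by lia)) (mem_Iio.2 (by lia)) (by lia)
    simpa [hij.not_gt, hij.ne', show ¬ i + 1 < j by lia, show i + 1 ≠ j by lia] using this

/-- The zero at `x` makes up for the point lost in Rolle's theorem: the signs to the left of `x` are
reversed, those to its right are kept. -/
theorem SignsAround.deriv {g g' : ℝ → ℝ} {j : ℕ} {ε : ℕ → ℝ} {x : ℝ} (hs : s.OrdConnected)
    (hg : ∀ x ∈ s, HasDerivWithinAt g (g' x) s x) (hx : x ∈ s) (hgx : g x = 0) (hjm : j ≤ m)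
    (hε : ∀ i, i + 1 ≠ j → ε (i + 1) = -ε i) (h : SignsAround m j ε g s x) :
    SignsAround m j (fun i => if i < j then -ε i else ε i) g' s x := by
  obtain ⟨p, hp, hpos, hleft, hright⟩ := h
  set P : ℕ → ℝ := fun i => if i < j then p i else if i = j then x else p (i - 1) with hP
  have hPj : P j = x := by simp [hP]
  have hPmono : StrictMonoOn P (Iio (m + 1)) := strictMonoOn_insert hp hjm hleft hright
  have hPs : ∀ i < m + 1, P i ∈ s := by grind
  obtain ⟨q, hq, hqpos⟩ := exists_strictMonoOn_pos_mul_deriv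
    (ε := fun i => if i < j then -ε i else ε i) hs hg hPmono hPs fun i hi => by
      rcases lt_trichotomy i j with hij | rfl | hij
      · have hi₀ := (hpos i hi).2
        rcases (show i + 1 < j ∨ i + 1 = j by lia) with hij' | hij'
        · have hi₁ := (hpos (i + 1) (by lia)).2
          rw [hε i hij'.ne] at hi₁
          simp only [hP, hij, hij', if_true]
          linarith
        · simpa [hP, hij, hij', hgx] using hi₀
      · simpa [hP, hgx] using (hpos i hi).2
      · obtain ⟨i, rfl⟩ : ∃ i', i = i' + 1 := ⟨i - 1, by lia⟩
        have hi₀ := (hpos i (by lia)).2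
        have hi₁ := (hpos (i + 1) hi).2
        rw [hε i (by lia)] at hi₁ ⊢
        simp only [hP, hij.not_gt, hij.ne', show ¬ i + 1 + 1 < j by lia,
          show i + 1 + 1 ≠ j by lia, if_false, Nat.add_sub_cancel]
        linarith
  refine ⟨q, hq, fun i hi => ⟨(hqpos i hi).1, (hqpos i hi).2.2⟩, fun i hij => ?_,
    fun i hi hij => ?_⟩
  · exact hPj ▸ (hqpos i (by lia)).2.1.2.trans_le
      (hPmono.monotoneOn (mem_Iio.2 (by lia)) (mem_Iio.2 (by lia)) hij)
  · exact hPj ▸ (hPmono.monotoneOn (mem_Iio.2 (by lia)) (mem_Iio.2 (by lia)) hij).trans_lt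
      (hqpos i hi).2.1.1

theorem AlternatesOn.deriv_deriv {g g' g'' : ℝ → ℝ} {η x : ℝ} (hs : s.OrdConnected)
    (hg : ∀ x ∈ s, HasDerivWithinAt g (g' x) s x) (hg' : ∀ x ∈ s, HasDerivWithinAt g' (g'' x) s x)
    (hx : x ∈ s) (hgx : g x = 0) (hgx' : g' x = 0) (h : AlternatesOn m η g s) :
    AlternatesOn m η g'' s := by
  obtain ⟨j, hjm, hj⟩ := h.exists_signsAround hgx
  have h₁ := hj.deriv hs hg hx hgx hjm fun i _ => by ring
  obtain ⟨p, hp, hpos, -⟩ := h₁.deriv hs hg' hx hgx' hjm fun i hi => by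
    have hiff : i + 1 < j ↔ i < j := by lia
    simp only [hiff]
    split_ifs <;> ring
  refine ⟨p, hp, fun i hi => ⟨(hpos i hi).1, ?_⟩⟩
  by_cases hij : i < j <;> simpa [hij] using (hpos i hi).2

/-! ### Comparison with an alternating chain -/

theorem HasDerivChainOn.exists_pos_of_alternatesOn {G : ℕ → ℝ → ℝ} {η x : ℝ} (hs : s.OrdConnected)
    (hG : HasDerivChainOn n G s) (hk : k + 2 ≤ n) (hx : x ∈ s) (hGk : G k x = 0)
    (hGk' : G (k + 1) x = 0) (h : AlternatesOn (n - 1) η (G 0) s) :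
    ∃ ξ ∈ s, 0 < (-1) ^ n * η * G n ξ := by
  obtain ⟨l, rfl⟩ : ∃ l, n = k + 2 + l := ⟨n - (k + 2), by lia⟩
  have h₁ : AlternatesOn (1 + l) ((-1) ^ k * η) (G k) s := by
    have := AlternatesOn.iterate (m := 1 + l) (i := 0) (j := k) hs hG (by lia)
      (by convert h using 1; lia)
    simpa using this
  have h₂ := h₁.deriv_deriv hs (hG k (by lia)) (hG (k + 1) (by lia)) hx hGk hGk'
  obtain ⟨p, -, hp⟩ := h₂.iterate hs hG le_rfl
  refine ⟨p 0, (hp 0 one_pos).1, ?_⟩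
  convert (hp 0 one_pos).2 using 2
  ring

theorem IsWChainOn.abs_le_of_alternating {x : ℝ} {p : ℕ → ℝ} (hF : IsWChainOn n σ F s)
    (hs : s.OrdConnected) (hk : k + 2 ≤ n) (hx : x ∈ s) (hFx : F (k + 1) x = 0)
    (hP : HasDerivChainOn n P s) (hPx : P (k + 1) x = 0) (hp : StrictMonoOn p (Iio (n - 1)))
    (hps : ∀ i < n - 1, p i ∈ s ∧ 1 ≤ (-1) ^ i * P 0 (p i))
    (hPn : ∀ y ∈ s, (-1) ^ n * P n y ≤ -σ) : |F k x| ≤ |P k x| := by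
  by_contra! hlt
  have hFk : F k x ≠ 0 := abs_pos.1 ((abs_nonneg _).trans_lt hlt)
  set γ := P k x / F k x with hγ
  have hγ₁ : |γ| < 1 := by rwa [hγ, abs_div, div_lt_one (abs_pos.2 hFk)]
  have halt : AlternatesOn (n - 1) 1 (fun y => P 0 y - γ * F 0 y) s := by
    refine ⟨p, hp, fun i hi => ⟨(hps i hi).1, ?_⟩⟩
    have hsmall : |(-1) ^ i * (γ * F 0 (p i))| < 1 := by
      rw [abs_mul, abs_neg_one_pow, one_mul, abs_mul]
      exact (mul_le_of_le_one_right (abs_nonneg γ) (hF.abs_zero_le _ (hps i hi).1)).trans_lt hγ₁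
    linarith [(hps i hi).2, (abs_lt.1 hsmall).2]
  obtain ⟨ξ, hξ, hpos⟩ := (hP.sub_const_mul hF.chain γ).exists_pos_of_alternatesOn hs hk hx
    (by simp [hγ, hFk]) (by simp [hPx, hFx]) halt
  have hle : |(-1) ^ n * (γ * F n ξ)| ≤ σ := by
    rw [abs_mul, abs_neg_one_pow, one_mul, abs_mul]
    exact (mul_le_of_le_one_left (abs_nonneg _) hγ₁.le).trans (hF.abs_top_le ξ hξ)
  linarith [hPn ξ hξ, (abs_le.1 hle).1]

/-! ### The extremal values `mval` -/

theorem exists_mem_Icc_abs_le {a b : ℝ} (hab : a < b) (j : ℕ) :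
    ∃ C, ∀ F, HasDerivChainOn j F (Icc a b) → (∀ x ∈ Icc a b, |F 0 x| ≤ 1) →
      ∃ ξ ∈ Icc a b, |F j ξ| ≤ C := by
  induction j generalizing a b with
  | zero => exact ⟨1, fun F _ hF₀ => ⟨a, left_mem_Icc.2 hab.le, hF₀ a (left_mem_Icc.2 hab.le)⟩⟩
  | succ j ih =>
    obtain ⟨c, hac, hcb⟩ := exists_between hab
    obtain ⟨d, hcd, hdb⟩ := exists_between hcb
    obtain ⟨C₁, hC₁⟩ := ih hac
    obtain ⟨C₂, hC₂⟩ := ih hdb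
    have hsub₁ : Icc a c ⊆ Icc a b := Icc_subset_Icc_right hcb.le
    have hsub₂ : Icc d b ⊆ Icc a b := Icc_subset_Icc_left (hac.trans hcd).le
    refine ⟨(C₂ + C₁) / (d - c), fun F hF hF₀ => ?_⟩
    have hFj : HasDerivChainOn j F (Icc a b) := fun i hi => hF i (by lia)
    obtain ⟨ξ₁, hξ₁, hle₁⟩ := hC₁ F (hFj.mono hsub₁) fun x hx => hF₀ x (hsub₁ hx)
    obtain ⟨ξ₂, hξ₂, hle₂⟩ := hC₂ F (hFj.mono hsub₂) fun x hx => hF₀ x (hsub₂ hx)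
    have hξ : ξ₁ < ξ₂ := hξ₁.2.trans_lt (hcd.trans_le hξ₂.1)
    obtain ⟨ξ, hξmem, hslope⟩ := exists_mem_Ioo_deriv_eq_slope ordConnected_Icc
      (hF j (by lia)) (hsub₁ hξ₁) (hsub₂ hξ₂) hξ
    refine ⟨ξ, Icc_subset_Icc hξ₁.1 hξ₂.2 (Ioo_subset_Icc_self hξmem), ?_⟩
    rw [hslope, abs_div, abs_of_pos (sub_pos.2 hξ)]
    have hC_nonneg : 0 ≤ C₂ + C₁ := by linarith [abs_nonneg (F j ξ₁), abs_nonneg (F j ξ₂)]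
    refine div_le_div₀ hC_nonneg ?_ (sub_pos.2 hcd) (sub_le_sub hξ₂.1 hξ₁.2)
    exact (abs_sub _ _).trans (add_le_add hle₂ hle₁)

theorem exists_abs_le {a b : ℝ} (hab : a < b) (n : ℕ) (σ : ℝ) {i : ℕ} (hi : i ≤ n) :
    ∃ C, ∀ F, IsWChainOn n σ F (Icc a b) → ∀ x ∈ Icc a b, |F i x| ≤ C := by
  induction hi using Nat.decreasingInduction with
  | self => exact ⟨σ, fun F hF => hF.abs_top_le⟩
  | of_succ i hi ih =>
    obtain ⟨C, hC⟩ := ih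
    obtain ⟨C₀, hC₀⟩ := exists_mem_Icc_abs_le hab i
    refine ⟨C₀ + C * (b - a), fun F hF x hx => ?_⟩
    obtain ⟨ξ, hξ, hle⟩ := hC₀ F (fun j hj => hF.chain j (by lia)) hF.abs_zero_le
    have hlip : |F i x - F i ξ| ≤ C * |x - ξ| :=
      (convex_Icc a b).norm_image_sub_le_of_norm_hasDerivWithin_le (hF.chain i hi) (hC F hF) hξ hx
    have hC_nonneg : 0 ≤ C := (abs_nonneg _).trans (hC F hF x hx)
    have hdist : C * |x - ξ| ≤ C * (b - a) := by
      gcongr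
      exact abs_sub_le_iff.2 ⟨by linarith [hx.2, hξ.1], by linarith [hx.1, hξ.2]⟩
    linarith [abs_sub_abs_le_abs_sub (F i x) (F i ξ)]

theorem IsWChainOn.abs_le_mval {x : ℝ} (hF : IsWChainOn n σ F (Icc (-1) 1)) (hk : k ≤ n)
    (hx : x ∈ Icc (-1 : ℝ) 1) : |F k x| ≤ mval n k x σ := by
  obtain ⟨C, hC⟩ := exists_abs_le (by norm_num : (-1 : ℝ) < 1) n σ hk
  refine le_csSup ⟨C, ?_⟩ ⟨F 0, hF.memW, ?_⟩
  · rintro y ⟨f, hf, rfl⟩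
    exact hC _ hf.isWChainOn x hx
  · rw [hF.chain.eqOn_iteratedDerivWithin (uniqueDiffOn_Icc (by norm_num)) hk hx]

theorem mval_nonneg (n k : ℕ) (x σ : ℝ) : 0 ≤ mval n k x σ := by
  refine Real.sSup_nonneg ?_
  rintro y ⟨f, -, rfl⟩
  exact abs_nonneg _

theorem mval_le {x B : ℝ} (hB : 0 ≤ B)
    (h : ∀ F, IsWChainOn n σ F (Icc (-1) 1) → |F k x| ≤ B) : mval n k x σ ≤ B := by
  refine Real.sSup_le ?_ hB
  rintro y ⟨f, hf, rfl⟩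
  exact h _ hf.isWChainOn

theorem HasDerivChainOn.eq_zero_or_eq_zero_of_isMaxOn {x : ℝ} (hF : HasDerivChainOn n F s)
    (hk : k < n) (hs : s ∈ nhds x) (hmax : IsMaxOn (fun y => |F k y|) s x) :
    F k x = 0 ∨ F (k + 1) x = 0 := by
  have hderiv : HasDerivAt (fun y => F k y ^ 2) (2 * F k x * F (k + 1) x) x := by
    simpa using ((hF k hk x (mem_of_mem_nhds hs)).hasDerivAt hs).fun_pow 2
  have hloc : IsLocalMax (fun y => F k y ^ 2) x := by
    filter_upwards [hs] with y hy using sq_le_sq.2 (hmax hy)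
  simpa using hloc.hasDerivAt_eq_zero hderiv

theorem mval_le_mval_one_of_critical (hk : k < n)
    (h : ∀ F, IsWChainOn n σ F (Icc (-1) 1) → ∀ x ∈ Icc (0 : ℝ) 1, F (k + 1) x = 0 →
      |F k x| ≤ mval n k 1 σ) {x : ℝ} (hx : x ∈ Icc (-1 : ℝ) 1) :
    mval n k x σ ≤ mval n k 1 σ := by
  have key : ∀ F, IsWChainOn n σ F (Icc (-1) 1) → ∀ y ∈ Icc (0 : ℝ) 1,
      IsMaxOn (fun z => |F k z|) (Icc (-1) 1) y → |F k y| ≤ mval n k 1 σ := by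
    intro F hF y hy hmax
    rcases hy.2.eq_or_lt with rfl | hy₁
    · exact hF.abs_le_mval hk.le (by simp)
    · rcases hF.chain.eq_zero_or_eq_zero_of_isMaxOn hk
        (Icc_mem_nhds (by linarith [hy.1]) hy₁) hmax with h₀ | h₁
      · simpa [h₀] using mval_nonneg n k 1 σ
      · exact h F hF y hy h₁
  refine mval_le (mval_nonneg n k 1 σ) fun F hF => ?_
  obtain ⟨y, hy, hmax⟩ := isCompact_Icc.exists_isMaxOn ⟨x, hx⟩
    (fun z hz => (hF.chain k hk z hz).continuousWithinAt.abs)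
  refine (hmax hx).trans ?_
  rcases le_total 0 y with hy₀ | hy₀
  · exact key F hF y ⟨hy₀, hy.2⟩ hmax
  · have := key _ hF.comp_neg (-y) ⟨by linarith, by linarith [hy.1]⟩ fun z hz => by
      simpa [abs_mul] using hmax (show -z ∈ Icc (-1 : ℝ) 1 from ⟨by linarith [hz.2],
        by linarith [hz.1]⟩)
    simpa [abs_mul] using this

/-! ### Bounds at a critical point after rescaling -/

/-- `|F k 0| ≤ A` for all chains on `s` in the class with the Chebyshev bound `σ_n` whose `k`-th
derivative is critical at `0`. -/
def CriticalBound (n k : ℕ) (A : ℝ) (s : Set ℝ) : Prop :=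
  ∀ F, IsWChainOn n (sigmaN n) F s → F (k + 1) 0 = 0 → |F k 0| ≤ A

theorem CriticalBound.mono {A B : ℝ} (h : CriticalBound n k A s) (hst : s ⊆ t) (hAB : A ≤ B) :
    CriticalBound n k B t :=
  fun F hF hF₀ => (h F (hF.mono hst) hF₀).trans hAB

theorem sigmaN_pos (n : ℕ) : 0 < sigmaN n := by unfold sigmaN; positivity

theorem CriticalBound.abs_le {A c x : ℝ} (h : CriticalBound n k A s) (hc : 0 < c)
    (hs : ∀ y ∈ s, x + y / c ∈ t) (hF : IsWChainOn n (sigmaN n * c ^ n) F t)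
    (hFx : F (k + 1) x = 0) : |F k x| ≤ A * c ^ k := by
  have hG : IsWChainOn n (sigmaN n) (fun i y => c⁻¹ ^ i * F i (c⁻¹ * y + x)) s := by
    have := (hF.comp_affine c⁻¹ x).mono (t := s) fun y hy => by
      simpa [div_eq_inv_mul, add_comm] using hs y hy
    rwa [abs_of_pos (by positivity), mul_left_comm, ← mul_pow, inv_mul_cancel₀ hc.ne', one_pow,
      mul_one] at this
  have := h _ hG (by simp [hFx])
  rw [mul_zero, zero_add, abs_mul, abs_of_pos (by positivity), inv_pow,
    inv_mul_le_iff₀ (by positivity)] at this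
  linarith

theorem CriticalBound.abs_le_of_windows {A c x : ℝ} (hleft : CriticalBound n k A (Icc (-3 / 2) 0))
    (hright : CriticalBound n k A (Icc (-1) (1 / 2))) (hc : 1 ≤ c)
    (hF : IsWChainOn n (sigmaN n * c ^ n) F (Icc (-1) 1)) (hx : x ∈ Icc (0 : ℝ) 1)
    (hFx : F (k + 1) x = 0) : |F k x| ≤ A * c ^ k := by
  have hc₀ : 0 < c := by linarith
  have hcx : 0 ≤ c * x := mul_nonneg hc₀.le hx.1
  have hfit {α β : ℝ} (hα : c * (-1 - x) ≤ α) (hβ : β ≤ c * (1 - x)) :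
      ∀ y ∈ Icc α β, x + y / c ∈ Icc (-1 : ℝ) 1 := fun y hy => by
    have h₁ : -1 - x ≤ y / c := by rw [le_div_iff₀' hc₀]; linarith [hy.1]
    have h₂ : y / c ≤ 1 - x := by rw [div_le_iff₀' hc₀]; linarith [hy.2]
    exact ⟨by linarith, by linarith⟩
  rcases le_total (1 / 2) (c * (1 - x)) with h | h
  · exact hright.abs_le hc₀ (hfit (by linarith) h) hF hFx
  · refine hleft.abs_le hc₀ (hfit (by linarith) ?_) hF hFx
    exact mul_nonneg hc₀.le (by linarith [hx.2])

theorem exists_eq_sigmaN_mul_pow (hn : n ≠ 0) (hσ : sigmaN n ≤ σ) :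
    ∃ c, 1 ≤ c ∧ σ = sigmaN n * c ^ n := by
  have h₁ : 1 ≤ σ / sigmaN n := (one_le_div (sigmaN_pos n)).2 hσ
  refine ⟨(σ / sigmaN n) ^ (n : ℝ)⁻¹, Real.one_le_rpow h₁ (by positivity), ?_⟩
  rw [Real.rpow_inv_natCast_pow (by linarith) hn, mul_div_cancel₀ _ (sigmaN_pos n).ne']

theorem mval_le_mval_one_of_criticalBound {A : ℝ} (hk : k < n)
    (hleft : CriticalBound n k A (Icc (-3 / 2) 0)) (hright : CriticalBound n k A (Icc (-1) (1 / 2)))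
    (hA : ∀ c, 1 ≤ c → ∃ F, IsWChainOn n (sigmaN n * c ^ n) F (Icc (-1) 1) ∧ A * c ^ k ≤ |F k 1|)
    (hσ : sigmaN n ≤ σ) {x : ℝ} (hx : x ∈ Icc (-1 : ℝ) 1) : mval n k x σ ≤ mval n k 1 σ := by
  obtain ⟨c, hc, rfl⟩ := exists_eq_sigmaN_mul_pow (by lia) hσ
  obtain ⟨H, hH, hHA⟩ := hA c hc
  exact mval_le_mval_one_of_critical hk (fun F hF y hy hFy =>
    (hleft.abs_le_of_windows hright hc hF hy hFy).trans
      (hHA.trans (hH.abs_le_mval hk.le (by simp)))) hx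

/-! ### Comparison polynomials -/

theorem hasDerivChainOn_iterate_derivative (n : ℕ) (p : ℝ[X]) (s : Set ℝ) :
    HasDerivChainOn n (fun i x => (derivative^[i] p).eval x) s := by
  intro i _ x _
  simpa only [Function.iterate_succ_apply'] using
    ((derivative^[i] p).hasDerivAt x).hasDerivWithinAt

theorem eval_zero_iterate_derivative (p : ℝ[X]) (i : ℕ) :
    (derivative^[i] p).eval 0 = i.factorial * p.coeff i := by
  rw [← coeff_zero_eq_eval_zero, coeff_iterate_derivative, zero_add, Nat.descFactorial_self,
    nsmul_eq_mul]

theorem eval_iterate_derivative_of_natDegree_le {p : ℝ[X]} (hp : p.natDegree ≤ n) (x : ℝ) :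
    (derivative^[n] p).eval x = n.factorial * p.coeff n := by
  have hdeg : (derivative^[n] p).natDegree = 0 := by
    have := natDegree_iterate_derivative p n
    lia
  rw [← eval_zero_iterate_derivative, eq_C_of_natDegree_eq_zero hdeg, eval_C, eval_C]

theorem criticalBound_of_polynomial {p : ℝ[X]} {t : ℕ → ℝ} (hs : s.OrdConnected) (hs₀ : 0 ∈ s)
    (hk : k + 2 ≤ n) (hdeg : p.natDegree ≤ n) (hcrit : p.coeff (k + 1) = 0)
    (hlead : (-1) ^ n * p.coeff n ≤ -2 ^ (n - 1)) (ht : StrictMonoOn t (Iio (n - 1)))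
    (halt : ∀ i < n - 1, t i ∈ s ∧ 1 ≤ (-1) ^ i * p.eval (t i)) :
    CriticalBound n k (k.factorial * |p.coeff k|) s := by
  intro F hF hF₀
  have hle := hF.abs_le_of_alternating hs hk hs₀ hF₀ (hasDerivChainOn_iterate_derivative n p s)
    (by rw [eval_zero_iterate_derivative, hcrit, mul_zero]) ht halt fun y _ => by
      rw [eval_iterate_derivative_of_natDegree_le hdeg, sigmaN, mul_left_comm]
      nlinarith [Nat.cast_nonneg (α := ℝ) n.factorial]
  rwa [eval_zero_iterate_derivative, abs_mul, Nat.abs_cast] at hle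

/-- A comparison polynomial with its points of alternation. The nodes are in hundredths, the
coefficients, in order of increasing degree, in units of `10⁻⁵`. -/
structure PolyCert where
  nodes : List ℤ
  coeffs : List ℤ

namespace PolyCert

variable {q : PolyCert}

/-- The `i`-th node, in hundredths. -/
def node (q : PolyCert) (i : ℕ) : ℤ := q.nodes.getD i 0

/-- The coefficient of degree `j`, in units of `10⁻⁵`. -/
def coeff (q : PolyCert) (j : ℕ) : ℤ := q.coeffs.getD j 0

/-- The hypotheses of `criticalBound_of_polynomial` for the interval `[α / 100, β / 100]`, with
denominators cleared. -/
def IsValid (q : PolyCert) (n k : ℕ) (α β : ℤ) : Prop :=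
  q.coeff (k + 1) = 0 ∧ (-1) ^ n * q.coeff n ≤ -2 ^ (n - 1) * 10 ^ 5 ∧
    (∀ i < n - 2, q.node i < q.node (i + 1)) ∧
    ∀ i < n - 1, α ≤ q.node i ∧ q.node i ≤ β ∧
      10 ^ 5 * 100 ^ n ≤
        (-1) ^ i * ∑ j ∈ Finset.range (n + 1), q.coeff j * q.node i ^ j * 100 ^ (n - j)

instance (n k : ℕ) (α β : ℤ) : Decidable (q.IsValid n k α β) := by
  unfold IsValid; infer_instance

/-- The polynomial of degree at most `n` encoded by the coefficients. -/
noncomputable def toPolynomial (q : PolyCert) (n : ℕ) : ℝ[X] :=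
  ∑ j ∈ Finset.range (n + 1), monomial j ((q.coeff j : ℝ) / 10 ^ 5)

theorem coeff_toPolynomial {j : ℕ} (hj : j ≤ n) :
    (q.toPolynomial n).coeff j = q.coeff j / 10 ^ 5 := by
  simp [toPolynomial, coeff_monomial, hj]

theorem natDegree_toPolynomial_le : (q.toPolynomial n).natDegree ≤ n :=
  natDegree_sum_le_of_forall_le _ _ fun j hj =>
    (natDegree_monomial_le _).trans (by simpa [Nat.lt_succ_iff] using hj)

theorem eval_toPolynomial (t : ℤ) : (q.toPolynomial n).eval ((t : ℝ) / 100) =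
    (∑ j ∈ Finset.range (n + 1), q.coeff j * t ^ j * 100 ^ (n - j) : ℤ) / (10 ^ 5 * 100 ^ n) := by
  simp only [toPolynomial, eval_finsetSum, eval_monomial]
  push_cast
  rw [Finset.sum_div]
  refine Finset.sum_congr rfl fun j hj => ?_
  rw [← Nat.sub_add_cancel (Finset.mem_range_succ_iff.1 hj), Nat.add_sub_cancel, pow_add,
    div_pow]
  field_simp

theorem IsValid.criticalBound {α β : ℤ} (h : q.IsValid n k α β) (hk : k + 2 ≤ n) (hα : α ≤ 0)
    (hβ : 0 ≤ β) : CriticalBound n k (k.factorial * (|(q.coeff k : ℝ)| / 10 ^ 5))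
      (Icc (α / 100) (β / 100)) := by
  obtain ⟨hcrit, hlead, hnode, halt⟩ := h
  have hα' : (α : ℝ) ≤ 0 := by exact_mod_cast hα
  have hβ' : (0 : ℝ) ≤ β := by exact_mod_cast hβ
  have hlead' : (-1 : ℝ) ^ n * q.coeff n ≤ -2 ^ (n - 1) * 10 ^ 5 := by exact_mod_cast hlead
  have hbound := criticalBound_of_polynomial (p := q.toPolynomial n)
    (t := fun i => (q.node i : ℝ) / 100) (s := Icc ((α : ℝ) / 100) (β / 100)) ordConnected_Icc
    ⟨by linarith, by linarith⟩ hk natDegree_toPolynomial_le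
    (by rw [coeff_toPolynomial (by lia), hcrit]; simp)
    (by rw [coeff_toPolynomial le_rfl]; linarith) ?_ fun i hi => ?_
  · rwa [coeff_toPolynomial (by lia), abs_div, abs_of_pos (by positivity : (0 : ℝ) < 10 ^ 5)]
      at hbound
  · refine strictMonoOn_of_lt_add_one ordConnected_Iio fun i _ _ hi => ?_
    have := hnode i (by have := mem_Iio.1 hi; lia)
    gcongr
  · obtain ⟨hαi, hβi, hi⟩ := halt i hi
    refine ⟨⟨by gcongr, by gcongr⟩, ?_⟩
    rw [eval_toPolynomial, ← mul_div_assoc, one_le_div (by positivity)]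
    exact_mod_cast hi

end PolyCert

/-! ### Truncated power functions -/

/-- `∑ d (V - ν)₊ ^ p` over the pairs `(d, ν)` of `l`. -/
noncomputable def truncPowSum (l : List (ℤ × ℕ)) (p : ℕ) (V : ℝ) : ℝ :=
  (l.map fun q => (q.1 : ℝ) * max (V - q.2) 0 ^ p).sum

theorem hasDerivAt_max_zero_pow (p : ℕ) (V : ℝ) :
    HasDerivAt (fun V : ℝ => max V 0 ^ (p + 2)) ((p + 2) * max V 0 ^ (p + 1)) V := by
  have hpos : HasDerivWithinAt (fun V : ℝ => max V 0 ^ (p + 2)) ((p + 2) * max V 0 ^ (p + 1))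
      (Ici 0) V := by
    by_cases hV : V ∈ Ici 0
    · have := (hasDerivAt_pow (p + 2) V).hasDerivWithinAt (s := Ici 0)
      rw [max_eq_left (mem_Ici.1 hV)]
      exact (by simpa using this : HasDerivWithinAt _ _ _ _).congr
        (fun x hx => by rw [max_eq_left (mem_Ici.1 hx)]) (by rw [max_eq_left (mem_Ici.1 hV)])
    · exact hasDerivWithinAt_iff_hasFDerivWithinAt.2 (.of_notMem_closure (by simpa using hV))
  have hneg : HasDerivWithinAt (fun V : ℝ => max V 0 ^ (p + 2)) ((p + 2) * max V 0 ^ (p + 1))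
      (Iic 0) V := by
    by_cases hV : V ∈ Iic 0
    · rw [max_eq_right (mem_Iic.1 hV), zero_pow p.succ_ne_zero, mul_zero]
      exact (hasDerivWithinAt_const V _ 0).congr (fun x hx => by simp [max_eq_right (mem_Iic.1 hx)])
        (by simp [max_eq_right (mem_Iic.1 hV)])
    · exact hasDerivWithinAt_iff_hasFDerivWithinAt.2 (.of_notMem_closure (by simpa using hV))
  simpa using (hneg.union hpos)

theorem hasDerivAt_truncPowSum (l : List (ℤ × ℕ)) (p : ℕ) (V : ℝ) :
    HasDerivAt (truncPowSum l (p + 2)) ((p + 2) * truncPowSum l (p + 1) V) V := by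
  induction l with
  | nil =>
    rw [show truncPowSum [] (p + 2) = fun _ => 0 from rfl]
    simpa [truncPowSum] using hasDerivAt_const V (0 : ℝ)
  | cons q l ih =>
    have hq := ((hasDerivAt_max_zero_pow p (V - q.2)).comp_sub_const V q.2).const_mul (q.1 : ℝ)
    refine (hq.fun_add ih).congr_deriv ?_
    simp only [truncPowSum, List.map_cons, List.sum_cons]
    ring

/-- The Bernstein ordinate of index `i` of `∑ d (V - ν)₊ ^ p` on `[a, a + 1]`. The truncated
subtraction of `ℕ` is the truncation, because the knots are integers. -/
def truncOrdinate (l : List (ℤ × ℕ)) (p i a : ℕ) : ℤ :=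
  (l.map fun q : ℤ × ℕ => q.1 * ((a - q.2) ^ (p - i) * (a + 1 - q.2) ^ i : ℕ)).sum

theorem truncPowSum_of_nonpos (l : List (ℤ × ℕ)) {p : ℕ} (hp : p ≠ 0) {V : ℝ} (hV : V ≤ 0) :
    truncPowSum l p V = 0 :=
  List.sum_eq_zero fun y hy => by
    obtain ⟨q, -, rfl⟩ := List.mem_map.1 hy
    rw [max_eq_right (by linarith [Nat.cast_nonneg (α := ℝ) q.2]), zero_pow hp, mul_zero]

theorem max_convexCombo_sub_zero (a ν : ℕ) {z : ℝ} (hz : z ∈ Icc (0 : ℝ) 1) :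
    max (a + z - ν) 0 = z * (a + 1 - ν : ℕ) + (1 - z) * (a - ν : ℕ) := by
  rcases le_or_gt ν a with h | h
  · have : (ν : ℝ) ≤ a := by exact_mod_cast h
    rw [max_eq_left (by linarith [hz.1]), Nat.cast_sub h, Nat.cast_sub (by lia)]
    push_cast
    ring
  · have : (a : ℝ) + 1 ≤ ν := by exact_mod_cast h
    rw [max_eq_right (by linarith [hz.2]), Nat.sub_eq_zero_of_le (by lia),
      Nat.sub_eq_zero_of_le h.le]
    simp

theorem truncPowSum_add (l : List (ℤ × ℕ)) (p a : ℕ) {z : ℝ} (hz : z ∈ Icc (0 : ℝ) 1) :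
    truncPowSum l p (a + z) = ∑ i ∈ Finset.range (p + 1),
      z ^ i * (1 - z) ^ (p - i) * p.choose i * truncOrdinate l p i a := by
  induction l with
  | nil => simp [truncPowSum, truncOrdinate]
  | cons q l ih =>
    simp only [truncPowSum, truncOrdinate, List.map_cons, List.sum_cons] at ih ⊢
    rw [ih, max_convexCombo_sub_zero a q.2 hz, add_pow, Finset.mul_sum, ← Finset.sum_add_distrib]
    refine Finset.sum_congr rfl fun i _ => ?_
    simp only [mul_pow, Int.cast_add, Int.cast_mul, Int.cast_pow, Int.cast_natCast, Nat.cast_mul,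
      Nat.cast_pow]
    ring

theorem truncPowSum_natCast (l : List (ℤ × ℕ)) (p K : ℕ) :
    truncPowSum l p K = truncOrdinate l p 0 K := by
  have h := truncPowSum_add l p K (left_mem_Icc.2 zero_le_one)
  rw [add_zero, Finset.sum_eq_single 0 (by simp +contextual) (by simp)] at h
  simpa using h

theorem exists_natCast_add_eq {V : ℝ} {K : ℕ} (hV₀ : 0 < V) (hV : V ≤ K) :
    ∃ a < K, ∃ z ∈ Icc (0 : ℝ) 1, (a : ℝ) + z = V := by
  have hceil : 0 < ⌈V⌉₊ := Nat.ceil_pos.2 hV₀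
  have hle : ⌈V⌉₊ ≤ K := Nat.ceil_le.2 hV
  have hcast : ((⌈V⌉₊ - 1 : ℕ) : ℝ) = ⌈V⌉₊ - 1 := by rw [Nat.cast_sub hceil, Nat.cast_one]
  refine ⟨⌈V⌉₊ - 1, by lia, V - (⌈V⌉₊ - 1 : ℕ), ⟨?_, ?_⟩, by ring⟩
  · linarith [Nat.ceil_lt_add_one hV₀.le]
  · linarith [Nat.le_ceil V]

theorem abs_add_truncPowSum_le {l : List (ℤ × ℕ)} {p K : ℕ} (hp : p ≠ 0) {e M : ℝ}
    (he : |e| ≤ M) (h : ∀ a < K, ∀ i < p + 1, |e + truncOrdinate l p i a| ≤ M) {V : ℝ}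
    (hV : V ≤ K) : |e + truncPowSum l p V| ≤ M := by
  rcases le_or_gt V 0 with hV₀ | hV₀
  · rwa [truncPowSum_of_nonpos l hp hV₀, add_zero]
  obtain ⟨a, haK, z, hz, rfl⟩ := exists_natCast_add_eq hV₀ hV
  set w : ℕ → ℝ := fun i => z ^ i * (1 - z) ^ (p - i) * p.choose i
  have hw_nonneg : ∀ i, 0 ≤ w i := fun i => by
    have := sub_nonneg.2 hz.2
    have := hz.1
    positivity
  have hw_sum : ∑ i ∈ Finset.range (p + 1), w i = 1 := by
    rw [← add_pow z (1 - z) p]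
    simp
  calc |e + truncPowSum l p (a + z)|
      = |∑ i ∈ Finset.range (p + 1), w i * (e + truncOrdinate l p i a)| := by
        simp only [truncPowSum_add l p a hz, mul_add, Finset.sum_add_distrib,
          ← Finset.sum_mul, hw_sum, one_mul]
        rfl
    _ ≤ ∑ i ∈ Finset.range (p + 1), w i * M := by
        refine (Finset.abs_sum_le_sum_abs _ _).trans (Finset.sum_le_sum fun i hi => ?_)
        rw [abs_mul, abs_of_nonneg (hw_nonneg i)]
        exact mul_le_mul_of_nonneg_left (h a haK i (Finset.mem_range.1 hi)) (hw_nonneg i)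
    _ = M := by rw [← Finset.sum_mul, hw_sum, one_mul]

/-- The function `(e + ∑ d (V - ν)₊ ^ (n + 1)) / N` on `(-∞, K]`, where `e` is the `shift`, `N` the
`denom`, `K` the `top`, and `(d, ν)` runs through the `knots`. One unit of `V` stands for one
hundredth on the scale of the comparison polynomials. -/
structure SplineCert where
  top : ℕ
  denom : ℕ
  shift : ℤ
  knots : List (ℤ × ℕ)

namespace SplineCert

variable {S : SplineCert}

/-- The spline is bounded by `1` and its `n`-th derivative by `sigmaN n / 100 ^ n`; both bounds are
stated for the Bernstein ordinates on the intervals `[a, a + 1]` with denominators cleared. -/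
def IsValid (S : SplineCert) (n : ℕ) : Prop :=
  0 < S.denom ∧ |S.shift| ≤ S.denom ∧
    (∀ a < S.top, ∀ i < n + 2, |S.shift + truncOrdinate S.knots (n + 1) i a| ≤ S.denom) ∧
    ∀ a < S.top, ∀ i < 2,
      100 ^ n * ((n + 1) * |truncOrdinate S.knots 1 i a|) ≤ 2 ^ (n - 1) * S.denom

instance (n : ℕ) : Decidable (S.IsValid n) := by
  unfold IsValid; infer_instance

/-- The `j`-th derivative of the spline, for `j ≤ n`. -/
noncomputable def iterDeriv (S : SplineCert) (n j : ℕ) (V : ℝ) : ℝ :=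
  ((if j = 0 then (S.shift : ℝ) else 0) +
    (n + 1).descFactorial j * truncPowSum S.knots (n + 1 - j) V) / S.denom

theorem hasDerivChainOn_iterDeriv (S : SplineCert) (n : ℕ) (s : Set ℝ) :
    HasDerivChainOn n (S.iterDeriv n) s := by
  intro j hj V _
  obtain ⟨p, rfl⟩ := Nat.exists_eq_add_of_lt hj
  have hp₂ : j + p + 1 + 1 - j = p + 2 := by lia
  have hp₁ : j + p + 1 + 1 - (j + 1) = p + 1 := by lia
  have hderiv : S.iterDeriv (j + p + 1) j = fun V => ((if j = 0 then (S.shift : ℝ) else 0) +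
      (j + p + 1 + 1).descFactorial j * truncPowSum S.knots (p + 2) V) / S.denom := by
    funext V
    rw [iterDeriv, hp₂]
  rw [hderiv]
  refine (((((hasDerivAt_truncPowSum S.knots p V).const_mul _).const_add _).div_const
    _).hasDerivWithinAt).congr_deriv ?_
  rw [iterDeriv, if_neg j.succ_ne_zero, zero_add, Nat.descFactorial_succ, hp₁, hp₂]
  push_cast
  ring

theorem IsValid.isWChainOn_iterDeriv (h : S.IsValid n) (hn : n ≠ 0) :
    IsWChainOn n (sigmaN n / 100 ^ n) (S.iterDeriv n) (Iic S.top) := by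
  obtain ⟨hdenom, hshift, hzero, hone⟩ := h
  have hdenom' : (0 : ℝ) < S.denom := by exact_mod_cast hdenom
  refine ⟨S.hasDerivChainOn_iterDeriv n _, fun V hV => ?_, fun V hV => ?_⟩
  · have := abs_add_truncPowSum_le (l := S.knots) n.succ_ne_zero (e := S.shift) (M := S.denom)
      (by exact_mod_cast hshift) (fun a ha i hi => by exact_mod_cast hzero a ha i hi) hV
    simpa [iterDeriv, abs_div, div_le_one hdenom'] using this
  · have hle := abs_add_truncPowSum_le (l := S.knots) one_ne_zero (e := 0)
      (M := 2 ^ (n - 1) * S.denom / (100 ^ n * (n + 1))) (by simpa using by positivity)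
      (fun a ha i hi => by
        rw [zero_add, le_div_iff₀' (by positivity), mul_assoc]
        exact_mod_cast hone a ha i hi) hV
    have hdesc : (n + 1).descFactorial n = (n + 1) * n.factorial := by
      rw [← Nat.factorial_succ, ← Nat.factorial_mul_descFactorial n.le_succ]; simp
    rw [zero_add, le_div_iff₀' (by positivity)] at hle
    rw [iterDeriv, if_neg hn, zero_add, Nat.add_sub_cancel_left, hdesc, abs_div, abs_mul,
      Nat.abs_cast, Nat.abs_cast, div_le_div_iff₀ hdenom' (by positivity), sigmaN]
    push_cast
    nlinarith [mul_le_mul_of_nonneg_left hle (Nat.cast_nonneg (α := ℝ) n.factorial)]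

/-- The absolute value of the `k`-th derivative of the spline at its right end, for `k ≠ 0`, on the
scale of the comparison polynomials. -/
noncomputable def endValue (S : SplineCert) (n k : ℕ) : ℝ :=
  (n + 1).descFactorial k * |(truncOrdinate S.knots (n + 1 - k) 0 S.top : ℝ)| * 100 ^ k / S.denom

theorem iterDeriv_top {k : ℕ} (hk : k ≠ 0) :
    |S.iterDeriv n k S.top| * 100 ^ k = S.endValue n k := by
  rw [iterDeriv, if_neg hk, zero_add, truncPowSum_natCast, abs_div, abs_mul, Nat.abs_cast,
    Nat.abs_cast, endValue, div_mul_eq_mul_div]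

theorem IsValid.exists_isWChainOn (h : S.IsValid n) (hn : n ≠ 0) (hk : k ≠ 0) {c : ℝ}
    (hc : 0 ≤ c) : ∃ F, IsWChainOn n (sigmaN n * c ^ n) F (Icc (-1) 1) ∧
      S.endValue n k * c ^ k ≤ |F k 1| := by
  have hF := ((h.isWChainOn_iterDeriv hn).comp_affine (100 * c) (S.top - 100 * c)).mono
    (t := Icc (-1) 1) fun x hx => by
      have := mul_nonneg hc (sub_nonneg.2 hx.2)
      simp only [mem_preimage, mem_Iic]
      linarith
  have hσ : |100 * c| ^ n * (sigmaN n / 100 ^ n) = sigmaN n * c ^ n := by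
    rw [abs_of_nonneg (by positivity), mul_pow]
    field_simp
  refine ⟨_, hσ ▸ hF, le_of_eq ?_⟩
  rw [mul_one, add_sub_cancel, abs_mul, abs_of_nonneg (by positivity), ← iterDeriv_top hk, mul_pow]
  ring

end SplineCert

/-! ### Numerical certificates -/

/-- The polynomial gives the bound `CriticalBound n k (S.endValue n k)` on `[α / 100, β / 100]`. -/
def PolyCert.IsBoundedBy (q : PolyCert) (S : SplineCert) (n k : ℕ) (α β : ℤ) : Prop :=
  q.IsValid n k α β ∧ k.factorial * |q.coeff k| * S.denom ≤
    10 ^ 5 * ((n + 1).descFactorial k * |truncOrdinate S.knots (n + 1 - k) 0 S.top| * 100 ^ k)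

instance (q : PolyCert) (S : SplineCert) (n k : ℕ) (α β : ℤ) :
    Decidable (q.IsBoundedBy S n k α β) := by
  unfold PolyCert.IsBoundedBy; infer_instance

theorem PolyCert.IsBoundedBy.criticalBound {q : PolyCert} {S : SplineCert} {α β : ℤ}
    (h : q.IsBoundedBy S n k α β) (hS : S.IsValid n) (hk : k + 2 ≤ n) (hα : α ≤ 0) (hβ : 0 ≤ β) :
    CriticalBound n k (S.endValue n k) (Icc (α / 100) (β / 100)) := by
  have hdenom : (0 : ℝ) < S.denom := by exact_mod_cast hS.1
  refine (h.1.criticalBound hk hα hβ).mono Subset.rfl ?_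
  rw [SplineCert.endValue, ← mul_div_assoc, div_le_div_iff₀ (by positivity) hdenom,
    mul_comm _ ((10 : ℝ) ^ 5)]
  exact_mod_cast h.2

theorem mval_le_mval_one_of_isBoundedBy {S : SplineCert} (hS : S.IsValid n) (hk₀ : k ≠ 0)
    (hk : k + 2 ≤ n) {p q : PolyCert} (hp : p.IsBoundedBy S n k (-150) 0)
    (hq : q.IsBoundedBy S n k (-100) 50) (hσ : sigmaN n ≤ σ) {x : ℝ} (hx : x ∈ Icc (-1 : ℝ) 1) :
    mval n k x σ ≤ mval n k 1 σ := by
  have hleft : CriticalBound n k (S.endValue n k) (Icc (-3 / 2) 0) :=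
    (hp.criticalBound hS hk (by norm_num) le_rfl).mono
      (Icc_subset_Icc (by norm_num) (by norm_num)) le_rfl
  have hright : CriticalBound n k (S.endValue n k) (Icc (-1) (1 / 2)) :=
    (hq.criticalBound hS hk (by norm_num) (by norm_num)).mono
      (Icc_subset_Icc (by norm_num) (by norm_num)) le_rfl
  exact mval_le_mval_one_of_criticalBound (by lia) hleft hright
    (fun c hc => hS.exists_isWChainOn (by lia) hk₀ (by linarith)) hσ hx

/-- The spline certificate for each degree. -/
def splineCert : ℕ → SplineCert
  | 5 =>
    { top := 359, denom := 10 ^ 19, shift := -98 * 10 ^ 17,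
      knots := [(389677, 0), (-59716813, 124), (98397990, 142), (-1780638934, 234),
        (1741451310, 237)] }
  | 6 =>
    { top := 243, denom := 10 ^ 20, shift := 97 * 10 ^ 18,
      knots := [(-4841483, 0), (8167723, 10), (-14744696, 64), (59052858, 115), (-47608979, 134)] }
  | 7 =>
    { top := 202, denom := 10 ^ 22, shift := 91 * 10 ^ 20,
      knots := [(-10208120, 0), (220824123, 22), (-239536112, 26), (91891228, 75),
        (-62734628, 100)] }
  | 8 =>
    { top := 217, denom := 10 ^ 25, shift := -98 * 10 ^ 23,
      knots := [(3360679, 0), (-251042161, 50), (551864074, 64), (-6489885616, 111),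
        (6181171035, 115)] }
  | 9 =>
    { top := 168, denom := 10 ^ 26, shift := 97 * 10 ^ 24,
      knots := [(-30562018, 0), (87999999, 9), (-168310479, 29), (495636350, 59),
        (-384680693, 72)] }
  | 10 =>
    { top := 167, denom := 10 ^ 28, shift := 90 * 10 ^ 26,
      knots := [(-4080962, 0), (213552564, 28), (-464352469, 37), (679195491, 59),
        (-424314624, 79)] }
  | 11 =>
    { top := 150, denom := 10 ^ 30, shift := 97 * 10 ^ 28,
      knots := [(-18858919, 0), (816502591, 20), (-1244090768, 25), (3269562473, 52),
        (-2822798645, 58)] }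
  | _ => { top := 0, denom := 0, shift := 0, knots := [] }

/-- The comparison polynomials for each pair `(n, k)`. A single polynomial has its nodes in
`[-1, 0]` and serves both windows; of two, the first is for `[-1, 1 / 2]` and the second for
`[-3 / 2, 0]`. -/
def polyCerts : ℕ → ℕ → List PolyCert
  | 5, 1 => [
    { nodes := [-100, -79, -32, 0],
      coeffs := [-100200, -1038269, 0, 6035308, 6799039, 1601600] }]
  | 5, 2 => [
    { nodes := [-100, -74, -25, 0],
      coeffs := [-100200, -1680861, -3732898, 0, 3854037, 1601600] }]
  | 5, 3 => [
    { nodes := [-100, -65, -20, 0],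
      coeffs := [-100200, -2287394, -7896350, -7410960, 0, 1600000] }]
  | 6, 1 => [
    { nodes := [-100, -88, -58, -22, 0],
      coeffs := [100200, 1564665, 0, -22150346, -45265568, -27883090, -3203000] }]
  | 6, 2 => [
    { nodes := [-100, -87, -54, -18, 0],
      coeffs := [100200, 2448177, 7990607, 0, -20995347, -18656120, -3203000] }]
  | 6, 3 => [
    { nodes := [-100, -85, -50, -15, 0],
      coeffs := [100200, 3054277, 14170808, 18327701, 0, -10414370, -3203000] }]
  | 6, 4 => [
    { nodes := [-100, -82, -46, -13, 0],
      coeffs := [100200, 3640644, 20865395, 39615818, 25594267, 0, -3203000] }]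
  | 7, 1 => [
    { nodes := [-100, -92, -71, -43, -15, 0],
      coeffs := [-100200, -2231652, 0, 67536647, 221901093, 263832584, 113843287, 6406400] }]
  | 7, 2 => [
    { nodes := [-100, -92, -70, -40, -13, 0],
      coeffs := [-100200, -3462752, -16104684, 0, 97878795, 159746677, 81116613, 6406400] }]
  | 7, 3 => [
    { nodes := [-100, -91, -68, -38, -11, 0],
      coeffs := [-100200, -4242920, -27540064, -51111004, 0, 75093809, 53886749, 6406400] }]
  | 7, 4 => [
    { nodes := [-100, -91, -66, -35, -10, 0],
      coeffs := [-100200, -4810387, -36594025, -93730721, -84577877, 0, 29237594, 6406400] }]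
  | 8, 1 => [
    { nodes := [-100, -95, -79, -57, -33, -11, 0],
      coeffs := [100200, 3034266, 0, -175146765, -842087520, -1609585777, -1397041568, -470243612,
        -12812800] }]
  | 8, 2 => [
    { nodes := [-100, -94, -78, -55, -31, -9, 0],
      coeffs := [100200, 4695936, 29773758, 0, -366972661, -953653049, -948431034, -349485624,
        -12812800] }]
  | 8, 3 => [
    { nodes := [-100, -94, -77, -54, -29, -8, 0],
      coeffs := [100200, 5726691, 50445232, 129648147, 0, -431265249, -582766173, -249243330,
        -12813000] }]
  | 8, 4 => [
    { nodes := [-100, -94, -76, -52, -27, -7, 0],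
      coeffs := [100200, 6443712, 65876094, 230924132, 295918217, 0, -275369148, -163755481,
        -12812800] }]
  | 8, 5 => [
    { nodes := [-100, -93, -75, -51, -26, -7, 0],
      coeffs := [100200, 6968320, 78157967, 315367952, 550470750, 379563794, 0, -86084150,
        -12813000] }]
  | 9, 1 => [
    { nodes := [-100, -93, -74, -47, -16, 14, 39, 50],
      coeffs := [-3694, -1038046, 0, 18288887, 8664473, -79760182, -67807559, 86141344, 108504582,
        25625600] },
    { nodes := [-150, -143, -125, -98, -67, -37, -12, 0],
      coeffs := [-100200, -2790456, 0, 140345373, 662973065, 1341108475, 1420057483, 812324948,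
        233585734, 25625600] }]
  | 9, 2 => [
    { nodes := [-100, -86, -62, -32, -1, 25, 44, 50],
      coeffs := [99270, -150754, -5781893, 0, 52087473, 35755968, -121580261, -148057386, -11550962,
        25625600] },
    { nodes := [-150, -143, -124, -96, -64, -34, -10, 0],
      coeffs := [-100200, -4362792, -25874902, 0, 303739589, 848778394, 1048164472, 666244755,
        210266716, 25625600] }]
  | 9, 3 => [
    { nodes := [-100, -93, -75, -48, -18, 12, 37, 50],
      coeffs := [-22809, -1026206, 1060940, 19005700, 0, -90676141, -52427875, 117782911, 122201809,
        25625600] },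
    { nodes := [-150, -142, -122, -93, -61, -31, -9, 0],
      coeffs := [-100200, -5406573, -45229044, -112853244, 0, 416621469, 712052393, 531081361,
        188269086, 25625600] }]
  | 9, 4 => [
    { nodes := [-100, -90, -67, -37, -5, 23, 43, 50],
      coeffs := [87813, -503197, -4891834, 6588923, 45202892, 0, -118392155, -84595167, 25209644,
        25625600] },
    { nodes := [-150, -142, -120, -90, -58, -29, -8, 0],
      coeffs := [-100200, -6191585, -61327782, -212983214, -282412397, 0, 378445482, 393649614,
        165440974, 25625600] }]
  | 9, 5 => [
    { nodes := [-100, -94, -77, -51, -21, 8, 32, 48],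
      coeffs := [-65481, -836998, 3783934, 18422330, -25444358, -113316229, 0, 206854676, 158575485,
        25625600] },
    { nodes := [-150, -140, -116, -86, -55, -27, -7, 0],
      coeffs := [-100200, -6876850, -76643795, -314194784, -581500680, -458114470, 0, 233576364,
        138241249, 25625600] }]
  | 9, 6 => [
    { nodes := [-100, -92, -72, -43, -10, 19, 41, 50],
      coeffs := [50211, -885510, -2798602, 13896647, 29862718, -43453927, -100631859, 0, 68800542,
        25625600] },
    { nodes := [-150, -136, -111, -81, -51, -24, -6, 0],
      coeffs := [-100200, -7617052, -94324675, -438328102, -968094222, -1077928513, -532967024, 0,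
        97275591, 25625600] }]
  | 10, 1 => [
    { nodes := [-96, -83, -63, -39, -13, 12, 32, 45, 50],
      coeffs := [-3870, -1268930, 0, 33507543, 20241300, -224605695, -248350866, 399485904,
        693505093, 207095400, -51250000] },
    { nodes := [-150, -145, -131, -109, -83, -56, -30, -10, 0],
      coeffs := [100200, 3467294, 0, -272952034, -1641938134, -4328275377, -6199081691, -5107577651,
        -2382731074, -569521368, -51251200] }]
  | 10, 2 => [
    { nodes := [-100, -95, -79, -56, -29, -1, 24, 43, 50],
      coeffs := [-99641, 122666, 6678859, 0, -70237808, -39064509, 221210554, 213152366, -146664850,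
        -214674810, -51251000] },
    { nodes := [-150, -145, -130, -108, -81, -53, -28, -8, 0],
      coeffs := [100200, 5401194, 39722588, 0, -736844152, -2663288258, -4406970652, -3983912080,
        -2002411945, -515796807, -51251200] }]
  | 10, 3 => [
    { nodes := [-100, -87, -67, -42, -15, 10, 31, 45, 50],
      coeffs := [-24792, -1203742, 1599483, 31203098, 0, -212028189, -157220941, 405750483,
        551327866, 120608560, -51251000] },
    { nodes := [-150, -145, -129, -106, -79, -51, -26, -7, 0],
      coeffs := [100200, 6643675, 68475535, 211888036, 0, -1259526440, -2854607518, -2989297994,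
        -1659754412, -466670624, -51251200] }]
  | 10, 4 => [
    { nodes := [-100, -95, -80, -58, -31, -3, 22, 42, 50],
      coeffs := [-94048, 403489, 6483939, -6519117, -72900018, 0, 262399982, 153403340, -256065563,
        -258814820, -51251000] },
    { nodes := [-150, -144, -128, -104, -77, -48, -24, -6, 0],
      coeffs := [100200, 7550346, 91217158, 388915384, 640876681, 0, -1426467359, -2055142308,
        -1332240473, -419001585, -51251200] }]
  | 10, 5 => [
    { nodes := [-100, -92, -73, -48, -20, 7, 30, 45, 50],
      coeffs := [-65171, -904408, 4370841, 23202654, -34029704, -168041647, 0, 375484323, 294627424,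
        -16188930, -51251000] },
    { nodes := [-150, -144, -127, -102, -74, -46, -22, -6, 0],
      coeffs := [100200, 8256847, 110686390, 549322805, 1245711720, 1226636993, 0, -1102358166,
        -992247411, -368762259, -51251200] }]
  | 10, 6 => [
    { nodes := [-100, -95, -81, -60, -34, -7, 18, 38, 50],
      coeffs := [-66871, 903010, 5083569, -19664498, -69273622, 88168936, 328695334, 0, -493121028,
        -349441470, -51251000] },
    { nodes := [-150, -143, -125, -100, -71, -44, -21, -5, 0],
      coeffs := [100200, 8952210, 130275981, 716385290, 1896110412, 2583025464, 1615994811, 0,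
        -591545251, -308577811, -51251200] }]
  | 11, 1 => [
    { nodes := [-100, -95, -82, -62, -38, -13, 12, 32, 45, 50],
      coeffs := [3688, 1292494, 0, -35378621, -20437349, 249934873, 262824553, -514618787,
        -815963393, -60882099, 316522962, 102502400] },
    { nodes := [-150, -146, -135, -117, -95, -71, -46, -25, -8, 0],
      coeffs := [-100200, -4237264, 0, 501578691, 3749956943, 12494896331, 23215909160, 25846232989,
        17434456551, 6846050341, 1386877916, 102502400] }]
  | 11, 2 => [
    { nodes := [-100, -96, -85, -68, -47, -24, -1, 20, 37, 47],
      coeffs := [99684, -150735, -9930527, 0, 157840587, 109972416, -798319307, -1018325100,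
        1005482040, 2307338882, 1146265585, 102502400] },
    { nodes := [-150, -146, -134, -116, -94, -69, -44, -23, -7, 0],
      coeffs := [-100200, -6578718, -58988099, 0, 1661302158, 7557116477, 16132583483, 19557044592,
        14055054330, 5838666965, 1258965755, 102502400] }]
  | 11, 3 => [
    { nodes := [-100, -96, -83, -63, -40, -14, 10, 31, 45, 50],
      coeffs := [20998, 1261247, -1458732, -35029065, 0, 259458677, 167430860, -613058293,
        -692226111, 162123678, 403591830, 102502400] },
    { nodes := [-150, -146, -134, -115, -92, -67, -43, -21, -6, 0],
      coeffs := [-100200, -8057219, -100845282, -380978791, 0, 3494604438, 10150984428, 14134474640,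
        11091305511, 4942550348, 1143803548, 102502400] }]
  | 11, 4 => [
    { nodes := [-97, -86, -70, -49, -26, -3, 19, 35, 46, 50],
      coeffs := [-93642, 507007, 9395827, -11917338, -156005908, 0, 861742272, 660983511,
        -1405101280, -2036842984, -594741670, 102502000] },
    { nodes := [-150, -146, -133, -114, -91, -65, -41, -20, -5, 0],
      coeffs := [-100200, -9105033, -132894721, -687986700, -1389221565, 0, 4888925612, 9276279494,
        8395357301, 4116852689, 1036513266, 102502400] }]
  | 11, 5 => [
    { nodes := [-100, -96, -84, -65, -42, -16, 8, 29, 44, 50],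
      coeffs := [48759, 1131659, -3846888, -32690610, 34547245, 264742959, 0, -758084431,
        -461881962, 535525514, 544360538, 102502400] },
    { nodes := [-150, -145, -133, -113, -89, -64, -39, -19, -5, 0],
      coeffs := [-100200, -9884583, -158879608, -949944018, -2617986381, -3176759844, 0, 4681042627,
        5806744922, 3313808069, 931004831, 102502400] }]
  | 11, 6 => [
    { nodes := [-100, -94, -78, -56, -32, -7, 16, 34, 46, 50],
      coeffs := [-60825, 1064919, 5715032, -28450388, -99911089, 158198616, 616867229, 0,
        -1218681390, -1016963800, -87477010, 102502400] },
    { nodes := [-150, -145, -132, -112, -87, -62, -38, -18, -5, 0],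
      coeffs := [-100200, -10585137, -182569127, -1195327965, -3798679501, -6297911268, -4896969549,
        0, 3130306570, 2472450487, 819138312, 102502400] }]
  | _, _ => []

theorem isValid_splineCert : ∀ n ∈ Finset.Icc 5 11, (splineCert n).IsValid n := by
  decide +kernel

theorem exists_isBoundedBy_splineCert :
    ∀ n ∈ Finset.Icc 5 11, ∀ k ∈ Finset.Icc 1 (if n ≤ 6 then n - 2 else min (n - 3) 6),
      (∃ p ∈ polyCerts n k, p.IsBoundedBy (splineCert n) n k (-150) 0) ∧
        ∃ q ∈ polyCerts n k, q.IsBoundedBy (splineCert n) n k (-100) 50 := by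
  decide +kernel

end KarlinSpline

/-- Karlin's conjecture in the spline range `σ > σ_n` for the listed
pairs `(n,k)`. -/
theorem karlin_conjecture_spline_range_small_n (n k : ℕ) (σ : ℝ)
    (hnk : ((n = 5 ∨ n = 6) ∧ 1 ≤ k ∧ k ≤ n - 2) ∨
           ((n = 7 ∨ n = 8 ∨ n = 9) ∧ 1 ≤ k ∧ k ≤ n - 3) ∨
           ((n = 10 ∨ n = 11) ∧ 1 ≤ k ∧ k ≤ 6))
    (hσ : sigmaN n < σ) :
    (∀ x ∈ Icc (-1:ℝ) 1, mval n k x σ ≤ mval n k 1 σ) ∧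
    sSup {y | ∃ x ∈ Icc (-1:ℝ) 1, y = mval n k x σ} = mval n k 1 σ := by
  have hn : n ∈ Finset.Icc 5 11 := Finset.mem_Icc.2 (by lia)
  have hk : k ∈ Finset.Icc 1 (if n ≤ 6 then n - 2 else min (n - 3) 6) := by
    rw [Finset.mem_Icc]
    split_ifs <;> lia
  obtain ⟨⟨p, -, hp⟩, q, -, hq⟩ := KarlinSpline.exists_isBoundedBy_splineCert n hn k hk
  have hmax : ∀ x ∈ Icc (-1 : ℝ) 1, mval n k x σ ≤ mval n k 1 σ := fun x hx =>
    KarlinSpline.mval_le_mval_one_of_isBoundedBy (KarlinSpline.isValid_splineCert n hn) (by lia)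
      (by lia) hp hq hσ.le hx
  have hgreatest : IsGreatest {y | ∃ x ∈ Icc (-1:ℝ) 1, y = mval n k x σ} (mval n k 1 σ) :=
    ⟨⟨1, by simp, rfl⟩, by rintro _ ⟨x, hx, rfl⟩; exact hmax x hx⟩
  exact ⟨hmax, hgreatest.csSup_eq⟩
end

section
/- For every fixed x ∈ [-1,1] and 0 ≤ k ≤ n, the function σ ↦ m_k(x,σ) is concave on [0,∞): for all σ', σ'' ≥ 0 and t ∈ [0,1], m_k(x, (1−t)σ' + tσ'') ≥ (1−t)·m_k(x,σ') + t·m_k(x,σ''). -/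
open Polynomial Set

/-! Concavity of `m_k(x, ·)` has two ingredients. First, a convex combination of functions in
`W^n_∞(σ')` and `W^n_∞(σ'')` lies in the class with the combined parameter, and by symmetry
under `f ↦ -f` every value `|f^{(k)}(x)|` is attained as `f^{(k)}(x)`; hence the convex combination
of the two sets of values is contained in the set of values of the combined class. Second, these
sets are bounded, so that passing to suprema is legitimate: iterating the mean value theorem yields
a point where `|f^{(k)}|` is small, and a bound on `f^{(k+1)}` propagates this
to a bound on `f^{(k)}` everywhere. -/

lemma abs_mul_add_mul_le {a b u v U V : ℝ} (ha : 0 ≤ a) (hb : 0 ≤ b) (hu : |u| ≤ U)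
    (hv : |v| ≤ V) : |a * u + b * v| ≤ a * U + b * V :=
  calc |a * u + b * v| ≤ |a * u| + |b * v| := abs_add_le _ _
    _ = a * |u| + b * |v| := by rw [abs_mul, abs_mul, abs_of_nonneg ha, abs_of_nonneg hb]
    _ ≤ a * U + b * V := by gcongr

open scoped Pointwise in
lemma mul_sSup_add_mul_sSup_le {a b : ℝ} {A B S : Set ℝ} (ha : 0 ≤ a) (hb : 0 ≤ b)
    (hA : A.Nonempty) (hA_bdd : BddAbove A) (hB : B.Nonempty) (hB_bdd : BddAbove B)
    (hS : BddAbove S) (hABS : a • A + b • B ⊆ S) : a * sSup A + b * sSup B ≤ sSup S :=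
  calc a * sSup A + b * sSup B = sSup (a • A) + sSup (b • B) := by
        simp only [Real.sSup_smul_of_nonneg ha, Real.sSup_smul_of_nonneg hb, smul_eq_mul]
    _ = sSup (a • A + b • B) :=
        (csSup_add hA.smul_set (hA_bdd.smul_of_nonneg ha) hB.smul_set
          (hB_bdd.smul_of_nonneg hb)).symm
    _ ≤ sSup S := csSup_le_csSup hS (hA.smul_set.add hB.smul_set) hABS

section NTimesDiffOn

variable {n k : ℕ} {f g : ℝ → ℝ} {s : Set ℝ} {x : ℝ}

lemma NTimesDiffOn.of_le (hf : NTimesDiffOn n f s) (hk : k ≤ n) : NTimesDiffOn k f s :=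
  fun i hi => hf i (hi.trans_le hk)

lemma NTimesDiffOn.iteratedDerivWithin_add (hs : UniqueDiffOn ℝ s) (hf : NTimesDiffOn n f s)
    (hg : NTimesDiffOn n g s) (hk : k ≤ n) (hx : x ∈ s) :
    iteratedDerivWithin k (f + g) s x =
      iteratedDerivWithin k f s x + iteratedDerivWithin k g s x := by
  induction k generalizing x with
  | zero => simp
  | succ k ih =>
    have ih' : EqOn (iteratedDerivWithin k (f + g) s)
        (iteratedDerivWithin k f s + iteratedDerivWithin k g s) s :=
      fun y hy => ih (Nat.le_of_succ_le hk) hy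
    simp only [iteratedDerivWithin_succ]
    rw [derivWithin_congr ih' (ih' hx)]
    exact ((hf k hk x hx).hasDerivWithinAt.add (hg k hk x hx).hasDerivWithinAt).derivWithin
      (hs x hx)

lemma NTimesDiffOn.add (hs : UniqueDiffOn ℝ s) (hf : NTimesDiffOn n f s)
    (hg : NTimesDiffOn n g s) : NTimesDiffOn n (f + g) s :=
  fun i hi => ((hf i hi).add (hg i hi)).congr
    fun _ hy => hf.iteratedDerivWithin_add hs hg hi.le hy

lemma NTimesDiffOn.const_smul (c : ℝ) (hf : NTimesDiffOn n f s) : NTimesDiffOn n (c • f) s :=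
  fun i hi => ((hf i hi).const_smul c).congr fun _ _ => iteratedDerivWithin_const_smul_field c f

lemma NTimesDiffOn.iteratedDerivWithin_linearCombination (hs : UniqueDiffOn ℝ s)
    (hf : NTimesDiffOn n f s) (hg : NTimesDiffOn n g s) (a b : ℝ) (hk : k ≤ n) (hx : x ∈ s) :
    iteratedDerivWithin k (a • f + b • g) s x =
      a * iteratedDerivWithin k f s x + b * iteratedDerivWithin k g s x := by
  rw [(hf.const_smul a).iteratedDerivWithin_add hs (hg.const_smul b) hk hx]
  simp only [iteratedDerivWithin_const_smul_field, smul_eq_mul]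

lemma NTimesDiffOn.neg (hf : NTimesDiffOn n f s) : NTimesDiffOn n (-f) s :=
  fun i hi => (hf i hi).neg.congr fun _ _ => iteratedDerivWithin_neg f

lemma nTimesDiffOn_const (n : ℕ) (c : ℝ) (s : Set ℝ) : NTimesDiffOn n (fun _ => c) s :=
  fun i _ => (differentiableOn_const (if i = 0 then c else 0)).congr
    fun _ _ => iteratedDerivWithin_const

end NTimesDiffOn

section UniformBounds

variable {s : Set ℝ} {a b : ℝ}

lemma exists_derivWithin_eq_slope {f : ℝ → ℝ} (hf : DifferentiableOn ℝ f s) (hab : a < b)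
    (hs : Icc a b ⊆ s) : ∃ c ∈ Ioo a b, derivWithin f s c = (f b - f a) / (b - a) :=
  exists_hasDerivAt_eq_slope f (derivWithin f s) hab (hf.continuousOn.mono hs) fun y hy =>
    (hf y (hs (Ioo_subset_Icc_self hy))).hasDerivWithinAt.hasDerivAt
      (Filter.mem_of_superset (Icc_mem_nhds hy.1 hy.2) hs)

lemma exists_uniform_bound_iteratedDerivWithin_at_point (k : ℕ) (M : ℝ) (hab : a < b)
    (hs : Icc a b ⊆ s) :
    ∃ C, ∀ f, NTimesDiffOn k f s → (∀ y ∈ s, |f y| ≤ M) →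
      ∃ ξ ∈ Icc a b, |iteratedDerivWithin k f s ξ| ≤ C := by
  induction k generalizing a b with
  | zero =>
    have ha : a ∈ Icc a b := left_mem_Icc.2 hab.le
    exact ⟨M, fun f _ hM => ⟨a, ha, by simpa using hM a (hs ha)⟩⟩
  | succ k ih =>
    -- The mean value theorem is applied between points of the outer thirds of `[a, b]`, which are
    -- at least `δ` apart.
    set δ := (b - a) / 3 with hδ
    have hδ_pos : 0 < δ := by linarith
    have h_left : Icc a (a + δ) ⊆ Icc a b := Icc_subset_Icc_right (by linarith)
    have h_right : Icc (b - δ) b ⊆ Icc a b := Icc_subset_Icc_left (by linarith)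
    obtain ⟨C₁, hC₁⟩ := ih (by linarith) (h_left.trans hs)
    obtain ⟨C₂, hC₂⟩ := ih (by linarith) (h_right.trans hs)
    refine ⟨(C₂ + C₁) / δ, fun f hf hM => ?_⟩
    obtain ⟨u, hu, hfu⟩ := hC₁ f (hf.of_le k.le_succ) hM
    obtain ⟨v, hv, hfv⟩ := hC₂ f (hf.of_le k.le_succ) hM
    have h_gap : δ ≤ v - u := by linarith [hu.2, hv.1]
    have huv : Icc u v ⊆ Icc a b := Icc_subset_Icc hu.1 hv.2
    obtain ⟨ξ, hξ, h_slope⟩ :=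
      exists_derivWithin_eq_slope (hf k k.lt_succ_self) (by linarith) (huv.trans hs)
    refine ⟨ξ, huv (Ioo_subset_Icc_self hξ), ?_⟩
    rw [iteratedDerivWithin_succ, h_slope, abs_div, abs_of_pos (hδ_pos.trans_le h_gap)]
    have h_num := (abs_sub _ _).trans (add_le_add hfv hfu)
    exact div_le_div₀ ((abs_nonneg _).trans h_num) h_num hδ_pos h_gap

lemma exists_uniform_bound_iteratedDerivWithin_Icc {k n : ℕ} (hk : k ≤ n) (hab : a < b)
    (M σ : ℝ) :
    ∃ C, ∀ f, NTimesDiffOn n f (Icc a b) → (∀ y ∈ Icc a b, |f y| ≤ M) →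
      (∀ y ∈ Icc a b, |iteratedDerivWithin n f (Icc a b) y| ≤ σ) →
      ∀ y ∈ Icc a b, |iteratedDerivWithin k f (Icc a b) y| ≤ C := by
  induction hk using Nat.decreasingInduction with
  | self => exact ⟨σ, fun f _ _ hσ => hσ⟩
  | of_succ k hk ih =>
    obtain ⟨D, hD⟩ := ih
    obtain ⟨C, hC⟩ := exists_uniform_bound_iteratedDerivWithin_at_point k M hab Subset.rfl
    refine ⟨C + D * (b - a), fun f hf hM hσ y hy => ?_⟩
    obtain ⟨ξ, hξ, hfξ⟩ := hC f (hf.of_le hk.le) hM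
    have hfD : ∀ z ∈ Icc a b, ‖derivWithin (iteratedDerivWithin k f (Icc a b)) (Icc a b) z‖ ≤ D :=
      fun z hz => by
        simpa only [iteratedDerivWithin_succ, Real.norm_eq_abs] using hD f hf hM hσ z hz
    have hD_nonneg : 0 ≤ D := (norm_nonneg _).trans (hfD y hy)
    calc |iteratedDerivWithin k f (Icc a b) y|
        ≤ |iteratedDerivWithin k f (Icc a b) ξ| +
          ‖iteratedDerivWithin k f (Icc a b) y - iteratedDerivWithin k f (Icc a b) ξ‖ := by
          simpa using abs_add_le (iteratedDerivWithin k f (Icc a b) ξ)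
            (iteratedDerivWithin k f (Icc a b) y - iteratedDerivWithin k f (Icc a b) ξ)
      _ ≤ C + D * ‖y - ξ‖ := add_le_add hfξ
          ((convex_Icc a b).norm_image_sub_le_of_norm_derivWithin_le (hf k hk) hfD hξ hy)
      _ ≤ C + D * (b - a) := by
          gcongr
          exact Real.dist_le_of_mem_Icc hy hξ

end UniformBounds

section ClassW

variable {n k : ℕ} {σ σ' σ'' a b x : ℝ} {f g : ℝ → ℝ}

lemma uniqueDiffOn_Icc_neg_one_one : UniqueDiffOn ℝ (Icc (-1 : ℝ) 1) :=
  uniqueDiffOn_Icc (by norm_num)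

lemma memW_zero (n : ℕ) (hσ : 0 ≤ σ) : memW n σ (fun _ => 0) :=
  ⟨nTimesDiffOn_const n 0 _, by simp, by simpa [iteratedDerivWithin_const] using fun _ _ _ => hσ⟩

lemma memW.neg (hf : memW n σ f) : memW n σ (-f) :=
  ⟨hf.1.neg, by simpa using hf.2.1, by simpa [iteratedDerivWithin_neg] using hf.2.2⟩

lemma memW.convexCombination (hf : memW n σ' f) (hg : memW n σ'' g) (ha : 0 ≤ a) (hb : 0 ≤ b)
    (hab : a + b = 1) : memW n (a * σ' + b * σ'') (a • f + b • g) := by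
  refine ⟨(hf.1.const_smul a).add uniqueDiffOn_Icc_neg_one_one (hg.1.const_smul b),
    fun y hy => ?_, fun y hy => ?_⟩
  · simpa [hab] using abs_mul_add_mul_le ha hb (hf.2.1 y hy) (hg.2.1 y hy)
  · rw [hf.1.iteratedDerivWithin_linearCombination uniqueDiffOn_Icc_neg_one_one hg.1 a b le_rfl hy]
    exact abs_mul_add_mul_le ha hb (hf.2.2 y hy) (hg.2.2 y hy)

lemma memW.exists_iteratedDerivWithin_eq_abs (hf : memW n σ f) (k : ℕ) (x : ℝ) :
    ∃ g, memW n σ g ∧ iteratedDerivWithin k g (Icc (-1 : ℝ) 1) x =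
      |iteratedDerivWithin k f (Icc (-1 : ℝ) 1) x| := by
  rcases abs_choice (iteratedDerivWithin k f (Icc (-1 : ℝ) 1) x) with h | h
  · exact ⟨f, hf, h.symm⟩
  · exact ⟨-f, hf.neg, (iteratedDerivWithin_neg f).trans h.symm⟩

/-- The set of values `|f^{(k)}(x)|`, `f ∈ W^n_∞(σ)`, whose supremum is `m_k(x,σ)`. -/
def derivValues (n k : ℕ) (x σ : ℝ) : Set ℝ :=
  {y | ∃ f : ℝ → ℝ, memW n σ f ∧ y = |iteratedDerivWithin k f (Icc (-1 : ℝ) 1) x|}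

lemma mval_eq_sSup_derivValues (n k : ℕ) (x σ : ℝ) : mval n k x σ = sSup (derivValues n k x σ) :=
  rfl

lemma derivValues_nonempty (n k : ℕ) (x : ℝ) (hσ : 0 ≤ σ) : (derivValues n k x σ).Nonempty :=
  ⟨_, _, memW_zero n hσ, rfl⟩

lemma bddAbove_derivValues (hk : k ≤ n) (hx : x ∈ Icc (-1 : ℝ) 1) (σ : ℝ) :
    BddAbove (derivValues n k x σ) := by
  obtain ⟨C, hC⟩ := exists_uniform_bound_iteratedDerivWithin_Icc hk (by norm_num : (-1 : ℝ) < 1) 1 σ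
  refine ⟨C, ?_⟩
  rintro _ ⟨f, ⟨hf_diff, hf_le, hf_deriv_le⟩, rfl⟩
  exact hC f hf_diff hf_le hf_deriv_le x hx

open scoped Pointwise in
lemma smul_derivValues_add_smul_derivValues_subset (hk : k ≤ n) (hx : x ∈ Icc (-1 : ℝ) 1)
    (ha : 0 ≤ a) (hb : 0 ≤ b) (hab : a + b = 1) :
    a • derivValues n k x σ' + b • derivValues n k x σ'' ⊆
      derivValues n k x (a * σ' + b * σ'') := by
  rintro _ ⟨_, ⟨_, ⟨f, hf, rfl⟩, rfl⟩, _, ⟨_, ⟨g, hg, rfl⟩, rfl⟩, rfl⟩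
  obtain ⟨F, hF, hFf⟩ := hf.exists_iteratedDerivWithin_eq_abs k x
  obtain ⟨G, hG, hGg⟩ := hg.exists_iteratedDerivWithin_eq_abs k x
  refine ⟨a • F + b • G, hF.convexCombination hG ha hb hab, ?_⟩
  rw [hF.1.iteratedDerivWithin_linearCombination uniqueDiffOn_Icc_neg_one_one hG.1 a b hk hx, hFf,
    hGg]
  exact (abs_of_nonneg (by positivity)).symm

end ClassW

/-- for fixed `x ∈ [-1,1]` and `0 ≤ k ≤ n`, the map `σ ↦ m_k(x,σ)`
is concave on `[0,∞)`. -/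
theorem mval_concave_in_sigma (n k : ℕ) (x : ℝ) (hk : k ≤ n) (hx : x ∈ Icc (-1:ℝ) 1)
    (σ' σ'' t : ℝ) (hσ' : 0 ≤ σ') (hσ'' : 0 ≤ σ'') (ht0 : 0 ≤ t) (ht1 : t ≤ 1) :
    (1 - t) * mval n k x σ' + t * mval n k x σ'' ≤
      mval n k x ((1 - t) * σ' + t * σ'') := by
  have ht : 0 ≤ 1 - t := sub_nonneg.2 ht1
  have hbdd := bddAbove_derivValues hk hx
  have hsub := smul_derivValues_add_smul_derivValues_subset (σ' := σ') (σ'' := σ'') hk hx ht ht0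
    (sub_add_cancel 1 t)
  simp only [mval_eq_sSup_derivValues]
  exact mul_sSup_add_mul_sSup_le ht ht0 (derivValues_nonempty n k x hσ') (hbdd σ')
    (derivValues_nonempty n k x hσ'') (hbdd σ'') (hbdd _) hsub
end
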